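/- For integers n, m ≥ 3 and k₁ = k₂ = 1: 3√3/(2^{10}·7²·√(min(n,m))) < (Vol S̃q / Vol P̃os)^{1/D_𝓜} < 2^{12}·5²·6^{1/2}·10^{2/9}/(3³·√(min(n,m)+1)), where D_𝓜 = C(n+1,2)·C(m+1,2) − 1 = (n(n+1)m(m+1) − 4)/4. In particular, (Vol S̃q / Vol P̃os)^{1/D_𝓜} = Θ(min(n,m)^{−1/2}). -/

import Mathlib

open MeasureTheory MvPolynomial

noncomputable section

namespace BiformPaper

/-- The weight function on the variables: the `x`-variables get weight `(1,0)` and the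
`y`-variables get weight `(0,1)`. -/
def bw (n m : ℕ) : Fin n ⊕ Fin m → ℕ × ℕ := Sum.elim (fun _ => (1, 0)) (fun _ => (0, 1))

/-- The set of biforms of bidegree `(k₁, k₂)`: real polynomials in
`x = (x₁, …, xₙ)` and `y = (y₁, …, y_m)`, homogeneous of degree `k₁` in `x` and of degree
`k₂` in `y`. -/
def Biform (n m k₁ k₂ : ℕ) : Set (MvPolynomial (Fin n ⊕ Fin m) ℝ) :=
  {f | MvPolynomial.IsWeightedHomogeneous (bw n m) f (k₁, k₂)}

/-- Evaluation of a polynomial at a point `(x, y) ∈ ℝⁿ × ℝᵐ`. -/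
def beval {n m : ℕ} (f : MvPolynomial (Fin n ⊕ Fin m) ℝ) (x : Fin n → ℝ) (y : Fin m → ℝ) : ℝ :=
  eval (Sum.elim x y) f

/-- The Euclidean unit sphere `S^{n-1}` in `ℝⁿ`. -/
def unitSphere (n : ℕ) : Set (Fin n → ℝ) := {x | ∑ i, x i ^ 2 = 1}

/-- `σ` is the normalized uniform measure on the unit sphere `S^{n-1} ⊆ ℝⁿ`, i.e., the
unique rotation-invariant Borel probability measure concentrated on the sphere. -/
structure IsSphereMeasure (n : ℕ) (σ : Measure (Fin n → ℝ)) : Prop where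
  prob : IsProbabilityMeasure σ
  onSphere : σ (unitSphere n)ᶜ = 0
  invariant : ∀ Q : Matrix (Fin n) (Fin n) ℝ, Q * Q.transpose = 1 → σ.map Q.mulVec = σ

/-- The average `∫_T f dσ` of `f` over `T = S^{n-1} × S^{m-1}` (with `σ` the product of the
normalized sphere measures `σ₁`, `σ₂`). -/
def bavg {n m : ℕ} (σ₁ : Measure (Fin n → ℝ)) (σ₂ : Measure (Fin m → ℝ))
    (f : MvPolynomial (Fin n ⊕ Fin m) ℝ) : ℝ :=
  ∫ x, ∫ y, beval f x y ∂σ₂ ∂σ₁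

/-- The `L²(σ)` inner product `⟨f, g⟩ = ∫_T f·g dσ` on biforms. -/
def bip {n m : ℕ} (σ₁ : Measure (Fin n → ℝ)) (σ₂ : Measure (Fin m → ℝ))
    (f g : MvPolynomial (Fin n ⊕ Fin m) ℝ) : ℝ :=
  ∫ x, ∫ y, beval f x y * beval g x y ∂σ₂ ∂σ₁

/-- The cone `Pos^{(n,m)}_{(2k₁,2k₂)}` of nonnegative biforms of bidegree `(2k₁, 2k₂)`. -/
def PosSet (n m k₁ k₂ : ℕ) : Set (MvPolynomial (Fin n ⊕ Fin m) ℝ) :=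
  {f | f ∈ Biform n m (2 * k₁) (2 * k₂) ∧ ∀ x y, 0 ≤ beval f x y}

/-- The cone `Sq^{(n,m)}_{(2k₁,2k₂)}` of finite sums of squares of biforms of bidegree
`(k₁, k₂)`. -/
def SqSet (n m k₁ k₂ : ℕ) : Set (MvPolynomial (Fin n ⊕ Fin m) ℝ) :=
  {f | ∃ (N : ℕ) (g : Fin N → MvPolynomial (Fin n ⊕ Fin m) ℝ),
      (∀ i, g i ∈ Biform n m k₁ k₂) ∧ f = ∑ i, g i ^ 2}

/-- The cone `Lf^{(n,m)}_{(2k₁,2k₂)}` of finite sums of products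
`ℓᵢ(x)^{2k₁} · ℓ′ᵢ(y)^{2k₂}` of even powers of linear forms. -/
def LfSet (n m k₁ k₂ : ℕ) : Set (MvPolynomial (Fin n ⊕ Fin m) ℝ) :=
  {f | ∃ (N : ℕ) (a : Fin N → Fin n → ℝ) (b : Fin N → Fin m → ℝ),
      f = ∑ r, (∑ i, C (a r i) * X (Sum.inl i)) ^ (2 * k₁) *
               (∑ j, C (b r j) * X (Sum.inr j)) ^ (2 * k₂)}

/-- The biform `q = (x₁² + ⋯ + xₙ²)^{k₁} · (y₁² + ⋯ + y_m²)^{k₂}`. -/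
def qpoly (n m k₁ k₂ : ℕ) : MvPolynomial (Fin n ⊕ Fin m) ℝ :=
  (∑ i : Fin n, X (Sum.inl i) ^ 2) ^ k₁ * (∑ j : Fin m, X (Sum.inr j) ^ 2) ^ k₂

/-- The hyperplane `𝓜` of biforms of bidegree `(2k₁, 2k₂)` with average `0` on `T`. -/
def MSet (n m k₁ k₂ : ℕ) (σ₁ : Measure (Fin n → ℝ)) (σ₂ : Measure (Fin m → ℝ)) :
    Set (MvPolynomial (Fin n ⊕ Fin m) ℝ) :=
  {f | f ∈ Biform n m (2 * k₁) (2 * k₂) ∧ bavg σ₁ σ₂ f = 0}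

/-- The translated section `K̃ = {f ∈ 𝓜 : f + q ∈ K}` of a cone `K`. -/
def tilde (n m k₁ k₂ : ℕ) (σ₁ : Measure (Fin n → ℝ)) (σ₂ : Measure (Fin m → ℝ))
    (K : Set (MvPolynomial (Fin n ⊕ Fin m) ℝ)) : Set (MvPolynomial (Fin n ⊕ Fin m) ℝ) :=
  {f | f ∈ MSet n m k₁ k₂ σ₁ σ₂ ∧ f + qpoly n m k₁ k₂ ∈ K}

/-- The unit ball `B_𝓜` of `𝓜` in the `L²(σ)` norm. -/
def bball (n m k₁ k₂ : ℕ) (σ₁ : Measure (Fin n → ℝ)) (σ₂ : Measure (Fin m → ℝ)) :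
    Set (MvPolynomial (Fin n ⊕ Fin m) ℝ) :=
  {f | f ∈ MSet n m k₁ k₂ σ₁ σ₂ ∧ bip σ₁ σ₂ f f ≤ 1}

/-- `ψ : ℝ^D → Mset` is a unitary isomorphism: an injective linear map with range `Mset`
carrying the standard inner product of `ℝ^D` to the `L²(σ)` inner product.  Volumes of
Borel subsets `E` of `Mset` are computed as the Lebesgue measure of `ψ ⁻¹' E`
(by Lemma 1.1 of the paper this does not depend on the choice of `ψ`). -/
structure IsUnitaryParam (n m D : ℕ) (σ₁ : Measure (Fin n → ℝ)) (σ₂ : Measure (Fin m → ℝ))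
    (Mset : Set (MvPolynomial (Fin n ⊕ Fin m) ℝ))
    (ψ : (Fin D → ℝ) →ₗ[ℝ] MvPolynomial (Fin n ⊕ Fin m) ℝ) : Prop where
  inj : Function.Injective ψ
  range : Set.range ψ = Mset
  ip : ∀ a b : Fin D → ℝ, bip σ₁ σ₂ (ψ a) (ψ b) = ∑ i, a i * b i

/-- The apolar inner product `⟨r, s⟩_d = D_r(s)` on biforms, where `D_r` is the
differential operator obtained from `r` by replacing each variable by the corresponding
partial derivative; its value on a pair of forms of the same bidegree is
`∑_α r_α · s_α · α!`. -/
def apolar {n m : ℕ} (r s : MvPolynomial (Fin n ⊕ Fin m) ℝ) : ℝ :=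
  ∑ α ∈ r.support, coeff α r * coeff α s * α.prod fun _ k => (k.factorial : ℝ)

end BiformPaper

/-!
Both sections are slices at height one of cones in the space of biform coefficients.
Integrating `exp (-trace)` over such a cone slice by slice gives the volume of its section times
a Gamma integral that is the same for both cones, so `Vol S̃q / Vol P̃os` is the ratio of two
exponential integrals. Here the trace is the sum of the values on pairs of basis vectors; it is
proportional to the average over the spheres because the coordinates of a uniform point of the
sphere have the second moments of a uniform basis vector. Since a `D`-th root is taken, each
integral is needed only up to a factor `C ^ D`.

Lower bounds. A biform with a large maximum has a large exponential average over a product of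
balls, so a Gaussian random biform is at most `|x|²|y|²` in absolute value with probability at
least one half. This bounds the volume of the unit body of biforms from below, and translating
that body by `|x|²|y|²` puts it inside `Pos`. Likewise, restricting quadratic forms on the space
of `n × m` matrices to rank one matrices maps their translated unit body into `Sq`.

Upper bound for `Pos`. Moving the coefficient of `xᵢxⱼ` to the value at `x = eᵢ + eⱼ` is a shear
that maps `Pos` into a product of cones of positive semidefinite matrices in `y`.

Upper bound for `Sq`. Restriction to rank one matrices maps the cone of positive semidefinite
forms onto `Sq`. Its fibre over the restriction of a sufficiently positive definite form contains
a dilate of a unit body of quadratic forms, and the exponential integral of the semidefinite cone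
is bounded by adding one variable at a time and completing the square.
-/

namespace BiformVolume

open scoped ENNReal

section QuadraticForms

variable {ι : Type*}

/-- The degree two Veronese vector of `u`, with one monomial `u i * u j` for each unordered pair
`s(i, j)`. A quadratic form is encoded by the vector `a : Sym2 ι → ℝ` of its monomial coefficients,
so that its value at `u` is `a ⬝ᵥ veronese u`. -/
def veronese (u : ι → ℝ) (p : Sym2 ι) : ℝ := (p.map u).mul

@[simp] lemma veronese_mk (u : ι → ℝ) (i j : ι) : veronese u s(i, j) = u i * u j := rfl

lemma veronese_smul (t : ℝ) (u : ι → ℝ) : veronese (t • u) = t ^ 2 • veronese u := by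
  ext ⟨i, j⟩
  simp only [veronese_mk, Pi.smul_apply, smul_eq_mul]
  ring

lemma sum_units_veronese (u v : ι → ℝ) :
    ∑ ε : ℤˣ, veronese (u + ε • v) = (2 : ℝ) • (veronese u + veronese v) := by
  ext ⟨i, j⟩
  simp only [UnitsInt.univ, Finset.sum_pair (show (1 : ℤˣ) ≠ -1 by decide), one_smul,
    Units.neg_smul, veronese_mk, Pi.smul_apply, Pi.add_apply, Pi.neg_apply, smul_eq_mul]
  ring

lemma continuous_veronese : Continuous (veronese : (ι → ℝ) → Sym2 ι → ℝ) := by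
  refine continuous_pi fun p => ?_
  induction p with
  | _ i j => simp only [veronese_mk]; fun_prop

lemma veronese_single [DecidableEq ι] (i : ι) :
    veronese (Pi.single i (1 : ℝ)) = Pi.single s(i, i) 1 := by
  ext ⟨j, k⟩
  by_cases hj : j = i <;> by_cases hk : k = i <;> simp [hj, hk]

variable [DecidableEq ι]

/-- The number of ordered pairs representing an unordered pair. -/
def orderings (p : Sym2 ι) : ℝ := if p.IsDiag then 1 else 2

lemma one_le_orderings (p : Sym2 ι) : 1 ≤ orderings p := by
  unfold orderings
  split_ifs <;> norm_num

@[simp] lemma orderings_diag (i : ι) : orderings s(i, i) = 1 := by simp [orderings]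

variable [Fintype ι]

lemma card_filter_mk_eq (p : Sym2 ι) :
    ((Finset.univ.filter fun x : ι × ι => s(x.1, x.2) = p).card : ℝ) = orderings p := by
  induction p with
  | _ i j =>
    rcases eq_or_ne i j with rfl | h
    · have hdiag : (Finset.univ.filter fun x : ι × ι => s(x.1, x.2) = s(i, i)) = {(i, i)} := by
        ext ⟨a, b⟩
        simp
      rw [hdiag]
      simp
    · have hoff : (Finset.univ.filter fun x : ι × ι => s(x.1, x.2) = s(i, j)) =
          {(i, j), (j, i)} := by
        ext ⟨a, b⟩
        simp
      rw [hoff, Finset.card_pair (by simp [h])]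
      simp [orderings, h]

lemma sum_sum_mk_eq_sum_orderings_mul (g : Sym2 ι → ℝ) :
    ∑ i, ∑ j, g s(i, j) = ∑ p, orderings p * g p := by
  rw [← Fintype.sum_prod_type' (f := fun i j => g s(i, j)),
    ← Finset.sum_fiberwise (s := Finset.univ) (g := fun x : ι × ι => s(x.1, x.2))]
  refine Finset.sum_congr rfl fun p _ => ?_
  rw [Finset.sum_congr rfl (g := fun _ => g p) fun x hx => by rw [(Finset.mem_filter.1 hx).2],
    Finset.sum_const, nsmul_eq_mul, card_filter_mk_eq]

/-- The coefficients of the square of the linear form `w`. -/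
def linSq (w : ι → ℝ) (p : Sym2 ι) : ℝ := orderings p * veronese w p

lemma linSq_dotProduct_veronese (w u : ι → ℝ) : linSq w ⬝ᵥ veronese u = (w ⬝ᵥ u) ^ 2 := by
  simp only [dotProduct, linSq, mul_assoc]
  rw [← sum_sum_mk_eq_sum_orderings_mul (fun p => veronese w p * veronese u p), sq,
    Finset.sum_mul_sum]
  simp only [veronese_mk]
  exact Finset.sum_congr rfl fun i _ => Finset.sum_congr rfl fun j _ => by ring

end QuadraticForms

section VeroneseNorm

variable {ι : Type*} [Fintype ι]

lemma sum_le_sum_sum_mk {g : Sym2 ι → ℝ} (hg : ∀ p, 0 ≤ g p) :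
    ∑ p, g p ≤ ∑ i, ∑ j, g s(i, j) := by
  classical
  rw [sum_sum_mk_eq_sum_orderings_mul]
  exact Finset.sum_le_sum fun p _ => le_mul_of_one_le_left (hg p) (one_le_orderings p)

lemma veronese_dotProduct_self_le (u : ι → ℝ) : veronese u ⬝ᵥ veronese u ≤ (u ⬝ᵥ u) ^ 2 := by
  refine (sum_le_sum_sum_mk fun p => mul_self_nonneg _).trans_eq ?_
  rw [sq, dotProduct, Finset.sum_mul_sum]
  simp only [veronese_mk]
  exact Finset.sum_congr rfl fun i _ => Finset.sum_congr rfl fun j _ => by ring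

end VeroneseNorm

section PsdCone

variable (ι : Type*) [Fintype ι]

/-- The trace of a quadratic form, a linear functional of its coefficients. -/
def quadTrace : (Sym2 ι → ℝ) →ₗ[ℝ] ℝ := ∑ i, LinearMap.proj s(i, i)

/-- The cone of positive semidefinite quadratic forms. -/
def psdCone : Set (Sym2 ι → ℝ) := {a | ∀ u, 0 ≤ a ⬝ᵥ veronese u}

variable {ι}

lemma quadTrace_apply (a : Sym2 ι → ℝ) : quadTrace ι a = ∑ i, a s(i, i) := by
  simp [quadTrace]

lemma dotProduct_veronese_single [DecidableEq ι] (a : Sym2 ι → ℝ) (i : ι) :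
    a ⬝ᵥ veronese (Pi.single i 1) = a s(i, i) := by
  rw [veronese_single, dotProduct_single_one]

lemma quadTrace_linSq [DecidableEq ι] (w : ι → ℝ) : quadTrace ι (linSq w) = w ⬝ᵥ w := by
  simp [quadTrace_apply, linSq, dotProduct]

lemma linSq_mem_psdCone [DecidableEq ι] (w : ι → ℝ) : linSq w ∈ psdCone ι := fun u => by
  rw [linSq_dotProduct_veronese]
  positivity

lemma quadTrace_nonneg {a : Sym2 ι → ℝ} (ha : a ∈ psdCone ι) : 0 ≤ quadTrace ι a := by
  classical
  rw [quadTrace_apply]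
  exact Finset.sum_nonneg fun i _ => dotProduct_veronese_single a i ▸ ha _

lemma isClosed_psdCone : IsClosed (psdCone ι) := by
  simp only [psdCone, Set.ofPred_forall]
  exact isClosed_iInter fun u => isClosed_le continuous_const (by fun_prop)

lemma add_mem_psdCone {a b : Sym2 ι → ℝ} (ha : a ∈ psdCone ι) (hb : b ∈ psdCone ι) :
    a + b ∈ psdCone ι := fun u => by
  rw [add_dotProduct]
  exact add_nonneg (ha u) (hb u)

lemma smul_mem_psdCone {t : ℝ} (ht : 0 ≤ t) {a : Sym2 ι → ℝ} (ha : a ∈ psdCone ι) :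
    t • a ∈ psdCone ι := fun u => by
  rw [smul_dotProduct]
  exact smul_nonneg ht (ha u)

end PsdCone

section ProductIntegrals

open Measure

lemma lintegral_fin_prod_eq_prod {n : ℕ} {E : Fin n → Type*} [∀ i, MeasurableSpace (E i)]
    (μ : ∀ i, Measure (E i)) [∀ i, SigmaFinite (μ i)] {f : ∀ i, E i → ℝ≥0∞}
    (hf : ∀ i, Measurable (f i)) :
    ∫⁻ x, ∏ i, f i (x i) ∂Measure.pi μ = ∏ i, ∫⁻ x, f i x ∂μ i := by
  induction n with
  | zero => simp
  | succ n ih =>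
    have hm : Measurable fun y : ∀ i : Fin n, E i.succ => ∏ i, f i.succ (y i) :=
      Finset.measurable_prod _ fun i _ => (hf _).comp (measurable_pi_apply i)
    rw [← ((measurePreserving_piFinSuccAbove μ 0).symm _).lintegral_comp_emb
      (MeasurableEquiv.measurableEmbedding _), Fin.prod_univ_succ, ← ih _ fun i => hf i.succ,
      ← lintegral_prod_mul (hf 0).aemeasurable hm.aemeasurable]
    exact lintegral_congr fun p => Fin.prod_univ_succ _

lemma lintegral_fintype_prod_eq_prod {S : Type*} [Fintype S] {E : S → Type*}
    [∀ s, MeasurableSpace (E s)] (μ : ∀ s, Measure (E s)) [∀ s, SigmaFinite (μ s)]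
    {f : ∀ s, E s → ℝ≥0∞} (hf : ∀ s, Measurable (f s)) :
    ∫⁻ x, ∏ s, f s (x s) ∂Measure.pi μ = ∏ s, ∫⁻ x, f s x ∂μ s := by
  let e := (Fintype.equivFin S).symm
  rw [← (measurePreserving_piCongrLeft μ e).lintegral_comp_emb
    (MeasurableEquiv.measurableEmbedding _)]
  simp_rw [← e.prod_comp, MeasurableEquiv.coe_piCongrLeft, Equiv.piCongrLeft_apply_apply]
  exact lintegral_fin_prod_eq_prod _ fun i => hf _

end ProductIntegrals

section ProductCoordinates

variable {S T R : Type*}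

/-- The identification of `ℝ^S × ℝ^T` with `ℝ^R` given by a splitting of the index set `R` into
copies of `S` and `T`. -/
def prodPiEquiv (e : S ⊕ T ≃ R) : (S → ℝ) × (T → ℝ) ≃ᵐ (R → ℝ) :=
  (MeasurableEquiv.sumPiEquivProdPi fun _ => ℝ).symm.trans
    (MeasurableEquiv.arrowCongr' e (MeasurableEquiv.refl ℝ))

@[simp] lemma prodPiEquiv_inl (e : S ⊕ T ≃ R) (p : (S → ℝ) × (T → ℝ)) (s : S) :
    prodPiEquiv e p (e (Sum.inl s)) = p.1 s := by
  simp [prodPiEquiv, MeasurableEquiv.arrowCongr', Equiv.arrowCongr',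
    MeasurableEquiv.sumPiEquivProdPi]

@[simp] lemma prodPiEquiv_inr (e : S ⊕ T ≃ R) (p : (S → ℝ) × (T → ℝ)) (t : T) :
    prodPiEquiv e p (e (Sum.inr t)) = p.2 t := by
  simp [prodPiEquiv, MeasurableEquiv.arrowCongr', Equiv.arrowCongr',
    MeasurableEquiv.sumPiEquivProdPi]

variable [Fintype S] [Fintype T] [Fintype R]

lemma prodPiEquiv_dotProduct (e : S ⊕ T ≃ R) (p : (S → ℝ) × (T → ℝ)) (v : R → ℝ) :
    prodPiEquiv e p ⬝ᵥ v =
      (p.1 ⬝ᵥ fun s => v (e (Sum.inl s))) + p.2 ⬝ᵥ fun t => v (e (Sum.inr t)) := by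
  simp [dotProduct, ← e.sum_comp, Fintype.sum_sum_type]

lemma measurePreserving_prodPiEquiv (e : S ⊕ T ≃ R) : MeasurePreserving (prodPiEquiv e) :=
  (volume_preserving_arrowCongr' e (MeasurableEquiv.refl ℝ) (MeasurePreserving.id _)).comp
    (volume_measurePreserving_sumPiEquivProdPi_symm fun _ => ℝ)

lemma measurePreserving_curry : MeasurePreserving (MeasurableEquiv.curry S T ℝ) := by
  refine MeasurePreserving.symm (MeasurableEquiv.curry S T ℝ).symm
    ⟨MeasurableEquiv.measurable _, (Measure.pi_eq fun s _ => ?_).symm⟩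
  have hbox : (MeasurableEquiv.curry S T ℝ).symm ⁻¹' Set.univ.pi s =
      Set.univ.pi fun a => Set.univ.pi fun b => s (a, b) := by
    ext x
    simp [Set.mem_pi, MeasurableEquiv.coe_curry_symm]
  rw [MeasurableEquiv.map_apply, hbox, volume_pi_pi]
  simp_rw [volume_pi_pi]
  rw [Fintype.prod_prod_type]

end ProductCoordinates

instance isAddHaarMeasure_volume_prod {E F : Type*} [NormedAddCommGroup E] [NormedSpace ℝ E]
    [FiniteDimensional ℝ E] [MeasureSpace E] [BorelSpace E] [(volume : Measure E).IsAddHaarMeasure]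
    [NormedAddCommGroup F] [NormedSpace ℝ F] [FiniteDimensional ℝ F] [MeasureSpace F] [BorelSpace F]
    [(volume : Measure F).IsAddHaarMeasure] : (volume : Measure (E × F)).IsAddHaarMeasure :=
  Measure.prod.instIsAddHaarMeasure volume volume

lemma measurePreserving_id_add_of_isNilpotent {E : Type*} [NormedAddCommGroup E] [NormedSpace ℝ E]
    [FiniteDimensional ℝ E] [MeasurableSpace E] [BorelSpace E] (μ : Measure E)
    [μ.IsAddHaarMeasure] {N : Module.End ℝ E} (hN : IsNilpotent N) :
    MeasurePreserving (fun x => x + N x) μ μ := by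
  have hdet : LinearMap.det (1 + N) = 1 := by
    have h := LinearMap.eval_charpoly (-N) (1 : ℝ)
    rw [IsNilpotent.charpoly_eq_X_pow_finrank hN.neg] at h
    simpa [sub_neg_eq_add] using h.symm
  refine ⟨(LinearMap.continuous_of_finiteDimensional (1 + N)).measurable, ?_⟩
  have hmap := Measure.map_linearMap_addHaar_eq_smul_addHaar μ (f := 1 + N) (by simp [hdet])
  rwa [hdet, inv_one, abs_one, ENNReal.ofReal_one, one_smul] at hmap

section ExponentialIntegral

variable {E F : Type*} [MeasureSpace E] [MeasureSpace F]

/-- The integral of `exp (-ℓ)` over `K`. For a convex cone `K` and a linear functional `ℓ` it is a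
constant, depending only on the dimension, times the volume of a slice of `K` by a level set
of `ℓ`. -/
def expIntegral (K : Set E) (ℓ : E → ℝ) : ℝ≥0∞ := ∫⁻ a in K, ENNReal.ofReal (Real.exp (-ℓ a))

lemma expIntegral_preimage (e : E ≃ᵐ F) (he : MeasurePreserving e) (K : Set F) (ℓ : F → ℝ) :
    expIntegral (e ⁻¹' K) (ℓ ∘ e) = expIntegral K ℓ :=
  he.setLIntegral_comp_preimage_emb e.measurableEmbedding
    (fun b => ENNReal.ofReal (Real.exp (-ℓ b))) K

lemma expIntegral_pi {S : Type*} [Fintype S] [SigmaFinite (volume : Measure E)] (K : Set E)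
    {ℓ : E → ℝ} (hℓ : Measurable ℓ) :
    expIntegral (Set.univ.pi fun _ : S => K) (fun a => ∑ s, ℓ (a s)) =
      expIntegral K ℓ ^ Fintype.card S := by
  simp only [expIntegral, volume_pi, Measure.restrict_pi_pi, ← Finset.sum_neg_distrib,
    Real.exp_sum, ENNReal.ofReal_prod_of_nonneg fun _ _ => (Real.exp_pos _).le]
  rw [lintegral_fintype_prod_eq_prod (fun _ => volume.restrict K)
    (f := fun _ a => ENNReal.ofReal (Real.exp (-ℓ a))) fun _ => by fun_prop,
    Finset.prod_const, Finset.card_univ]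

end ExponentialIntegral

section Bordering

/-- The equivalence of unordered pairs induced by an equivalence. -/
def sym2Congr {α β : Type*} (e : α ≃ β) : Sym2 α ≃ Sym2 β where
  toFun := Sym2.map e
  invFun := Sym2.map e.symm
  left_inv p := by simp [Sym2.map_map]
  right_inv p := by simp [Sym2.map_map]

@[simp] lemma sym2Congr_mk {α β : Type*} (e : α ≃ β) (i j : α) :
    sym2Congr e s(i, j) = s(e i, e j) := rfl

lemma expIntegral_psdCone_congr {α β : Type*} [Fintype α] [Fintype β] (e : α ≃ β) :
    expIntegral (psdCone α) (quadTrace α) = expIntegral (psdCone β) (quadTrace β) := by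
  let E := MeasurableEquiv.arrowCongr' (sym2Congr e) (MeasurableEquiv.refl ℝ)
  have hE (a : Sym2 α → ℝ) (p : Sym2 α) : E a (sym2Congr e p) = a p := by
    simp [E, MeasurableEquiv.arrowCongr', Equiv.arrowCongr']
  have hval (a : Sym2 α → ℝ) (u : β → ℝ) : E a ⬝ᵥ veronese u = a ⬝ᵥ veronese (u ∘ e) := by
    rw [dotProduct, ← (sym2Congr e).sum_comp]
    refine Finset.sum_congr rfl fun p _ => ?_
    rw [hE]
    induction p with
    | _ i j => simp
  have hcone : E ⁻¹' psdCone β = psdCone α := by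
    ext a
    simp only [psdCone, Set.mem_preimage, Set.mem_ofPred_eq, hval]
    exact ⟨fun h u => by simpa [Function.comp_assoc] using h (u ∘ e.symm), fun h u => h _⟩
  have htrace : quadTrace β ∘ E = quadTrace α := by
    ext a
    simp only [Function.comp_apply, quadTrace_apply, ← e.sum_comp, ← sym2Congr_mk, hE]
  rw [← hcone, ← htrace]
  exact expIntegral_preimage E
    (volume_preserving_arrowCongr' _ _ (MeasurePreserving.id _)) _ _

variable {α : Type*}

/-- The unordered pairs of elements of `Option α`, sorted by their number of entries `none`. -/
def sym2OptionEquiv (α : Type*) : Unit ⊕ (α ⊕ Sym2 α) ≃ Sym2 (Option α) :=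
  Equiv.ofBijective
    (Sum.elim (fun _ => s(none, none)) (Sum.elim (fun i => s(none, some i)) (Sym2.map some))) <| by
    constructor
    · rintro (x | x | x) (y | y | y) h
      · rfl
      · simp at h
      · induction y with | _ i j => simp at h
      · simp at h
      · simpa using h
      · induction y with | _ i j => simp at h
      · induction x with | _ i j => simp at h
      · induction x with | _ i j => simp at h
      · exact congrArg (Sum.inr ∘ Sum.inr) (Sym2.map.injective (Option.some_injective α) h)
    · intro p
      induction p with
      | _ i j =>
        rcases i with _ | i <;> rcases j with _ | j
        · exact ⟨Sum.inl (), rfl⟩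
        · exact ⟨Sum.inr (Sum.inl j), rfl⟩
        · exact ⟨Sum.inr (Sum.inl i), Sym2.eq_swap⟩
        · exact ⟨Sum.inr (Sum.inr s(i, j)), rfl⟩

lemma sym2OptionEquiv_inl (x : Unit) : sym2OptionEquiv α (Sum.inl x) = s(none, none) := rfl

lemma sym2OptionEquiv_inr_inl (i : α) :
    sym2OptionEquiv α (Sum.inr (Sum.inl i)) = s(none, some i) := rfl

lemma sym2OptionEquiv_inr_inr (p : Sym2 α) :
    sym2OptionEquiv α (Sum.inr (Sum.inr p)) = p.map some := rfl

/-- The quadratic form `t * s ^ 2 + s * (b ⬝ᵥ u) + a u` in the variables `(s, u)`, indexed by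
`Option α`, as a function of the triple `(t, b, a)`. -/
def borderedForm (α : Type*) : ℝ × (α → ℝ) × (Sym2 α → ℝ) ≃ᵐ (Sym2 (Option α) → ℝ) :=
  ((MeasurableEquiv.funUnique Unit ℝ).symm.prodCongr
    (prodPiEquiv (Equiv.refl _))).trans (prodPiEquiv (sym2OptionEquiv α))

lemma borderedForm_none_none (t : ℝ) (b : α → ℝ) (a : Sym2 α → ℝ) :
    borderedForm α (t, b, a) s(none, none) = t := by
  rw [← sym2OptionEquiv_inl ()]
  exact prodPiEquiv_inl _ _ _

lemma borderedForm_map_some (t : ℝ) (b : α → ℝ) (a : Sym2 α → ℝ) (p : Sym2 α) :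
    borderedForm α (t, b, a) (p.map some) = a p := by
  rw [← sym2OptionEquiv_inr_inr]
  exact (prodPiEquiv_inr _ _ _).trans (prodPiEquiv_inr (Equiv.refl _) _ _)

variable [Fintype α]

lemma measurePreserving_borderedForm : MeasurePreserving (borderedForm α) :=
  (measurePreserving_prodPiEquiv _).comp
    ((volume_preserving_funUnique Unit ℝ).symm.prod (measurePreserving_prodPiEquiv _))

lemma borderedForm_dotProduct_veronese (t : ℝ) (b : α → ℝ) (a : Sym2 α → ℝ) (s : ℝ) (u : α → ℝ) :
    borderedForm α (t, b, a) ⬝ᵥ veronese (fun o => o.elim s u) =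
      t * s ^ 2 + s * (b ⬝ᵥ u) + a ⬝ᵥ veronese u := by
  have hpairs : (fun p : Sym2 α => veronese (fun o => o.elim s u) (p.map some)) = veronese u := by
    ext ⟨i, j⟩
    rfl
  have hcross : (fun i : α => veronese (fun o => o.elim s u) s(none, some i)) = s • u := rfl
  have hborder : ∀ v : α ⊕ Sym2 α → ℝ, prodPiEquiv (Equiv.refl _) (b, a) ⬝ᵥ v =
      (b ⬝ᵥ fun i => v (Sum.inl i)) + a ⬝ᵥ fun p => v (Sum.inr p) :=
    prodPiEquiv_dotProduct (Equiv.refl _) (b, a)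
  have hsplit := prodPiEquiv_dotProduct (sym2OptionEquiv α)
    ((MeasurableEquiv.funUnique Unit ℝ).symm t, prodPiEquiv (Equiv.refl _) (b, a))
    (veronese fun o => o.elim s u)
  simp only [hborder, sym2OptionEquiv_inl, sym2OptionEquiv_inr_inl, sym2OptionEquiv_inr_inr,
    hpairs, hcross, dotProduct_smul, smul_eq_mul] at hsplit
  refine hsplit.trans ?_
  simp [dotProduct, sq, add_assoc]

lemma quadTrace_borderedForm (t : ℝ) (b : α → ℝ) (a : Sym2 α → ℝ) :
    quadTrace (Option α) (borderedForm α (t, b, a)) = t + quadTrace α a := by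
  simp only [quadTrace_apply, Fintype.sum_option, borderedForm_none_none]
  congr 1
  exact Finset.sum_congr rfl fun i _ => borderedForm_map_some t b a s(i, i)

lemma nonneg_of_borderedForm_mem_psdCone {t : ℝ} {b : α → ℝ} {a : Sym2 α → ℝ}
    (h : borderedForm α (t, b, a) ∈ psdCone (Option α)) : 0 ≤ t := by
  classical
  have hnone := h (Pi.single none 1)
  rwa [dotProduct_veronese_single, borderedForm_none_none] at hnone

/-- Completing the square in the variable `none`. -/
lemma borderedForm_mem_psdCone_iff [DecidableEq α] {t : ℝ} (ht : 0 < t) {b : α → ℝ}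
    {a : Sym2 α → ℝ} : borderedForm α (t, b, a) ∈ psdCone (Option α) ↔
      a - linSq ((2 * √t)⁻¹ • b) ∈ psdCone α := by
  have hsq (s : ℝ) (u : α → ℝ) : borderedForm α (t, b, a) ⬝ᵥ veronese (fun o => o.elim s u) =
      t * (s + b ⬝ᵥ u / (2 * t)) ^ 2 + (a - linSq ((2 * √t)⁻¹ • b)) ⬝ᵥ veronese u := by
    rw [borderedForm_dotProduct_veronese, sub_dotProduct, linSq_dotProduct_veronese,
      smul_dotProduct, smul_eq_mul, mul_pow, inv_pow, mul_pow, Real.sq_sqrt ht.le]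
    field_simp
    ring
  refine ⟨fun h u => ?_, fun h v => ?_⟩
  · have hu := h fun o => o.elim (-(b ⬝ᵥ u / (2 * t))) u
    simpa [hsq] using hu
  · have hv : v = fun o => o.elim (v none) fun i => v (some i) := by
      ext (_ | _) <;> rfl
    rw [hv, hsq]
    exact add_nonneg (mul_nonneg ht.le (sq_nonneg _)) (h _)

end Bordering

section PsdIntegral

variable {α : Type*} [Fintype α]

lemma lintegral_exp_neg_mul_dotProduct_self {c : ℝ} (hc : 0 < c) :
    ∫⁻ b : α → ℝ, ENNReal.ofReal (Real.exp (-(c * (b ⬝ᵥ b)))) =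
      ENNReal.ofReal (√(Real.pi / c) ^ Fintype.card α) := by
  have hfactor (b : α → ℝ) : ENNReal.ofReal (Real.exp (-(c * (b ⬝ᵥ b)))) =
      ∏ i, ENNReal.ofReal (Real.exp (-c * b i ^ 2)) := by
    rw [← ENNReal.ofReal_prod_of_nonneg fun i _ => (Real.exp_pos _).le, ← Real.exp_sum,
      ← Finset.mul_sum, neg_mul]
    simp only [dotProduct, sq]
  simp_rw [hfactor]
  rw [volume_pi, lintegral_fintype_prod_eq_prod (fun _ => volume)
      (f := fun _ t => ENNReal.ofReal (Real.exp (-c * t ^ 2))) fun _ => by fun_prop,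
    ← ofReal_integral_eq_lintegral_ofReal (integrable_exp_neg_mul_sq hc)
      (ae_of_all _ fun x => (Real.exp_pos _).le), integral_gaussian]
  simp [ENNReal.ofReal_pow]

variable (α) in
/-- The function `exp (-trace)` on the cone of positive semidefinite forms, extended by zero. -/
def psdDensity : (Sym2 α → ℝ) → ℝ≥0∞ :=
  (psdCone α).indicator fun a => ENNReal.ofReal (Real.exp (-quadTrace α a))

lemma measurable_psdDensity : Measurable (psdDensity α) :=
  (LinearMap.continuous_of_finiteDimensional _).measurable.neg.exp.ennreal_ofReal.indicator
    isClosed_psdCone.measurableSet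

lemma lintegral_psdDensity :
    ∫⁻ a, psdDensity α a = expIntegral (psdCone α) (quadTrace α) :=
  lintegral_indicator isClosed_psdCone.measurableSet _

lemma psdDensity_borderedForm_of_neg {t : ℝ} (ht : t < 0) (b : α → ℝ) (a : Sym2 α → ℝ) :
    psdDensity (Option α) (borderedForm α (t, b, a)) = 0 :=
  Set.indicator_of_notMem (fun h => (nonneg_of_borderedForm_mem_psdCone h).not_gt ht) _

lemma lintegral_psdDensity_borderedForm {t : ℝ} (ht : 0 < t) (b : α → ℝ) :
    ∫⁻ a, psdDensity (Option α) (borderedForm α (t, b, a)) =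
      ENNReal.ofReal (Real.exp (-t)) * (ENNReal.ofReal (Real.exp (-((4 * t)⁻¹ * (b ⬝ᵥ b)))) *
        expIntegral (psdCone α) (quadTrace α)) := by
  classical
  set q := linSq ((2 * √t)⁻¹ • b)
  have hq : quadTrace α q = (4 * t)⁻¹ * (b ⬝ᵥ b) := by
    rw [quadTrace_linSq, smul_dotProduct, dotProduct_smul, smul_eq_mul, smul_eq_mul, ← mul_assoc,
      ← mul_inv, mul_mul_mul_comm, Real.mul_self_sqrt ht.le]
    norm_num
  rw [← lintegral_psdDensity, ← lintegral_sub_right_eq_self (psdDensity α) q, ← mul_assoc,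
    ← lintegral_const_mul' _ _ (by finiteness)]
  refine lintegral_congr fun a => ?_
  by_cases h : borderedForm α (t, b, a) ∈ psdCone (Option α)
  · rw [psdDensity, psdDensity, Set.indicator_of_mem h,
      Set.indicator_of_mem ((borderedForm_mem_psdCone_iff ht).1 h),
      ← ENNReal.ofReal_mul (by positivity), ← ENNReal.ofReal_mul (by positivity),
      ← Real.exp_add, ← Real.exp_add, quadTrace_borderedForm, map_sub, hq]
    ring_nf
  · rw [psdDensity, psdDensity, Set.indicator_of_notMem h,
      Set.indicator_of_notMem (mt (borderedForm_mem_psdCone_iff ht).2 h), mul_zero]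

lemma expIntegral_psdCone_option_eq_lintegral :
    expIntegral (psdCone (Option α)) (quadTrace (Option α)) =
      ∫⁻ t, ∫⁻ b, ∫⁻ a, psdDensity (Option α) (borderedForm α (t, b, a)) := by
  have hm : Measurable fun p => psdDensity (Option α) (borderedForm α p) :=
    measurable_psdDensity.comp (borderedForm α).measurable
  rw [← lintegral_psdDensity, ← measurePreserving_borderedForm.lintegral_comp_emb
    (borderedForm α).measurableEmbedding, Measure.volume_eq_prod, lintegral_prod _ hm.aemeasurable]
  exact lintegral_congr fun t => lintegral_prod _ (hm.comp measurable_prodMk_left).aemeasurable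

lemma expIntegral_psdCone_option : expIntegral (psdCone (Option α)) (quadTrace (Option α)) =
    (∫⁻ t in Set.Ioi 0, ENNReal.ofReal (Real.exp (-t) * √(4 * Real.pi * t) ^ Fintype.card α)) *
      expIntegral (psdCone α) (quadTrace α) := by
  rw [expIntegral_psdCone_option_eq_lintegral, ← lintegral_mul_const _ (by fun_prop),
    ← lintegral_indicator measurableSet_Ioi]
  refine lintegral_congr_ae ?_
  filter_upwards [Measure.ae_ne volume (0 : ℝ)] with t ht0
  rcases ht0.lt_or_gt with ht | ht
  · simp [psdDensity_borderedForm_of_neg ht, ht.le]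
  · simp only [lintegral_psdDensity_borderedForm ht]
    rw [lintegral_const_mul _ (by fun_prop), lintegral_mul_const _ (by fun_prop),
      lintegral_exp_neg_mul_dotProduct_self (by positivity), ← mul_assoc,
      ← ENNReal.ofReal_mul (Real.exp_pos _).le, Set.indicator_of_mem (Set.mem_Ioi.2 ht)]
    congr 5
    field_simp

/-- The growth rate in the bound for the exponential integral of the cone of positive
semidefinite forms in at most `N` variables, `√(4πN/e)`. -/
def psdRate (N : ℝ) : ℝ := √(4 * Real.pi * N / Real.exp 1)

lemma psdRate_nonneg (N : ℝ) : 0 ≤ psdRate N := Real.sqrt_nonneg _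

lemma exp_mul_sqrt_pow_le {N : ℝ} (hN : 0 < N) {k : ℕ} (hk : (k : ℝ) ≤ N) {t : ℝ} (ht : 0 < t) :
    Real.exp (-t) * √(4 * Real.pi * t) ^ k ≤ psdRate N ^ k * Real.exp (-(1 / 2) * t) := by
  have hdecay : Real.exp (-(1 / 2) * t) ≤ Real.exp (-(t / (2 * N))) ^ k := by
    rw [← Real.exp_nat_mul, Real.exp_le_exp]
    have : (k : ℝ) * (t / (2 * N)) ≤ N * (t / (2 * N)) := by gcongr
    have : N * (t / (2 * N)) = t / 2 := by field_simp
    linarith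
  have hfactor : Real.exp (-(t / (2 * N))) * √(4 * Real.pi * t) ≤ psdRate N := by
    refine Real.le_sqrt_of_sq_le ?_
    have htan : t / N ≤ Real.exp (t / N) / Real.exp 1 := by
      rw [← Real.exp_sub]
      linarith [Real.add_one_le_exp (t / N - 1)]
    rw [mul_pow, Real.sq_sqrt (by positivity), ← Real.exp_nat_mul,
      show ((2 : ℕ) : ℝ) * -(t / (2 * N)) = -(t / N) by push_cast; field_simp, Real.exp_neg]
    calc (Real.exp (t / N))⁻¹ * (4 * Real.pi * t)
        = (Real.exp (t / N))⁻¹ * (4 * Real.pi * N) * (t / N) := by field_simp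
      _ ≤ (Real.exp (t / N))⁻¹ * (4 * Real.pi * N) * (Real.exp (t / N) / Real.exp 1) := by
          gcongr
      _ = 4 * Real.pi * N / Real.exp 1 := by field_simp
  calc Real.exp (-t) * √(4 * Real.pi * t) ^ k
      = Real.exp (-(1 / 2) * t) * √(4 * Real.pi * t) ^ k * Real.exp (-(1 / 2) * t) := by
        rw [mul_right_comm (Real.exp _), ← Real.exp_add]
        congr 2
        ring
    _ ≤ Real.exp (-(t / (2 * N))) ^ k * √(4 * Real.pi * t) ^ k * Real.exp (-(1 / 2) * t) := by
        gcongr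
    _ = (Real.exp (-(t / (2 * N))) * √(4 * Real.pi * t)) ^ k * Real.exp (-(1 / 2) * t) := by
        rw [mul_pow]
    _ ≤ psdRate N ^ k * Real.exp (-(1 / 2) * t) := by gcongr

lemma lintegral_exp_mul_sqrt_pow_le {N : ℝ} (hN : 0 < N) {k : ℕ} (hk : (k : ℝ) ≤ N) :
    ∫⁻ t in Set.Ioi 0, ENNReal.ofReal (Real.exp (-t) * √(4 * Real.pi * t) ^ k) ≤
      ENNReal.ofReal (2 * psdRate N ^ k) := by
  have hint : IntegrableOn (fun t => psdRate N ^ k * Real.exp (-(1 / 2) * t)) (Set.Ioi 0) :=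
    (integrableOn_exp_mul_Ioi (by norm_num) 0).const_mul _
  refine (setLIntegral_mono' measurableSet_Ioi fun t ht =>
    ENNReal.ofReal_le_ofReal (exp_mul_sqrt_pow_le hN hk (Set.mem_Ioi.1 ht))).trans_eq ?_
  rw [← ofReal_integral_eq_lintegral_ofReal hint (ae_of_all _ fun t =>
      mul_nonneg (pow_nonneg (psdRate_nonneg _) _) (Real.exp_pos _).le),
    integral_const_mul, integral_exp_mul_Ioi (by norm_num)]
  norm_num [mul_comm]

lemma expIntegral_psdCone_fin_le {N : ℝ} (hN : 0 < N) {k : ℕ} (hk : (k : ℝ) ≤ N) :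
    expIntegral (psdCone (Fin k)) (quadTrace (Fin k)) ≤
      ENNReal.ofReal (2 ^ k * psdRate N ^ k.choose 2) := by
  induction k with
  | zero =>
    rw [expIntegral, volume_pi, Measure.pi_of_empty]
    refine (setLIntegral_le_lintegral _ _).trans ?_
    simp [quadTrace_apply]
  | succ k ih =>
    have hk' : (k : ℝ) ≤ N := by
      push_cast at hk
      linarith
    rw [expIntegral_psdCone_congr (finSuccEquiv k), expIntegral_psdCone_option, Fintype.card_fin]
    refine (mul_le_mul' (lintegral_exp_mul_sqrt_pow_le hN hk') (ih hk')).trans_eq ?_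
    have := psdRate_nonneg N
    rw [← ENNReal.ofReal_mul (by positivity), Nat.choose_succ_succ' k 1, Nat.choose_one_right]
    ring_nf

lemma expIntegral_psdCone_le {N : ℝ} (hN : 0 < N) (hk : (Fintype.card α : ℝ) ≤ N) :
    expIntegral (psdCone α) (quadTrace α) ≤
      ENNReal.ofReal (2 ^ Fintype.card α * psdRate N ^ (Fintype.card α).choose 2) := by
  rw [expIntegral_psdCone_congr (Fintype.equivFin α)]
  exact expIntegral_psdCone_fin_le hN hk

end PsdIntegral

section EuclideanBall

variable {ι : Type*} [Fintype ι]

variable (ι) in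
/-- The closed Euclidean ball of radius `r` around the origin of `ι → ℝ`, whose default norm is the
supremum norm. -/
def euclideanBall (r : ℝ) : Set (ι → ℝ) := {u | u ⬝ᵥ u ≤ r ^ 2}

lemma dotProduct_self_nonneg (u : ι → ℝ) : 0 ≤ u ⬝ᵥ u :=
  Finset.sum_nonneg fun _ _ => mul_self_nonneg _

lemma dotProduct_self_pos {u : ι → ℝ} (hu : u ≠ 0) : 0 < u ⬝ᵥ u :=
  (dotProduct_self_nonneg u).lt_of_ne' (dotProduct_self_eq_zero.not.2 hu)

lemma measurableSet_euclideanBall (r : ℝ) : MeasurableSet (euclideanBall ι r) :=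
  (isClosed_le (by fun_prop) continuous_const).measurableSet

open scoped Pointwise in
lemma euclideanBall_eq_smul {r : ℝ} (hr : 0 < r) :
    euclideanBall ι r = r • euclideanBall ι 1 := by
  ext u
  rw [Set.mem_smul_set_iff_inv_smul_mem₀ hr.ne']
  simp only [euclideanBall, Set.mem_ofPred_eq, smul_dotProduct, dotProduct_smul, smul_eq_mul]
  field_simp

lemma volume_euclideanBall {r : ℝ} (hr : 0 < r) :
    volume (euclideanBall ι r) =
      ENNReal.ofReal (r ^ Fintype.card ι) * volume (euclideanBall ι 1) := by
  rw [euclideanBall_eq_smul hr, Measure.addHaar_smul, Module.finrank_fintype_fun_eq_card,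
    abs_of_nonneg (by positivity)]

lemma euclideanBall_one_subset_Icc : euclideanBall ι 1 ⊆ Set.Icc (-1) 1 := by
  intro u hu
  have abs_apply_le (i : ι) : |u i| ≤ 1 := by
    have hi : u i * u i ≤ u ⬝ᵥ u :=
      Finset.single_le_sum (f := fun i => u i * u i) (fun _ _ => mul_self_nonneg _)
        (Finset.mem_univ i)
    exact abs_le_one_iff_mul_self_le_one.2 (hi.trans (hu.trans_eq (one_pow 2)))
  exact ⟨fun i => (abs_le.1 (abs_apply_le i)).1, fun i => (abs_le.1 (abs_apply_le i)).2⟩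

lemma volume_euclideanBall_one_ne_top : volume (euclideanBall ι 1) ≠ ⊤ :=
  ((measure_mono euclideanBall_one_subset_Icc).trans_lt isCompact_Icc.measure_lt_top).ne

lemma volume_euclideanBall_one_ne_zero : volume (euclideanBall ι 1) ≠ 0 := by
  have hopen : IsOpen {u : ι → ℝ | u ⬝ᵥ u < 1} := isOpen_lt (by fun_prop) continuous_const
  have hsub : {u : ι → ℝ | u ⬝ᵥ u < 1} ⊆ euclideanBall ι 1 :=
    fun _ hu => (Set.mem_ofPred_eq.mp hu).le.trans_eq (one_pow 2).symm
  exact ((hopen.measure_pos volume ⟨0, by simp⟩).trans_le (measure_mono hsub)).ne'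

lemma isCompact_setOf_dotProduct_self_eq_one : IsCompact {u : ι → ℝ | u ⬝ᵥ u = 1} :=
  isCompact_Icc.of_isClosed_subset (isClosed_eq (by fun_prop) continuous_const)
    (Set.Subset.trans (fun _ hu => hu.le.trans_eq (one_pow 2).symm)
      euclideanBall_one_subset_Icc)

lemma four_smul_add_mem_euclideanBall {x v : ι → ℝ} (hx : x ⬝ᵥ x = 1)
    (hv : v ∈ euclideanBall ι 1) : (4 : ℝ) • x + v ∈ euclideanBall ι 5 := by
  have cauchy : 0 ≤ (x - v) ⬝ᵥ (x - v) := dotProduct_self_nonneg _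
  have hv' : v ⬝ᵥ v ≤ 1 ^ 2 := hv
  change _ ≤ (5 : ℝ) ^ 2
  simp only [sub_dotProduct, dotProduct_sub, add_dotProduct, dotProduct_add, smul_dotProduct,
    dotProduct_smul, smul_eq_mul, dotProduct_comm v x] at cauchy ⊢
  linarith

lemma units_smul_mem_euclideanBall_iff {ε : ℤˣ} {r : ℝ} {v : ι → ℝ} :
    ε • v ∈ euclideanBall ι r ↔ v ∈ euclideanBall ι r := by
  rcases Int.units_eq_one_or ε with rfl | rfl <;> simp [euclideanBall]

lemma exists_smul_eq_of_ne_zero {x : ι → ℝ} (hx : x ≠ 0) :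
    ∃ u, u ⬝ᵥ u = 1 ∧ √(x ⬝ᵥ x) • u = x := by
  have hpos : 0 < √(x ⬝ᵥ x) := Real.sqrt_pos.2 (dotProduct_self_pos hx)
  refine ⟨(√(x ⬝ᵥ x))⁻¹ • x, ?_, smul_inv_smul₀ hpos.ne' x⟩
  rw [smul_dotProduct, dotProduct_smul, smul_smul, smul_eq_mul, ← mul_inv,
    Real.mul_self_sqrt (dotProduct_self_nonneg x),
    inv_mul_cancel₀ (dotProduct_self_pos hx).ne']

end EuclideanBall

section Biveronese

variable {ι κ : Type*}

/-- The vector of monomials `x i * x j * (y k * y l)` spanning the biforms of bidegree `(2, 2)`.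
Such a biform is encoded by the vector `b : Sym2 ι × Sym2 κ → ℝ` of its coefficients, so that its
value at `(x, y)` is `b ⬝ᵥ biveronese x y`. -/
def biveronese (x : ι → ℝ) (y : κ → ℝ) (p : Sym2 ι × Sym2 κ) : ℝ :=
  veronese x p.1 * veronese y p.2

lemma continuous_biveronese :
    Continuous fun p : (ι → ℝ) × (κ → ℝ) => biveronese p.1 p.2 :=
  continuous_pi fun q =>
    ((continuous_apply q.1).comp (continuous_veronese.comp continuous_fst)).mul
      ((continuous_apply q.2).comp (continuous_veronese.comp continuous_snd))

lemma biveronese_smul_smul (s t : ℝ) (x : ι → ℝ) (y : κ → ℝ) :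
    biveronese (s • x) (t • y) = (s ^ 2 * t ^ 2) • biveronese x y := by
  ext p
  simp only [biveronese, veronese_smul, Pi.smul_apply, smul_eq_mul]
  ring

lemma biveronese_eq_zero {x : ι → ℝ} {y : κ → ℝ} (h : x = 0 ∨ y = 0) : biveronese x y = 0 := by
  rcases h with rfl | rfl
  · simpa using biveronese_smul_smul 0 1 0 y
  · simpa using biveronese_smul_smul 1 0 x 0

lemma sum_units_biveronese (x v : ι → ℝ) (y w : κ → ℝ) :
    ∑ ε : ℤˣ × ℤˣ, biveronese (x + ε.1 • v) (y + ε.2 • w) =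
      (4 : ℝ) • (biveronese x y + biveronese x w + biveronese v y + biveronese v w) := by
  ext p
  have hx := congrFun (sum_units_veronese x v) p.1
  have hy := congrFun (sum_units_veronese y w) p.2
  simp only [Finset.sum_apply, Pi.smul_apply, Pi.add_apply, smul_eq_mul] at hx hy ⊢
  simp only [biveronese, Fintype.sum_prod_type]
  rw [← Finset.sum_mul_sum, hx, hy]
  ring

variable [Fintype ι] [Fintype κ]

lemma biveronese_dotProduct_self_le (x : ι → ℝ) (y : κ → ℝ) :
    biveronese x y ⬝ᵥ biveronese x y ≤ (x ⬝ᵥ x) ^ 2 * (y ⬝ᵥ y) ^ 2 := by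
  calc biveronese x y ⬝ᵥ biveronese x y
      = (veronese x ⬝ᵥ veronese x) * (veronese y ⬝ᵥ veronese y) := by
        simp only [dotProduct, biveronese, Fintype.sum_prod_type, Finset.sum_mul_sum]
        exact Finset.sum_congr rfl fun p _ => Finset.sum_congr rfl fun q _ => by ring
    _ ≤ (x ⬝ᵥ x) ^ 2 * (y ⬝ᵥ y) ^ 2 :=
        mul_le_mul (veronese_dotProduct_self_le x) (veronese_dotProduct_self_le y)
          (dotProduct_self_nonneg _) (sq_nonneg _)

lemma exists_abs_map_biveronese_eq (L : (Sym2 ι × Sym2 κ → ℝ) →ₗ[ℝ] ℝ) {x : ι → ℝ} {y : κ → ℝ}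
    (h : ¬ (x = 0 ∨ y = 0)) : ∃ u v, u ⬝ᵥ u = 1 ∧ v ⬝ᵥ v = 1 ∧
      |L (biveronese x y)| = |L (biveronese u v)| * ((x ⬝ᵥ x) * (y ⬝ᵥ y)) := by
  obtain ⟨u, hu, hux⟩ := exists_smul_eq_of_ne_zero (not_or.1 h).1
  obtain ⟨v, hv, hvy⟩ := exists_smul_eq_of_ne_zero (not_or.1 h).2
  refine ⟨u, v, hu, hv, ?_⟩
  conv_lhs => rw [← hux, ← hvy, biveronese_smul_smul, map_smul, smul_eq_mul,
    Real.sq_sqrt (dotProduct_self_nonneg x), Real.sq_sqrt (dotProduct_self_nonneg y), abs_mul,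
    abs_of_nonneg (mul_nonneg (dotProduct_self_nonneg x) (dotProduct_self_nonneg y)), mul_comm]

variable {L : (Sym2 ι × Sym2 κ → ℝ) →ₗ[ℝ] ℝ}

lemma exists_isMax_of_exists_lt (hL : ∃ x y, (x ⬝ᵥ x) * (y ⬝ᵥ y) < |L (biveronese x y)|) :
    ∃ x y, x ⬝ᵥ x = 1 ∧ y ⬝ᵥ y = 1 ∧ 1 < |L (biveronese x y)| ∧
      ∀ v w, |L (biveronese v w)| ≤ |L (biveronese x y)| * ((v ⬝ᵥ v) * (w ⬝ᵥ w)) := by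
  have hnonneg (v : ι → ℝ) (w : κ → ℝ) : 0 ≤ (v ⬝ᵥ v) * (w ⬝ᵥ w) :=
    mul_nonneg (dotProduct_self_nonneg v) (dotProduct_self_nonneg w)
  obtain ⟨x₀, y₀, h₀⟩ := hL
  have hne : ¬ (x₀ = 0 ∨ y₀ = 0) := fun h => by
    rw [biveronese_eq_zero h, map_zero, abs_zero] at h₀
    exact h₀.not_ge (hnonneg _ _)
  obtain ⟨x₁, y₁, hx₁, hy₁, h₁⟩ := exists_abs_map_biveronese_eq L hne
  have hcont : Continuous fun p : (ι → ℝ) × (κ → ℝ) => |L (biveronese p.1 p.2)| :=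
    ((LinearMap.continuous_of_finiteDimensional L).comp continuous_biveronese).abs
  obtain ⟨⟨x, y⟩, ⟨hx, hy⟩, hmax⟩ := (isCompact_setOf_dotProduct_self_eq_one.prod
    isCompact_setOf_dotProduct_self_eq_one).exists_isMaxOn ⟨(x₁, y₁), hx₁, hy₁⟩ hcont.continuousOn
  refine ⟨x, y, hx, hy, lt_of_lt_of_le ?_ (hmax (Set.mk_mem_prod hx₁ hy₁)), fun v w => ?_⟩
  · rw [h₁] at h₀
    exact (lt_mul_iff_one_lt_left (mul_pos (dotProduct_self_pos (not_or.1 hne).1)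
      (dotProduct_self_pos (not_or.1 hne).2))).1 h₀
  · by_cases h : v = 0 ∨ w = 0
    · rw [biveronese_eq_zero h, map_zero, abs_zero]
      exact mul_nonneg (abs_nonneg _) (hnonneg v w)
    · obtain ⟨v', w', hv', hw', hvw⟩ := exists_abs_map_biveronese_eq L h
      rw [hvw]
      exact mul_le_mul_of_nonneg_right (hmax (Set.mk_mem_prod hv' hw')) (hnonneg v w)

/-- The constant is `4 ^ 4 - 2 * 4 ^ 2 - 1`: at the maximum the value is multiplied by `4 ^ 4`, and
the error terms are controlled by maximality. -/
lemma le_abs_sum_units_biveronese {x : ι → ℝ} {y : κ → ℝ} (hx : x ⬝ᵥ x = 1) (hy : y ⬝ᵥ y = 1)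
    (hL : 1 < |L (biveronese x y)|)
    (hmax : ∀ v w, |L (biveronese v w)| ≤ |L (biveronese x y)| * ((v ⬝ᵥ v) * (w ⬝ᵥ w)))
    {v : ι → ℝ} {w : κ → ℝ} (hv : v ∈ euclideanBall ι 1) (hw : w ∈ euclideanBall κ 1) :
    4 * 223 ≤
      |∑ ε : ℤˣ × ℤˣ, L (biveronese ((4 : ℝ) • x + ε.1 • v) ((4 : ℝ) • y + ε.2 • w))| := by
  set t := |L (biveronese x y)|
  have hv' : v ⬝ᵥ v ≤ 1 := hv.trans_eq (one_pow 2)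
  have hw' : w ⬝ᵥ w ≤ 1 := hw.trans_eq (one_pow 2)
  have bound {a : ι → ℝ} {b : κ → ℝ} (ha : a ⬝ᵥ a ≤ 1) (hb : b ⬝ᵥ b ≤ 1) :
      |L (biveronese a b)| ≤ t :=
    (hmax a b).trans (mul_le_of_le_one_right (abs_nonneg _)
      (mul_le_one₀ ha (dotProduct_self_nonneg b) hb))
  have hsum : ∑ ε : ℤˣ × ℤˣ, L (biveronese ((4 : ℝ) • x + ε.1 • v) ((4 : ℝ) • y + ε.2 • w)) =
      4 * (256 * L (biveronese x y) + 16 * L (biveronese x w) + 16 * L (biveronese v y) +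
        L (biveronese v w)) := by
    have hxw := biveronese_smul_smul 4 1 x w
    have hvy := biveronese_smul_smul 1 4 v y
    rw [one_smul] at hxw hvy
    rw [← map_sum, sum_units_biveronese, biveronese_smul_smul, hxw, hvy]
    simp only [map_add, map_smul, smul_eq_mul]
    ring
  rw [hsum, abs_mul, abs_of_pos (four_pos (α := ℝ))]
  have hxw := abs_le.1 (bound hx.le hw')
  have hvy := abs_le.1 (bound hv' hy.le)
  have hvw := abs_le.1 (bound hv' hw')
  rcases abs_choice (L (biveronese x y)) with h | h
  · have := le_abs_self (256 * L (biveronese x y) + 16 * L (biveronese x w) +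
      16 * L (biveronese v y) + L (biveronese v w))
    linarith
  · have := neg_abs_le (256 * L (biveronese x y) + 16 * L (biveronese x w) +
      16 * L (biveronese v y) + L (biveronese v w))
    linarith

end Biveronese

section Biball

variable (ι κ : Type*) [Fintype ι] [Fintype κ]

/-- The product of the Euclidean balls of radius `r` in `ι → ℝ` and `κ → ℝ`, the domain over which
biforms are averaged in order to bound their maximum. -/
def biball (r : ℝ) : Set ((ι → ℝ) × (κ → ℝ)) := euclideanBall ι r ×ˢ euclideanBall κ r

lemma measurableSet_biball (r : ℝ) : MeasurableSet (biball ι κ r) :=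
  (measurableSet_euclideanBall r).prod (measurableSet_euclideanBall r)

lemma volume_biball {r : ℝ} (hr : 0 < r) :
    volume (biball ι κ r) =
      ENNReal.ofReal (r ^ (Fintype.card ι + Fintype.card κ)) * volume (biball ι κ 1) := by
  simp only [biball, Measure.volume_eq_prod, Measure.prod_prod]
  rw [volume_euclideanBall hr, volume_euclideanBall (ι := κ) hr, pow_add,
    ENNReal.ofReal_mul (by positivity)]
  ring

lemma volume_biball_one_ne_top : volume (biball ι κ 1) ≠ ⊤ := by
  simp only [biball, Measure.volume_eq_prod, Measure.prod_prod]
  exact ENNReal.mul_ne_top volume_euclideanBall_one_ne_top volume_euclideanBall_one_ne_top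

lemma volume_biball_one_ne_zero : volume (biball ι κ 1) ≠ 0 := by
  simp only [biball, Measure.volume_eq_prod, Measure.prod_prod]
  exact mul_ne_zero volume_euclideanBall_one_ne_zero volume_euclideanBall_one_ne_zero

variable {ι κ}

lemma measurePreserving_units_smul (ε : ℤˣ) :
    MeasurePreserving fun v : ι → ℝ => ε • v := by
  rcases Int.units_eq_one_or ε with rfl | rfl
  · simp only [one_smul]
    exact MeasurePreserving.id _
  · simpa using Measure.measurePreserving_neg (volume : Measure (ι → ℝ))

end Biball

section MaximumViaAverage

lemma mul_measure_le_setLIntegral_of_forall_le_sum {E I : Type*} [MeasurableSpace E] [Fintype I]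
    [Nonempty I] {μ : Measure E} {σ : I → E → E} {B : Set E} {f : E → ℝ≥0∞} {c : ℝ≥0∞}
    (hσ : ∀ i, MeasurePreserving (σ i) μ μ) (hσB : ∀ i, σ i ⁻¹' B = B) (hB : MeasurableSet B)
    (hf : Measurable f) (h : ∀ p ∈ B, Fintype.card I * c ≤ ∑ i, f (σ i p)) :
    c * μ B ≤ ∫⁻ p in B, f p ∂μ := by
  have hcard : (Fintype.card I : ℝ≥0∞) ≠ 0 := by simp
  refine (ENNReal.mul_le_mul_iff_right hcard (by simp)).1 ?_
  calc Fintype.card I * (c * μ B)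
      = ∫⁻ _ in B, Fintype.card I * c ∂μ := by rw [setLIntegral_const, mul_assoc]
    _ ≤ ∫⁻ p in B, ∑ i, f (σ i p) ∂μ := setLIntegral_mono' hB h
    _ = ∑ i, ∫⁻ p in B, f (σ i p) ∂μ :=
        lintegral_finsetSum _ fun i _ => hf.comp (hσ i).measurable
    _ = ∑ _i : I, ∫⁻ p in B, f p ∂μ := by
        refine Finset.sum_congr rfl fun i _ => ?_
        conv_lhs => rw [← hσB i]
        exact (hσ i).setLIntegral_comp_preimage hB hf
    _ = Fintype.card I * ∫⁻ p in B, f p ∂μ := by simp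

lemma convexOn_cosh : ConvexOn ℝ Set.univ Real.cosh := by
  refine ((convexOn_exp.add (convexOn_exp.comp_linearMap (-LinearMap.id))).smul
    (one_half_pos (α := ℝ)).le).congr fun x _ => ?_
  simp only [Real.cosh_eq, Pi.add_apply, Function.comp_apply, LinearMap.neg_apply,
    LinearMap.id_apply, smul_eq_mul]
  ring

lemma card_mul_cosh_le_sum_cosh {I : Type*} [Fintype I] [Nonempty I] {z : I → ℝ} {m : ℝ}
    (hm : 0 ≤ m) (h : Fintype.card I * m ≤ |∑ i, z i|) :
    Fintype.card I * Real.cosh m ≤ ∑ i, Real.cosh (z i) := by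
  have hcard : (0 : ℝ) < Fintype.card I := by exact_mod_cast Fintype.card_pos
  have jensen := convexOn_cosh.map_sum_le (t := Finset.univ) (w := fun _ : I =>
    (Fintype.card I : ℝ)⁻¹) (p := z) (fun _ _ => by positivity) (by simp [hcard.ne'])
    fun _ _ => Set.mem_univ _
  simp only [smul_eq_mul, ← Finset.mul_sum] at jensen
  rw [← le_inv_mul_iff₀ hcard]
  refine (Real.cosh_le_cosh.2 ?_).trans jensen
  rw [abs_of_nonneg hm, abs_mul, abs_of_pos (inv_pos.2 hcard), le_inv_mul_iff₀ hcard]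
  exact h

variable {ι κ : Type*} [Fintype ι] [Fintype κ] {L : (Sym2 ι × Sym2 κ → ℝ) →ₗ[ℝ] ℝ}

lemma cosh_mul_volume_biball_le_setLIntegral
    (hL : ∃ x y, (x ⬝ᵥ x) * (y ⬝ᵥ y) < |L (biveronese x y)|) {l : ℝ} (hl : 0 ≤ l) :
    ENNReal.ofReal (Real.cosh (223 * l)) * volume (biball ι κ 1) ≤
      ∫⁻ p in biball ι κ 5, ENNReal.ofReal (Real.cosh (l * L (biveronese p.1 p.2))) := by
  have : (volume : Measure ((ι → ℝ) × (κ → ℝ))).IsAddLeftInvariant :=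
    inferInstanceAs (Measure.prod volume volume).IsAddLeftInvariant
  obtain ⟨x, y, hx, hy, ht, hmax⟩ := exists_isMax_of_exists_lt hL
  set f : (ι → ℝ) × (κ → ℝ) → ℝ≥0∞ := fun p =>
    ENNReal.ofReal (Real.cosh (l * L (biveronese p.1 p.2)))
  have hf : Measurable f := (ENNReal.continuous_ofReal.comp (Real.continuous_cosh.comp
    (((LinearMap.continuous_of_finiteDimensional L).comp continuous_biveronese).const_mul
      l))).measurable
  set z : (ι → ℝ) × (κ → ℝ) := ((4 : ℝ) • x, (4 : ℝ) • y)
  have translate : MeasurePreserving (z + ·) := measurePreserving_add_left volume z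
  calc ENNReal.ofReal (Real.cosh (223 * l)) * volume (biball ι κ 1)
      ≤ ∫⁻ p in biball ι κ 1, f (z + p) := by
        refine mul_measure_le_setLIntegral_of_forall_le_sum
          (σ := fun ε : ℤˣ × ℤˣ => Prod.map (ε.1 • ·) (ε.2 • ·))
          (fun ε => (measurePreserving_units_smul ε.1).prod (measurePreserving_units_smul ε.2))
          (fun ε => Set.ext fun p => and_congr units_smul_mem_euclideanBall_iff
            units_smul_mem_euclideanBall_iff) (measurableSet_biball ι κ 1)
          (hf.comp translate.measurable) fun p hp => ?_
        rw [← ENNReal.ofReal_natCast, ← ENNReal.ofReal_mul (Nat.cast_nonneg _),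
          ← ENNReal.ofReal_sum_of_nonneg fun _ _ => (Real.cosh_pos _).le]
        refine ENNReal.ofReal_le_ofReal (card_mul_cosh_le_sum_cosh (by positivity) ?_)
        rw [← Finset.mul_sum, abs_mul, abs_of_nonneg hl]
        have := mul_le_mul_of_nonneg_left
          (le_abs_sum_units_biveronese hx hy ht hmax hp.1 hp.2) hl
        refine le_trans (le_of_eq ?_) this
        rw [Fintype.card_prod, Fintype.card_units_int]
        push_cast
        ring
    _ ≤ ∫⁻ p in (z + ·) ⁻¹' biball ι κ 5, f (z + p) :=
        lintegral_mono_set fun p hp => ⟨four_smul_add_mem_euclideanBall hx hp.1,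
          four_smul_add_mem_euclideanBall hy hp.2⟩
    _ = ∫⁻ p in biball ι κ 5, f p :=
        translate.setLIntegral_comp_preimage (measurableSet_biball ι κ 5) hf

end MaximumViaAverage

section Gaussian

variable (S : Type*) [Fintype S]

/-- The unnormalized centered Gaussian measure on `S → ℝ` with density `exp (-(a * |c| ^ 2))`. Since
the density is at most one, the measure bounds the volume from below. -/
def gaussianWeight (a : ℝ) : Measure (S → ℝ) :=
  volume.withDensity fun c => ENNReal.ofReal (Real.exp (-(a * (c ⬝ᵥ c))))

variable {S} {a : ℝ}

lemma gaussianWeight_le_volume (ha : 0 ≤ a) : gaussianWeight S a ≤ volume := by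
  refine (withDensity_mono (ae_of_all _ fun c => ?_)).trans_eq withDensity_one
  refine ENNReal.ofReal_le_one.2 (Real.exp_le_one_iff.2 (neg_nonpos.2 ?_))
  exact mul_nonneg ha (dotProduct_self_nonneg c)

lemma gaussianWeight_univ (ha : 0 < a) :
    gaussianWeight S a Set.univ = ENNReal.ofReal (√(Real.pi / a) ^ Fintype.card S) := by
  rw [gaussianWeight, withDensity_apply _ MeasurableSet.univ, Measure.restrict_univ,
    lintegral_exp_neg_mul_dotProduct_self ha]

lemma lintegral_gaussianWeight (a : ℝ) {f : (S → ℝ) → ℝ≥0∞} (hf : Measurable f) :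
    ∫⁻ c, f c ∂gaussianWeight S a =
      ∫⁻ c, ENNReal.ofReal (Real.exp (-(a * (c ⬝ᵥ c)))) * f c :=
  lintegral_withDensity_eq_lintegral_mul _ (by fun_prop) hf

lemma lintegral_exp_dotProduct_gaussianWeight (ha : 0 < a) (z : S → ℝ) :
    ∫⁻ c, ENNReal.ofReal (Real.exp (c ⬝ᵥ z)) ∂gaussianWeight S a =
      ENNReal.ofReal (Real.exp (z ⬝ᵥ z / (4 * a))) * gaussianWeight S a Set.univ := by
  have complete_square (c : S → ℝ) : -(a * (c ⬝ᵥ c)) + c ⬝ᵥ z =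
      z ⬝ᵥ z / (4 * a) + -(a * ((c - (2 * a)⁻¹ • z) ⬝ᵥ (c - (2 * a)⁻¹ • z))) := by
    simp only [sub_dotProduct, dotProduct_sub, smul_dotProduct, dotProduct_smul, smul_eq_mul,
      dotProduct_comm z c]
    field_simp
    ring
  rw [lintegral_gaussianWeight a (by fun_prop), gaussianWeight_univ ha,
    ← lintegral_exp_neg_mul_dotProduct_self ha,
    ← lintegral_sub_right_eq_self (fun c => ENNReal.ofReal (Real.exp (-(a * (c ⬝ᵥ c)))))
      ((2 * a)⁻¹ • z), ← lintegral_const_mul _ (by fun_prop)]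
  refine lintegral_congr fun c => ?_
  rw [← ENNReal.ofReal_mul (Real.exp_pos _).le, ← ENNReal.ofReal_mul (Real.exp_pos _).le,
    ← Real.exp_add, ← Real.exp_add, complete_square]

lemma lintegral_cosh_dotProduct_gaussianWeight (ha : 0 < a) (z : S → ℝ) :
    ∫⁻ c, ENNReal.ofReal (Real.cosh (c ⬝ᵥ z)) ∂gaussianWeight S a =
      ENNReal.ofReal (Real.exp (z ⬝ᵥ z / (4 * a))) * gaussianWeight S a Set.univ := by
  have cosh_eq (c : S → ℝ) : ENNReal.ofReal (Real.cosh (c ⬝ᵥ z)) = ENNReal.ofReal 2⁻¹ *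
      (ENNReal.ofReal (Real.exp (c ⬝ᵥ z)) + ENNReal.ofReal (Real.exp (c ⬝ᵥ -z))) := by
    rw [← ENNReal.ofReal_add (Real.exp_pos _).le (Real.exp_pos _).le,
      ← ENNReal.ofReal_mul (by positivity), Real.cosh_eq, dotProduct_neg]
    ring_nf
  simp only [cosh_eq]
  rw [lintegral_const_mul _ (by fun_prop), lintegral_add_left (by fun_prop),
    lintegral_exp_dotProduct_gaussianWeight ha, lintegral_exp_dotProduct_gaussianWeight ha,
    neg_dotProduct_neg, ← two_mul, ← mul_assoc, ← ENNReal.ofReal_ofNat 2,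
    ← ENNReal.ofReal_mul (by positivity)]
  norm_num

end Gaussian

section UnitBody

lemma measurable_cosh_biform {ι κ S : Type*} [Finite ι] [Finite κ] [Fintype S]
    (M : (Sym2 ι × Sym2 κ → ℝ) →ₗ[ℝ] (S → ℝ)) (l : ℝ) :
    Measurable fun q : (S → ℝ) × ((ι → ℝ) × (κ → ℝ)) =>
      ENNReal.ofReal (Real.cosh (l * (q.1 ⬝ᵥ M (biveronese q.2.1 q.2.2)))) := by
  have hM : Continuous fun q : (S → ℝ) × ((ι → ℝ) × (κ → ℝ)) => M (biveronese q.2.1 q.2.2) :=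
    (LinearMap.continuous_of_finiteDimensional M).comp (continuous_biveronese.comp continuous_snd)
  exact (ENNReal.continuous_ofReal.comp (Real.continuous_cosh.comp
    ((continuous_fst.dotProduct hM).const_mul l))).measurable

variable {ι κ S : Type*} [Fintype ι] [Fintype κ] [Fintype S]
  {M : (Sym2 ι × Sym2 κ → ℝ) →ₗ[ℝ] (S → ℝ)}

/-- The coefficient vectors `c` for which the biform `c ⬝ᵥ M (biveronese x y)` is bounded by the
product of the squared norms of `x` and `y`. The map `M` selects a family of biforms indexed by
`S`. -/
def unitBody (M : (Sym2 ι × Sym2 κ → ℝ) →ₗ[ℝ] (S → ℝ)) : Set (S → ℝ) :=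
  {c | ∀ x y, |c ⬝ᵥ M (biveronese x y)| ≤ (x ⬝ᵥ x) * (y ⬝ᵥ y)}

lemma measurableSet_unitBody : MeasurableSet (unitBody M) := by
  simp only [unitBody, Set.ofPred_forall]
  exact (isClosed_iInter fun x => isClosed_iInter fun y =>
    isClosed_le (by fun_prop) continuous_const).measurableSet

lemma neg_mem_unitBody {c : S → ℝ} (hc : c ∈ unitBody M) : -c ∈ unitBody M := fun x y => by
  rw [neg_dotProduct, abs_neg]
  exact hc x y

variable {V : ℝ}

lemma cosh_mul_gaussianWeight_compl_unitBody_le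
    (hM : ∀ x y, M (biveronese x y) ⬝ᵥ M (biveronese x y) ≤ V * ((x ⬝ᵥ x) ^ 2 * (y ⬝ᵥ y) ^ 2))
    (hV : 0 ≤ V) {a l : ℝ} (ha : 0 < a) (hl : 0 ≤ l) :
    ENNReal.ofReal (Real.cosh (223 * l)) * volume (biball ι κ 1) *
        gaussianWeight S a (unitBody M)ᶜ ≤
      ENNReal.ofReal (Real.exp (l ^ 2 * (V * 5 ^ 8) / (4 * a))) * gaussianWeight S a Set.univ *
        volume (biball ι κ 5) := by
  have : SFinite (gaussianWeight S a) := by unfold gaussianWeight; infer_instance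
  set f : (S → ℝ) → (ι → ℝ) × (κ → ℝ) → ℝ≥0∞ := fun c p =>
    ENNReal.ofReal (Real.cosh (l * (c ⬝ᵥ M (biveronese p.1 p.2))))
  have hf : Measurable (Function.uncurry f) := measurable_cosh_biform M l
  have large : (unitBody M)ᶜ ⊆ {c | ENNReal.ofReal (Real.cosh (223 * l)) * volume (biball ι κ 1) ≤
      ∫⁻ p in biball ι κ 5, f c p} := fun c hc => by
    refine cosh_mul_volume_biball_le_setLIntegral (L := dotProductBilin ℝ ℝ c ∘ₗ M) ?_ hl
    simpa [unitBody] using hc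
  have moment (p) (hp : p ∈ biball ι κ 5) : ∫⁻ c, f c p ∂gaussianWeight S a ≤
      ENNReal.ofReal (Real.exp (l ^ 2 * (V * 5 ^ 8) / (4 * a))) *
        gaussianWeight S a Set.univ := by
    simp only [f, ← smul_eq_mul (a := l), ← dotProduct_smul]
    rw [lintegral_cosh_dotProduct_gaussianWeight ha]
    gcongr
    rw [smul_dotProduct, dotProduct_smul, smul_smul, smul_eq_mul, sq]
    gcongr
    calc _ ≤ V * ((p.1 ⬝ᵥ p.1) ^ 2 * (p.2 ⬝ᵥ p.2) ^ 2) := hM p.1 p.2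
      _ ≤ V * ((5 ^ 2) ^ 2 * (5 ^ 2) ^ 2) := by
        gcongr
        exacts [dotProduct_self_nonneg _, hp.1, dotProduct_self_nonneg _, hp.2]
      _ = V * 5 ^ 8 := by norm_num
  calc _ ≤ ENNReal.ofReal (Real.cosh (223 * l)) * volume (biball ι κ 1) * gaussianWeight S a _ :=
        mul_le_mul' le_rfl (measure_mono large)
    _ ≤ ∫⁻ c, (∫⁻ p in biball ι κ 5, f c p) ∂gaussianWeight S a :=
        mul_meas_ge_le_lintegral hf.lintegral_prod_right' _
    _ = ∫⁻ p in biball ι κ 5, (∫⁻ c, f c p ∂gaussianWeight S a) :=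
        lintegral_lintegral_swap hf.aemeasurable
    _ ≤ _ := (setLIntegral_mono' (measurableSet_biball ι κ 5) moment).trans_eq
        (setLIntegral_const _ _)

/-- Since `5 ^ 8 / (64 * 55 ^ 2) ≈ 2.02` and `223 / 55 ≈ 4.05`, a factor `exp (-2)` per dimension is
left to absorb the ratio `5 ^ k` of the volumes of the two products of balls. -/
lemma exp_mul_five_pow_le_cosh {k : ℕ} (hk : 4 ≤ k) :
    Real.exp ((k / 55) ^ 2 * 5 ^ 8 / (64 * k)) * 5 ^ k ≤
      1 / 2 * Real.cosh (223 * (k / 55)) := by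
  have hk' : (4 : ℝ) ≤ k := by exact_mod_cast hk
  have exponent : (k / 55 : ℝ) ^ 2 * 5 ^ 8 / (64 * k) ≤ k * (-2) + 223 * (k / 55) := by
    have : (k / 55 : ℝ) ^ 2 * 5 ^ 8 / (64 * k) = k * (5 ^ 8 / (64 * 55 ^ 2)) := by
      field_simp
    rw [this]
    nlinarith
  have exp_neg_two : Real.exp (-2) * 5 ≤ 0.7 := by
    rw [show (-2 : ℝ) = -1 + -1 by norm_num, Real.exp_add]
    nlinarith [Real.exp_neg_one_lt_d9, Real.exp_pos (-1)]
  calc Real.exp ((k / 55) ^ 2 * 5 ^ 8 / (64 * k)) * 5 ^ k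
      ≤ Real.exp (k * (-2) + 223 * (k / 55)) * 5 ^ k := by gcongr
    _ = (Real.exp (-2) * 5) ^ k * Real.exp (223 * (k / 55)) := by
        rw [Real.exp_add, Real.exp_nat_mul, mul_pow]
        ring
    _ ≤ 0.7 ^ k * Real.exp (223 * (k / 55)) := by gcongr
    _ ≤ 0.7 ^ 4 * Real.exp (223 * (k / 55)) := by
        gcongr ?_ * _
        exact pow_le_pow_of_le_one (by norm_num) (by norm_num) hk
    _ ≤ 1 / 2 * Real.cosh (223 * (k / 55)) := by
        rw [Real.cosh_eq]
        linarith [Real.exp_pos (223 * (k / 55 : ℝ)), Real.exp_pos (-(223 * (k / 55 : ℝ)))]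

lemma gaussianWeight_compl_unitBody_le
    (hM : ∀ x y, M (biveronese x y) ⬝ᵥ M (biveronese x y) ≤ V * ((x ⬝ᵥ x) ^ 2 * (y ⬝ᵥ y) ^ 2))
    (hV : 0 < V) {k : ℕ} (hk : Fintype.card ι + Fintype.card κ = k) (hk4 : 4 ≤ k) :
    gaussianWeight S (16 * k * V) (unitBody M)ᶜ ≤
      ENNReal.ofReal (1 / 2) * gaussianWeight S (16 * k * V) Set.univ := by
  have : (0 : ℝ) < k := by exact_mod_cast (by omega : 0 < k)
  set C := ENNReal.ofReal (Real.cosh (223 * (k / 55))) * volume (biball ι κ 1)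
  have hC₀ : C ≠ 0 :=
    mul_ne_zero (ENNReal.ofReal_pos.2 (Real.cosh_pos _)).ne' (volume_biball_one_ne_zero ι κ)
  have hC : C ≠ ⊤ := ENNReal.mul_ne_top ENNReal.ofReal_ne_top (volume_biball_one_ne_top ι κ)
  refine (ENNReal.mul_le_mul_iff_right hC₀ hC).1 ?_
  calc C * gaussianWeight S (16 * k * V) (unitBody M)ᶜ
      ≤ ENNReal.ofReal (Real.exp ((k / 55) ^ 2 * (V * 5 ^ 8) / (4 * (16 * k * V)))) *
          gaussianWeight S (16 * k * V) Set.univ * volume (biball ι κ 5) :=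
        cosh_mul_gaussianWeight_compl_unitBody_le hM hV.le (by positivity) (by positivity)
    _ = ENNReal.ofReal (Real.exp ((k / 55) ^ 2 * 5 ^ 8 / (64 * k)) * 5 ^ k) *
          (gaussianWeight S (16 * k * V) Set.univ * volume (biball ι κ 1)) := by
        rw [volume_biball ι κ (by norm_num), hk, ENNReal.ofReal_mul (Real.exp_pos _).le,
          show (k / 55 : ℝ) ^ 2 * (V * 5 ^ 8) / (4 * (16 * k * V)) =
            (k / 55 : ℝ) ^ 2 * 5 ^ 8 / (64 * k) by field_simp; norm_num]
        ring
    _ ≤ ENNReal.ofReal (1 / 2 * Real.cosh (223 * (k / 55))) *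
          (gaussianWeight S (16 * k * V) Set.univ * volume (biball ι κ 1)) :=
        mul_le_mul' (ENNReal.ofReal_le_ofReal (exp_mul_five_pow_le_cosh hk4)) le_rfl
    _ = C * (ENNReal.ofReal (1 / 2) * gaussianWeight S (16 * k * V) Set.univ) := by
        rw [ENNReal.ofReal_mul (by norm_num)]
        ring

lemma le_volume_unitBody
    (hM : ∀ x y, M (biveronese x y) ⬝ᵥ M (biveronese x y) ≤ V * ((x ⬝ᵥ x) ^ 2 * (y ⬝ᵥ y) ^ 2))
    (hV : 0 < V) {k : ℕ} (hk : Fintype.card ι + Fintype.card κ = k) (hk4 : 4 ≤ k) :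
    ENNReal.ofReal (1 / 2 * √(Real.pi / (16 * k * V)) ^ Fintype.card S) ≤
      volume (unitBody M) := by
  have : (0 : ℝ) < k := by exact_mod_cast (by omega : 0 < k)
  have ha : 0 < 16 * k * V := by positivity
  set γ := gaussianWeight S (16 * k * V)
  have hγ : γ Set.univ = ENNReal.ofReal (√(Real.pi / (16 * k * V)) ^ Fintype.card S) :=
    gaussianWeight_univ ha
  have hfin : ENNReal.ofReal (1 / 2) * γ Set.univ ≠ ⊤ := by
    rw [hγ]
    exact ENNReal.mul_ne_top ENNReal.ofReal_ne_top ENNReal.ofReal_ne_top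
  have half : ENNReal.ofReal (1 / 2) * γ Set.univ ≤ γ (unitBody M) := by
    refine (ENNReal.add_le_add_iff_right hfin).1 ?_
    calc ENNReal.ofReal (1 / 2) * γ Set.univ + ENNReal.ofReal (1 / 2) * γ Set.univ
        = γ Set.univ := by
          rw [← add_mul, ← ENNReal.ofReal_add (by norm_num) (by norm_num)]
          norm_num
      _ = γ (unitBody M) + γ (unitBody M)ᶜ := (measure_add_measure_compl
          measurableSet_unitBody).symm
      _ ≤ γ (unitBody M) + ENNReal.ofReal (1 / 2) * γ Set.univ :=
          add_le_add le_rfl (gaussianWeight_compl_unitBody_le hM hV hk hk4)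
  rw [ENNReal.ofReal_mul (by norm_num), ← hγ]
  exact half.trans (gaussianWeight_le_volume ha.le _)

end UnitBody

section QuadraticUnitBody

variable {α S : Type*}

/-- Regards a family of quadratic forms as a family of biforms by multiplying with the square of a
single further variable. -/
def homogenize (M : (Sym2 α → ℝ) →ₗ[ℝ] (S → ℝ)) :
    (Sym2 α × Sym2 Unit → ℝ) →ₗ[ℝ] (S → ℝ) :=
  M ∘ₗ LinearMap.funLeft ℝ ℝ fun p => (p, s((), ()))

lemma homogenize_biveronese (M : (Sym2 α → ℝ) →ₗ[ℝ] (S → ℝ)) (u : α → ℝ) (t : Unit → ℝ) :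
    homogenize M (biveronese u t) = (t ⬝ᵥ t) • M (veronese u) := by
  rw [← map_smul]
  refine congrArg M (funext fun p => ?_)
  simp [LinearMap.funLeft_apply, biveronese, dotProduct, mul_comm]

variable [Fintype α] [Fintype S] {M : (Sym2 α → ℝ) →ₗ[ℝ] (S → ℝ)} {V : ℝ}

/-- The analogue of `unitBody` for families of quadratic forms. -/
def quadUnitBody (M : (Sym2 α → ℝ) →ₗ[ℝ] (S → ℝ)) : Set (S → ℝ) :=
  {c | ∀ u, |c ⬝ᵥ M (veronese u)| ≤ u ⬝ᵥ u}

lemma unitBody_homogenize : unitBody (homogenize M) = quadUnitBody M := by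
  ext c
  refine ⟨fun hc u => by simpa [homogenize_biveronese] using hc u 1, fun hc u t => ?_⟩
  rw [homogenize_biveronese, dotProduct_smul, smul_eq_mul, abs_mul,
    abs_of_nonneg (dotProduct_self_nonneg t), mul_comm]
  exact mul_le_mul_of_nonneg_right (hc u) (dotProduct_self_nonneg t)

lemma measurableSet_quadUnitBody : MeasurableSet (quadUnitBody M) :=
  unitBody_homogenize (M := M) ▸ measurableSet_unitBody

lemma neg_mem_quadUnitBody {c : S → ℝ} (hc : c ∈ quadUnitBody M) : -c ∈ quadUnitBody M := by
  rw [← unitBody_homogenize] at hc ⊢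
  exact neg_mem_unitBody hc

lemma le_volume_quadUnitBody
    (hM : ∀ u, M (veronese u) ⬝ᵥ M (veronese u) ≤ V * (u ⬝ᵥ u) ^ 2) (hV : 0 < V) {N : ℕ}
    (hN : Fintype.card α = N) (hN3 : 3 ≤ N) :
    ENNReal.ofReal (1 / 2 * √(Real.pi / (16 * (N + 1 : ℕ) * V)) ^ Fintype.card S) ≤
      volume (quadUnitBody M) := by
  rw [← unitBody_homogenize]
  refine le_volume_unitBody (fun u t => ?_) hV (by simp [hN]) (by omega)
  rw [homogenize_biveronese, smul_dotProduct, dotProduct_smul, smul_smul, smul_eq_mul]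
  calc _ ≤ ((t ⬝ᵥ t) * (t ⬝ᵥ t)) * (V * (u ⬝ᵥ u) ^ 2) :=
        mul_le_mul_of_nonneg_left (hM u) (mul_self_nonneg _)
    _ = _ := by ring

end QuadraticUnitBody

section ConeLowerBound

open scoped Pointwise

lemma exp_neg_mul_volume_le_expIntegral {E : Type*} [MeasureSpace E] {A K : Set E} {ℓ : E → ℝ}
    {t : ℝ} (hA : MeasurableSet A) (hAK : A ⊆ K) (ht : ∀ a ∈ A, ℓ a ≤ t) :
    ENNReal.ofReal (Real.exp (-t)) * volume A ≤ expIntegral K ℓ := by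
  rw [← setLIntegral_const]
  exact (setLIntegral_mono' hA fun a ha => ENNReal.ofReal_le_ofReal <| Real.exp_le_exp.2 <|
    neg_le_neg (ht a ha)).trans (lintegral_mono_set hAK)

variable {E : Type*} [NormedAddCommGroup E] [NormedSpace ℝ E] [FiniteDimensional ℝ E]
  [MeasureSpace E] [BorelSpace E] [(volume : Measure E).IsAddHaarMeasure] {G : Set E}

lemma volume_le_two_mul_volume_inter_nonpos (hG : MeasurableSet G) (hneg : ∀ c ∈ G, -c ∈ G)
    (ℓ : E →ₗ[ℝ] ℝ) : volume G ≤ 2 * volume (G ∩ {c | ℓ c ≤ 0}) := by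
  have hmeas : MeasurableSet (G ∩ {c | ℓ c ≤ 0}) := hG.inter
    (isClosed_le (LinearMap.continuous_of_finiteDimensional ℓ) continuous_const).measurableSet
  have cover : G ⊆ G ∩ {c | ℓ c ≤ 0} ∪ Neg.neg ⁻¹' (G ∩ {c | ℓ c ≤ 0}) := fun c hc => by
    rcases le_total (ℓ c) 0 with h | h
    · exact Or.inl ⟨hc, h⟩
    · exact Or.inr ⟨hneg c hc, by simpa using h⟩
  calc volume G ≤ _ := (measure_mono cover).trans (measure_union_le _ _)
    _ = _ := by
        rw [(Measure.measurePreserving_neg volume).measure_preimage hmeas.nullMeasurableSet,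
          two_mul]

lemma ofReal_mul_volume_le_expIntegral {K : Set E} {ℓ : E →ₗ[ℝ] ℝ} {q : E} {d : ℕ}
    (hd : Module.finrank ℝ E = d) (hd0 : 0 < d) (hq : 0 < ℓ q) (hG : MeasurableSet G)
    (hneg : ∀ c ∈ G, -c ∈ G) (hGK : ∀ c ∈ G, q + c ∈ K)
    (hK : ∀ t : ℝ, 0 < t → ∀ b ∈ K, t • b ∈ K) :
    ENNReal.ofReal (1 / 2 * (d / (Real.exp 1 * ℓ q)) ^ d) * volume G ≤ expIntegral K ℓ := by
  set G' := G ∩ {c | ℓ c ≤ 0}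
  have hG' : MeasurableSet G' := hG.inter
    (isClosed_le (LinearMap.continuous_of_finiteDimensional ℓ) continuous_const).measurableSet
  set s : ℝ := d / ℓ q
  have hs : 0 < s := div_pos (by exact_mod_cast hd0) hq
  have hA : ∀ a ∈ s • (q +ᵥ G'), a ∈ K ∧ ℓ a ≤ d := by
    rintro _ ⟨_, ⟨c, hc, rfl⟩, rfl⟩
    refine ⟨hK s hs _ (hGK c hc.1), ?_⟩
    have hc : ℓ c ≤ 0 := hc.2
    calc ℓ (s • (q + c)) = s * ℓ q + s * ℓ c := by simp
      _ ≤ s * ℓ q := by linarith [mul_nonpos_of_nonneg_of_nonpos hs.le hc]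
      _ = d := div_mul_cancel₀ _ hq.ne'
  have constant : ENNReal.ofReal (1 / 2 * (d / (Real.exp 1 * ℓ q)) ^ d) * 2 =
      ENNReal.ofReal (Real.exp (-d)) * ENNReal.ofReal (s ^ d) := by
    rw [← ENNReal.ofReal_ofNat, ← ENNReal.ofReal_mul (by positivity),
      ← ENNReal.ofReal_mul (Real.exp_pos _).le, Real.exp_neg, ← Real.exp_one_pow, div_pow, div_pow,
      mul_pow]
    congr 1
    field_simp
  calc ENNReal.ofReal (1 / 2 * (d / (Real.exp 1 * ℓ q)) ^ d) * volume G
      ≤ ENNReal.ofReal (1 / 2 * (d / (Real.exp 1 * ℓ q)) ^ d) * (2 * volume G') :=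
        mul_le_mul' le_rfl (volume_le_two_mul_volume_inter_nonpos hG hneg ℓ)
    _ = ENNReal.ofReal (Real.exp (-d)) * volume (s • (q +ᵥ G')) := by
        rw [Measure.addHaar_smul, measure_vadd, hd, abs_of_pos (by positivity), ← mul_assoc,
          constant, mul_assoc]
    _ ≤ expIntegral K ℓ := exp_neg_mul_volume_le_expIntegral
        ((hG'.const_vadd q).const_smul₀ s) (fun a ha => (hA a ha).1) fun a ha => (hA a ha).2

end ConeLowerBound

section BiformCones

variable (ι κ : Type*) [Fintype ι] [Fintype κ]

/-- The sum of the values of a biform on the pairs of standard basis vectors. -/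
def biTrace : (Sym2 ι × Sym2 κ → ℝ) →ₗ[ℝ] ℝ := ∑ i, ∑ k, LinearMap.proj (s(i, i), s(k, k))

/-- The cone of nonnegative biforms of bidegree `(2, 2)`. -/
def posCone : Set (Sym2 ι × Sym2 κ → ℝ) := {b | ∀ x y, 0 ≤ b ⬝ᵥ biveronese x y}

variable {ι κ}

lemma biTrace_apply (b : Sym2 ι × Sym2 κ → ℝ) :
    biTrace ι κ b = ∑ i, ∑ k, b (s(i, i), s(k, k)) := by
  simp [biTrace]

lemma dotProduct_biveronese_single [DecidableEq ι] [DecidableEq κ] (b : Sym2 ι × Sym2 κ → ℝ)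
    (i : ι) (k : κ) :
    b ⬝ᵥ biveronese (Pi.single i 1) (Pi.single k 1) = b (s(i, i), s(k, k)) := by
  have h : biveronese (Pi.single i 1) (Pi.single k 1) = Pi.single (s(i, i), s(k, k)) (1 : ℝ) := by
    ext ⟨p, q⟩
    by_cases hp : p = s(i, i) <;> by_cases hq : q = s(k, k) <;>
      simp [biveronese, veronese_single, hp, hq]
  rw [h, dotProduct_single_one]

lemma smul_mem_posCone {t : ℝ} (ht : 0 ≤ t) {b : Sym2 ι × Sym2 κ → ℝ} (hb : b ∈ posCone ι κ) :
    t • b ∈ posCone ι κ := fun x y => by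
  rw [smul_dotProduct]
  exact smul_nonneg ht (hb x y)

end BiformCones

section Reindexing

variable {S T : Type*} [Fintype S] [Fintype T]

lemma funOnFinite_linearMap_dotProduct (f : S → T) (c : S → ℝ) (v : T → ℝ) :
    FunOnFinite.linearMap ℝ ℝ f c ⬝ᵥ v = c ⬝ᵥ v ∘ f := by
  classical
  simp only [dotProduct, FunOnFinite.linearMap_apply_apply, Finset.sum_mul]
  rw [← Finset.sum_fiberwise (s := Finset.univ) (g := f)]
  refine Finset.sum_congr rfl fun t _ => Finset.sum_congr rfl fun s hs => ?_
  rw [Function.comp_apply, (Finset.mem_filter.1 hs).2]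

lemma comp_dotProduct_self_le {f : S → T} (hf : Function.Injective f) (v : T → ℝ) :
    (v ∘ f) ⬝ᵥ (v ∘ f) ≤ v ⬝ᵥ v :=
  (Finset.sum_map Finset.univ ⟨f, hf⟩ fun t => v t * v t).symm.trans_le
    (Finset.sum_le_univ_sum_of_nonneg fun t => mul_self_nonneg (v t))

end Reindexing

section Tensors

variable {ι κ : Type*}

/-- The pair of projections of an unordered pair of index pairs. The square of the tensor `x ⊗ y`
has the monomials `veronese x p.1 * veronese y p.2` where `p` is such a pair of projections. -/
def pairProj (r : Sym2 (ι × κ)) : Sym2 ι × Sym2 κ := (r.map Prod.fst, r.map Prod.snd)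

@[simp] lemma pairProj_mk (a b : ι × κ) : pairProj s(a, b) = (s(a.1, b.1), s(a.2, b.2)) := rfl

lemma pairProj_surjective : Function.Surjective (pairProj : Sym2 (ι × κ) → _) := by
  rintro ⟨⟨i, j⟩, ⟨k, l⟩⟩
  exact ⟨s((i, k), (j, l)), rfl⟩

/-- A right inverse of `pairProj`. -/
def pairLift : Sym2 ι × Sym2 κ → Sym2 (ι × κ) := Function.surjInv pairProj_surjective

lemma pairProj_pairLift (p : Sym2 ι × Sym2 κ) : pairProj (pairLift p) = p :=
  Function.surjInv_eq _ p

lemma pairLift_injective : Function.Injective (pairLift : Sym2 ι × Sym2 κ → _) :=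
  Function.LeftInverse.injective pairProj_pairLift

/-- The coordinates of the rank one tensor `x ⊗ y`. -/
def tensor (x : ι → ℝ) (y : κ → ℝ) (p : ι × κ) : ℝ := x p.1 * y p.2

lemma biveronese_comp_pairProj (x : ι → ℝ) (y : κ → ℝ) :
    biveronese x y ∘ pairProj = veronese (tensor x y) := by
  ext ⟨a, b⟩
  simp only [Function.comp_apply, pairProj_mk, biveronese, veronese_mk, tensor]
  ring

lemma tensor_dotProduct_self [Fintype ι] [Fintype κ] (x : ι → ℝ) (y : κ → ℝ) :
    tensor x y ⬝ᵥ tensor x y = (x ⬝ᵥ x) * (y ⬝ᵥ y) := by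
  simp only [dotProduct, tensor, Fintype.sum_prod_type, Finset.sum_mul_sum]
  exact Finset.sum_congr rfl fun i _ => Finset.sum_congr rfl fun k _ => by ring

lemma tensor_single [DecidableEq ι] [DecidableEq κ] (i : ι) (k : κ) :
    tensor (Pi.single i 1) (Pi.single k 1) = Pi.single (i, k) 1 := by
  ext ⟨a, b⟩
  by_cases ha : a = i <;> by_cases hb : b = k <;> simp [tensor, ha, hb]

variable (ι κ) in
/-- The restriction of quadratic forms on `ℝ^(ι × κ)` to rank one tensors, a biform. It is the
transpose of the composition with `pairProj`. -/
def restrictTensor [Finite ι] [Finite κ] : (Sym2 (ι × κ) → ℝ) →ₗ[ℝ] (Sym2 ι × Sym2 κ → ℝ) :=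
  FunOnFinite.linearMap ℝ ℝ pairProj

lemma restrictTensor_linearMap_pairLift [Finite ι] [Finite κ] (c : Sym2 ι × Sym2 κ → ℝ) :
    restrictTensor ι κ (FunOnFinite.linearMap ℝ ℝ pairLift c) = c := by
  rw [restrictTensor, ← LinearMap.comp_apply, ← FunOnFinite.linearMap_comp,
    show pairProj ∘ pairLift = id from funext pairProj_pairLift, FunOnFinite.linearMap_id,
    LinearMap.id_apply]

variable [Fintype ι] [Fintype κ]

lemma restrictTensor_dotProduct (a : Sym2 (ι × κ) → ℝ) (v : Sym2 ι × Sym2 κ → ℝ) :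
    restrictTensor ι κ a ⬝ᵥ v = a ⬝ᵥ v ∘ pairProj :=
  funOnFinite_linearMap_dotProduct pairProj a v

lemma restrictTensor_dotProduct_biveronese (a : Sym2 (ι × κ) → ℝ) (x : ι → ℝ) (y : κ → ℝ) :
    restrictTensor ι κ a ⬝ᵥ biveronese x y = a ⬝ᵥ veronese (tensor x y) := by
  rw [restrictTensor_dotProduct, biveronese_comp_pairProj]

lemma biTrace_restrictTensor (a : Sym2 (ι × κ) → ℝ) :
    biTrace ι κ (restrictTensor ι κ a) = quadTrace (ι × κ) a := by
  classical
  simp only [biTrace_apply, ← dotProduct_biveronese_single, restrictTensor_dotProduct_biveronese,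
    tensor_single, dotProduct_veronese_single, quadTrace_apply, Fintype.sum_prod_type]

variable (ι κ) in
/-- The cone of sums of squares of bilinear forms. The square of a bilinear form is the restriction
to rank one tensors of the square of a linear form. -/
def sqCone : Set (Sym2 ι × Sym2 κ → ℝ) := restrictTensor ι κ '' psdCone (ι × κ)

lemma smul_mem_sqCone {t : ℝ} (ht : 0 ≤ t) {b : Sym2 ι × Sym2 κ → ℝ} (hb : b ∈ sqCone ι κ) :
    t • b ∈ sqCone ι κ := by
  obtain ⟨a, ha, rfl⟩ := hb
  exact ⟨t • a, smul_mem_psdCone ht ha, map_smul _ _ _⟩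

end Tensors

section IdentityForm

variable (ι κ : Type*) [Fintype ι] [Fintype κ] [DecidableEq ι] [DecidableEq κ]

/-- The coefficients of the quadratic form `u ⬝ᵥ u`. -/
def normSqForm : Sym2 ι → ℝ := ∑ i, Pi.single s(i, i) 1

/-- The coefficients of the biform `(x ⬝ᵥ x) * (y ⬝ᵥ y)`. -/
def normSqBiform : Sym2 ι × Sym2 κ → ℝ := restrictTensor ι κ (normSqForm (ι × κ))

variable {ι κ}

lemma normSqForm_dotProduct_veronese (u : ι → ℝ) : normSqForm ι ⬝ᵥ veronese u = u ⬝ᵥ u := by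
  simp only [normSqForm, sum_dotProduct, single_dotProduct, one_mul, veronese_mk]
  rfl

lemma quadTrace_normSqForm : quadTrace ι (normSqForm ι) = Fintype.card ι := by
  simp [quadTrace_apply, normSqForm, Pi.single_apply]

lemma normSqBiform_dotProduct_biveronese (x : ι → ℝ) (y : κ → ℝ) :
    normSqBiform ι κ ⬝ᵥ biveronese x y = (x ⬝ᵥ x) * (y ⬝ᵥ y) := by
  rw [normSqBiform, restrictTensor_dotProduct_biveronese, normSqForm_dotProduct_veronese,
    tensor_dotProduct_self]

lemma biTrace_normSqBiform : biTrace ι κ (normSqBiform ι κ) = Fintype.card (ι × κ) := by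
  rw [normSqBiform, biTrace_restrictTensor, quadTrace_normSqForm]

lemma normSqForm_add_mem_psdCone {a : Sym2 ι → ℝ} (ha : ∀ u, |a ⬝ᵥ veronese u| ≤ u ⬝ᵥ u) :
    normSqForm ι + a ∈ psdCone ι := fun u => by
  rw [add_dotProduct, normSqForm_dotProduct_veronese]
  linarith [neg_le_of_abs_le (ha u)]

end IdentityForm

section LowerBounds

variable {ι κ : Type*} [Fintype ι] [Fintype κ] {N d : ℕ}

lemma one_half_mul_pow_mul_one_half_mul_pow (u v : ℝ) (d : ℕ) :
    1 / 2 * u ^ d * (1 / 2 * v ^ d) = 1 / 4 * (u * v) ^ d := by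
  rw [mul_pow]
  ring

lemma le_expIntegral_posCone (hN : Fintype.card (ι × κ) = N) (hN0 : 0 < N)
    (hd : Fintype.card (Sym2 ι × Sym2 κ) = d) (hd0 : 0 < d) {k : ℕ}
    (hk : Fintype.card ι + Fintype.card κ = k) (hk4 : 4 ≤ k) :
    ENNReal.ofReal (1 / 4 * (d / (Real.exp 1 * N) * √(Real.pi / (16 * k))) ^ d) ≤
      expIntegral (posCone ι κ) (biTrace ι κ) := by
  classical
  have htrace : biTrace ι κ (normSqBiform ι κ) = N := by rw [biTrace_normSqBiform, hN]
  have hvol := le_volume_unitBody (ι := ι) (κ := κ) (M := LinearMap.id) (V := 1)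
    (fun x y => by simpa using biveronese_dotProduct_self_le x y) one_pos hk hk4
  rw [mul_one, hd] at hvol
  rw [← one_half_mul_pow_mul_one_half_mul_pow, ENNReal.ofReal_mul (by positivity), ← htrace]
  refine (mul_le_mul' le_rfl hvol).trans (ofReal_mul_volume_le_expIntegral
    ((Module.finrank_fintype_fun_eq_card ℝ).trans hd) hd0 ?_
    measurableSet_unitBody (fun c => neg_mem_unitBody) (fun c hc x y => ?_)
    fun t ht b => smul_mem_posCone ht.le)
  · rw [htrace]
    exact_mod_cast hN0
  · have hcxy : |c ⬝ᵥ biveronese x y| ≤ _ := hc x y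
    rw [add_dotProduct, normSqBiform_dotProduct_biveronese]
    linarith [neg_le_of_abs_le hcxy]

lemma le_expIntegral_sqCone (hN : Fintype.card (ι × κ) = N) (hN3 : 3 ≤ N)
    (hd : Fintype.card (Sym2 ι × Sym2 κ) = d) (hd0 : 0 < d) :
    ENNReal.ofReal (1 / 4 * (d / (Real.exp 1 * N) * √(Real.pi / (16 * (N + 1 : ℕ)))) ^ d) ≤
      expIntegral (sqCone ι κ) (biTrace ι κ) := by
  classical
  have htrace : biTrace ι κ (normSqBiform ι κ) = N := by rw [biTrace_normSqBiform, hN]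
  have hvol := le_volume_quadUnitBody (V := 1)
    (M := LinearMap.funLeft ℝ ℝ (pairLift : Sym2 ι × Sym2 κ → _))
    (fun u => (comp_dotProduct_self_le pairLift_injective (veronese u)).trans
      (by simpa using veronese_dotProduct_self_le u)) one_pos hN hN3
  rw [mul_one, hd] at hvol
  rw [← one_half_mul_pow_mul_one_half_mul_pow, ENNReal.ofReal_mul (by positivity), ← htrace]
  refine (mul_le_mul' le_rfl hvol).trans (ofReal_mul_volume_le_expIntegral
    ((Module.finrank_fintype_fun_eq_card ℝ).trans hd) hd0 ?_
    measurableSet_quadUnitBody (fun c => neg_mem_quadUnitBody) (fun c hc => ?_)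
    fun t ht b => smul_mem_sqCone ht.le)
  · rw [htrace]
    exact_mod_cast (by omega : 0 < N)
  · refine ⟨_, normSqForm_add_mem_psdCone fun u => ?_, by
      rw [map_add, restrictTensor_linearMap_pairLift, normSqBiform]⟩
    rw [funOnFinite_linearMap_dotProduct]
    exact hc u

end LowerBounds

section ExponentialIntegralComparison

variable {E F : Type*}

lemma expIntegral_le_of_measurePreserving [MeasureSpace E] [MeasureSpace F] {T : E → F}
    (hT : MeasurePreserving T) {L : Set E} {K : Set F} (hK : MeasurableSet K)
    {ℓ : E → ℝ} {m : F → ℝ} (hm : Measurable m) (hLK : ∀ b ∈ L, T b ∈ K)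
    (hle : ∀ b ∈ L, m (T b) ≤ ℓ b) : expIntegral L ℓ ≤ expIntegral K m := by
  have hmeas : Measurable fun a => ENNReal.ofReal (Real.exp (-m a)) := by fun_prop
  calc expIntegral L ℓ ≤ ∫⁻ b in L, ENNReal.ofReal (Real.exp (-m (T b))) :=
        setLIntegral_mono (hmeas.comp hT.measurable) fun b hb =>
          ENNReal.ofReal_le_ofReal (Real.exp_le_exp.2 (neg_le_neg (hle b hb)))
    _ ≤ ∫⁻ b in T ⁻¹' K, ENNReal.ofReal (Real.exp (-m (T b))) := lintegral_mono_set hLK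
    _ = expIntegral K m := hT.setLIntegral_comp_preimage hK hmeas

lemma expIntegral_inv_smul [NormedAddCommGroup E] [NormedSpace ℝ E] [FiniteDimensional ℝ E]
    [MeasureSpace E] [BorelSpace E] [(volume : Measure E).IsAddHaarMeasure] {K : Set E}
    {c : ℝ} (hc : 0 < c) (hK : ∀ a, c⁻¹ • a ∈ K ↔ a ∈ K) (ℓ : E →ₗ[ℝ] ℝ) :
    expIntegral K (c⁻¹ • ℓ) = ENNReal.ofReal (c ^ Module.finrank ℝ E) * expIntegral K ℓ := by
  have hpre : (c⁻¹ • ·) ⁻¹' K = K := Set.ext hK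
  have hsmul : MeasurePreserving (fun a : E => c⁻¹ • a) volume
      (ENNReal.ofReal (c ^ Module.finrank ℝ E) • volume) := by
    refine ⟨measurable_const_smul _, ?_⟩
    rw [Measure.map_addHaar_smul _ (inv_ne_zero hc.ne'), inv_pow, inv_inv,
      abs_of_pos (by positivity)]
  have hint := hsmul.setLIntegral_comp_preimage_emb
    (MeasurableEquiv.smul₀ c⁻¹ (inv_ne_zero hc.ne')).measurableEmbedding
    (fun a => ENNReal.ofReal (Real.exp (-ℓ a))) K
  rw [hpre, Measure.restrict_smul, lintegral_smul_measure] at hint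
  simpa [expIntegral] using hint

end ExponentialIntegralComparison

section Slices

lemma veronese_single_add_single {ι : Type*} [DecidableEq ι] {i j : ι} (h : i ≠ j) :
    veronese (Pi.single i (1 : ℝ) + Pi.single j 1) =
      Pi.single s(i, j) 1 + (Pi.single s(i, i) 1 + Pi.single s(j, j) 1) := by
  ext ⟨a, b⟩
  simp only [veronese_mk, Pi.add_apply, Pi.single_apply, Sym2.eq_iff]
  by_cases hai : a = i <;> by_cases haj : a = j <;> by_cases hbi : b = i <;>
    by_cases hbj : b = j <;> subst_vars <;> simp_all

variable {ι κ : Type*} [Fintype ι]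

/-- The quadratic form in the second group of variables obtained by evaluating the first group
at `x`. -/
def slice (B : Sym2 ι → Sym2 κ → ℝ) (x : ι → ℝ) : Sym2 κ → ℝ := ∑ p, veronese x p • B p

lemma slice_dotProduct_veronese [Fintype κ] (B : Sym2 ι → Sym2 κ → ℝ) (x : ι → ℝ) (y : κ → ℝ) :
    slice B x ⬝ᵥ veronese y = Function.uncurry B ⬝ᵥ biveronese x y := by
  rw [slice, sum_dotProduct, dotProduct, Fintype.sum_prod_type]
  simp only [dotProduct, biveronese, Function.uncurry, Pi.smul_apply, smul_eq_mul]
  exact Finset.sum_congr rfl fun p _ => Finset.sum_congr rfl fun q _ => by ring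

lemma sum_units_slice (B : Sym2 ι → Sym2 κ → ℝ) (x v : ι → ℝ) :
    ∑ ε : ℤˣ, slice B (x + ε • v) = (2 : ℝ) • (slice B x + slice B v) := by
  simp only [slice]
  rw [Finset.sum_comm, ← Finset.sum_add_distrib, Finset.smul_sum]
  refine Finset.sum_congr rfl fun p _ => ?_
  have hp := congrFun (sum_units_veronese x v) p
  rw [Finset.sum_apply] at hp
  rw [← Finset.sum_smul, hp, ← add_smul, smul_smul]
  rfl

variable [DecidableEq ι]

lemma slice_single (B : Sym2 ι → Sym2 κ → ℝ) (i : ι) : slice B (Pi.single i 1) = B s(i, i) := by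
  simp [slice, veronese_single, Pi.single_apply]

lemma slice_single_add_single (B : Sym2 ι → Sym2 κ → ℝ) {i j : ι} (h : i ≠ j) :
    slice B (Pi.single i 1 + Pi.single j 1) = B s(i, j) + (B s(i, i) + B s(j, j)) := by
  simp [slice, veronese_single_add_single h, add_smul, Finset.sum_add_distrib, Pi.single_apply]

end Slices

section DiagonalShift

variable (ι E : Type*) [AddCommGroup E] [Module ℝ E] [DecidableEq ι]

/-- The operator whose value at an off-diagonal pair is the sum of the two corresponding diagonal
entries. Adding it turns the coefficient at `s(i, j)` of a biform into its slice at `e i + e j`. -/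
def diagShift : Module.End ℝ (Sym2 ι → E) :=
  LinearMap.pi fun p => if p.IsDiag then 0 else
    p.lift ⟨fun i j => LinearMap.proj s(i, i) + LinearMap.proj s(j, j), fun _ _ => add_comm _ _⟩

variable {ι E}

lemma diagShift_diag (B : Sym2 ι → E) (i : ι) : diagShift ι E B s(i, i) = 0 := by
  simp [diagShift]

lemma diagShift_of_ne (B : Sym2 ι → E) {i j : ι} (h : i ≠ j) :
    diagShift ι E B s(i, j) = B s(i, i) + B s(j, j) := by
  simp [diagShift, h]

lemma isNilpotent_diagShift : IsNilpotent (diagShift ι E) := by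
  refine ⟨2, LinearMap.ext fun B => funext fun p => ?_⟩
  rw [sq, Module.End.mul_apply]
  induction p with
  | _ i j =>
    rcases eq_or_ne i j with rfl | h
    · exact diagShift_diag _ i
    · rw [diagShift_of_ne _ h, diagShift_diag, diagShift_diag, add_zero]
      rfl

end DiagonalShift

section PosUpperBound

variable {ι κ : Type*} [Fintype ι] [Fintype κ] {B : Sym2 ι → Sym2 κ → ℝ}

lemma slice_mem_psdCone (hB : Function.uncurry B ∈ posCone ι κ) (x : ι → ℝ) :
    slice B x ∈ psdCone κ := fun y => by
  rw [slice_dotProduct_veronese]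
  exact hB x y

lemma add_diagShift_mem_psdCone [DecidableEq ι] (hB : Function.uncurry B ∈ posCone ι κ)
    (p : Sym2 ι) :
    (B + diagShift ι _ B) p ∈ psdCone κ := by
  induction p with
  | _ i j =>
    rw [Pi.add_apply]
    rcases eq_or_ne i j with rfl | h
    · rw [diagShift_diag, add_zero, ← slice_single B]
      exact slice_mem_psdCone hB _
    · rw [diagShift_of_ne B h, ← slice_single_add_single B h]
      exact slice_mem_psdCone hB _

/-- By the parallelogram identity the slices at `e i + e j` and `e i - e j` have total trace
twice that of the slices at `e i` and `e j`. -/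
lemma quadTrace_add_diagShift_le [DecidableEq ι] (hB : Function.uncurry B ∈ posCone ι κ)
    (i j : ι) :
    quadTrace κ ((B + diagShift ι _ B) s(i, j)) ≤
      2 * (quadTrace κ (B s(i, i)) + quadTrace κ (B s(j, j))) := by
  have hnonneg (x : ι → ℝ) : 0 ≤ quadTrace κ (slice B x) :=
    quadTrace_nonneg (slice_mem_psdCone hB x)
  rw [Pi.add_apply]
  rcases eq_or_ne i j with rfl | h
  · have hi := hnonneg (Pi.single i 1)
    rw [slice_single] at hi
    rw [diagShift_diag, add_zero]
    linarith
  · have parallelogram := congrArg (quadTrace κ)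
      (sum_units_slice B (Pi.single i 1) (Pi.single j 1))
    rw [map_sum, map_smul, map_add, slice_single, slice_single, smul_eq_mul] at parallelogram
    rw [diagShift_of_ne B h, ← slice_single_add_single B h, ← parallelogram]
    have hle := Finset.single_le_sum (s := Finset.univ)
      (f := fun ε : ℤˣ => quadTrace κ (slice B (Pi.single i 1 + ε • Pi.single j 1)))
      (fun ε _ => hnonneg _) (Finset.mem_univ (1 : ℤˣ))
    rwa [one_smul] at hle

lemma sum_quadTrace_add_diagShift_le [DecidableEq ι]
    (hB : Function.uncurry B ∈ posCone ι κ) :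
    ∑ p, quadTrace κ ((B + diagShift ι _ B) p) ≤
      4 * Fintype.card ι * biTrace ι κ (Function.uncurry B) := by
  calc ∑ p, quadTrace κ ((B + diagShift ι _ B) p)
      ≤ ∑ i, ∑ j, quadTrace κ ((B + diagShift ι _ B) s(i, j)) :=
        sum_le_sum_sum_mk fun p => quadTrace_nonneg (add_diagShift_mem_psdCone hB p)
    _ ≤ ∑ i, ∑ j, 2 * (quadTrace κ (B s(i, i)) + quadTrace κ (B s(j, j))) :=
        Finset.sum_le_sum fun i _ => Finset.sum_le_sum fun j _ => quadTrace_add_diagShift_le hB i j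
    _ = 4 * Fintype.card ι * ∑ i, quadTrace κ (B s(i, i)) := by
        simp only [← Finset.mul_sum, Finset.sum_add_distrib, Finset.sum_const, Finset.card_univ,
          nsmul_eq_mul]
        ring
    _ = _ := by simp only [biTrace_apply, quadTrace_apply, Function.uncurry]

lemma expIntegral_posCone_le (hι : 0 < Fintype.card ι) :
    expIntegral (posCone ι κ) (biTrace ι κ) ≤
      ENNReal.ofReal ((4 * Fintype.card ι) ^ Fintype.card (Sym2 ι × Sym2 κ)) *
        expIntegral (psdCone κ) (quadTrace κ) ^ Fintype.card (Sym2 ι) := by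
  classical
  have hc : (0 : ℝ) < 4 * Fintype.card ι := by exact_mod_cast Nat.mul_pos four_pos hι
  set c : ℝ := 4 * Fintype.card ι
  have hK (a : Sym2 κ → ℝ) : c⁻¹ • a ∈ psdCone κ ↔ a ∈ psdCone κ :=
    ⟨fun h => by simpa [smul_smul, hc.ne'] using smul_mem_psdCone hc.le h,
      smul_mem_psdCone (inv_pos.2 hc).le⟩
  have hmeas : Measurable (c⁻¹ • ⇑(quadTrace κ)) :=
    (LinearMap.continuous_of_finiteDimensional (quadTrace κ)).measurable.const_smul _
  have hshear := (measurePreserving_id_add_of_isNilpotent volume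
    (isNilpotent_diagShift (ι := ι) (E := Sym2 κ → ℝ))).comp measurePreserving_curry
  calc expIntegral (posCone ι κ) (biTrace ι κ)
      ≤ expIntegral (Set.univ.pi fun _ : Sym2 ι => psdCone κ)
          (fun B => ∑ p, (c⁻¹ • ⇑(quadTrace κ)) (B p)) := by
        refine expIntegral_le_of_measurePreserving hshear
          (.univ_pi fun _ => isClosed_psdCone.measurableSet)
          (Finset.measurable_sum _ fun p _ => hmeas.comp (measurable_pi_apply p))
          (fun b hb p _ => add_diagShift_mem_psdCone hb p) fun b hb => ?_
        simp only [Pi.smul_apply, smul_eq_mul]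
        rw [← Finset.mul_sum, inv_mul_le_iff₀ hc]
        exact sum_quadTrace_add_diagShift_le hb
    _ = _ := by
        rw [expIntegral_pi _ hmeas, expIntegral_inv_smul hc hK, mul_pow,
          ← ENNReal.ofReal_pow (by positivity), ← pow_mul, Module.finrank_fintype_fun_eq_card,
          Fintype.card_prod, mul_comm (Fintype.card (Sym2 ι))]

end PosUpperBound

lemma expIntegral_posCone_comm (ι κ : Type*) [Fintype ι] [Fintype κ] :
    expIntegral (posCone ι κ) (biTrace ι κ) = expIntegral (posCone κ ι) (biTrace κ ι) := by
  let e := MeasurableEquiv.arrowCongr' (Equiv.prodComm (Sym2 κ) (Sym2 ι)) (MeasurableEquiv.refl ℝ)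
  have hdot (b : Sym2 κ × Sym2 ι → ℝ) (x : ι → ℝ) (y : κ → ℝ) :
      e b ⬝ᵥ biveronese x y = b ⬝ᵥ biveronese y x := by
    rw [dotProduct, ← (Equiv.prodComm (Sym2 κ) (Sym2 ι)).sum_comp]
    exact Finset.sum_congr rfl fun p _ => congrArg (b p * ·) (mul_comm _ _)
  have hcone : e ⁻¹' posCone ι κ = posCone κ ι := Set.ext fun b =>
    ⟨fun h y x => hdot b x y ▸ h x y, fun h x y => (hdot b x y).symm ▸ h y x⟩
  have htrace : biTrace ι κ ∘ e = biTrace κ ι := funext fun b => by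
    rw [Function.comp_apply, biTrace_apply, biTrace_apply, Finset.sum_comm]
    rfl
  rw [← hcone, ← htrace]
  exact (expIntegral_preimage e (volume_preserving_arrowCongr' _ _ (MeasurePreserving.id _))
    _ _).symm

section FiberedCone

variable {E F : Type*} [MeasureSpace E] [MeasureSpace F] [SFinite (volume : Measure F)]

lemma expIntegral_comp_fst {K : Set (E × F)} (hK : NullMeasurableSet K) {ℓ : E → ℝ}
    (hℓ : Measurable ℓ) :
    expIntegral K (ℓ ∘ Prod.fst) =
      ∫⁻ b, ENNReal.ofReal (Real.exp (-ℓ b)) * volume (Prod.mk b ⁻¹' K) := by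
  have hmeas : Measurable fun p : E × F => ENNReal.ofReal (Real.exp (-ℓ p.1)) := by fun_prop
  obtain ⟨K', -, hK', hKK'⟩ := hK.exists_measurable_superset_ae_eq
  have hfibers : ∀ᵐ b : E, Prod.mk b ⁻¹' K' =ᵐ[volume] Prod.mk b ⁻¹' K :=
    Measure.ae_ae_of_ae_prod hKK'
  calc expIntegral K (ℓ ∘ Prod.fst)
      = ∫⁻ p, K'.indicator (fun p => ENNReal.ofReal (Real.exp (-ℓ p.1))) p := by
        rw [lintegral_indicator hK', setLIntegral_congr hKK']
        rfl
    _ = ∫⁻ b, ENNReal.ofReal (Real.exp (-ℓ b)) * volume (Prod.mk b ⁻¹' K') := by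
        rw [Measure.volume_eq_prod, lintegral_prod _ (hmeas.indicator hK').aemeasurable]
        exact lintegral_congr fun b => lintegral_indicator_const (s := Prod.mk b ⁻¹' K')
          (measurable_prodMk_left hK') (ENNReal.ofReal (Real.exp (-ℓ b)))
    _ = _ := lintegral_congr_ae <| hfibers.mono fun b hb =>
        congrArg (ENNReal.ofReal (Real.exp (-ℓ b)) * ·) (measure_congr hb)

end FiberedCone

section ConvexFibers

open scoped Pointwise

variable {E F : Type*} [NormedAddCommGroup E] [NormedSpace ℝ E] [FiniteDimensional ℝ E]
  [MeasureSpace E] [BorelSpace E] [(volume : Measure E).IsAddHaarMeasure]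
  [NormedAddCommGroup F] [NormedSpace ℝ F] [FiniteDimensional ℝ F]
  [MeasureSpace F] [BorelSpace F] [(volume : Measure F).IsAddHaarMeasure]

/-- Adding `t • q` to a point `b` of the projection of the cone `K` produces a fiber containing a
translate of `t • G`. -/
lemma expIntegral_image_fst_mul_le {K : Set (E × F)} (hK : MeasurableSet K)
    (hadd : ∀ p ∈ K, ∀ p' ∈ K, p + p' ∈ K) {t : ℝ} (ht : 0 < t)
    (hsmul : ∀ p ∈ K, t • p ∈ K) {q : E × F} {G : Set F} (hG : ∀ c ∈ G, q + (0, c) ∈ K)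
    (ℓ : E →ₗ[ℝ] ℝ) :
    expIntegral (Prod.fst '' K) ℓ * (ENNReal.ofReal (Real.exp (-(t * ℓ q.1))) *
        (ENNReal.ofReal (t ^ Module.finrank ℝ F) * volume G)) ≤
      expIntegral K (ℓ ∘ Prod.fst) := by
  have hℓ : Measurable ℓ := (LinearMap.continuous_of_finiteDimensional ℓ).measurable
  have hfiber : ∀ b ∈ Prod.fst '' K, ENNReal.ofReal (t ^ Module.finrank ℝ F) * volume G ≤
      volume (Prod.mk (b + t • q.1) ⁻¹' K) := by
    rintro _ ⟨⟨b, c⟩, hbc, rfl⟩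
    rw [← abs_of_pos (pow_pos ht _), ← Measure.addHaar_smul, ← measure_vadd _ (c + t • q.2)]
    refine measure_mono ?_
    rintro _ ⟨_, ⟨c', hc', rfl⟩, rfl⟩
    have hsum : (b, c) + t • (q + (0, c')) = (b + t • q.1, c + t • q.2 + t • c') :=
      Prod.ext (by simp) (by simp [add_assoc])
    have hmem := hadd _ hbc _ (hsmul _ (hG c' hc'))
    rwa [hsum] at hmem
  have hmeas : Measurable fun b =>
      ENNReal.ofReal (Real.exp (-ℓ b)) * volume (Prod.mk b ⁻¹' K) :=
    (by fun_prop : Measurable fun b => ENNReal.ofReal (Real.exp (-ℓ b))).mul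
      (measurable_measure_prodMk_left hK)
  rw [expIntegral_comp_fst hK.nullMeasurableSet hℓ, ← lintegral_add_right_eq_self
    (fun b => ENNReal.ofReal (Real.exp (-ℓ b)) * volume (Prod.mk b ⁻¹' K)) (t • q.1), expIntegral,
    mul_comm]
  calc _ ≤ ∫⁻ b in Prod.fst '' K, ENNReal.ofReal (Real.exp (-(t * ℓ q.1))) *
          (ENNReal.ofReal (t ^ Module.finrank ℝ F) * volume G) *
            ENNReal.ofReal (Real.exp (-ℓ b)) := (lintegral_const_mul _ (by fun_prop)).ge
    _ ≤ ∫⁻ b in Prod.fst '' K, ENNReal.ofReal (Real.exp (-ℓ (b + t • q.1))) *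
          volume (Prod.mk (b + t • q.1) ⁻¹' K) := by
        refine setLIntegral_mono (hmeas.comp (measurable_add_const _)) fun b hb => ?_
        rw [map_add, map_smul, smul_eq_mul, neg_add, Real.exp_add,
          ENNReal.ofReal_mul (Real.exp_pos _).le]
        exact (by ring : _ = _).trans_le (mul_le_mul' le_rfl (hfiber b hb))
    _ ≤ _ := setLIntegral_le_lintegral _ _

end ConvexFibers

section TensorKernel

variable {ι κ : Type*}

lemma pairProj_fiber {a b c : Sym2 (ι × κ)} (hab : pairProj a = pairProj b)
    (hac : pairProj a = pairProj c) : a = b ∨ a = c ∨ b = c := by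
  induction a with | _ a₁ a₂ =>
  induction b with | _ b₁ b₂ =>
  induction c with | _ c₁ c₂ =>
  simp only [pairProj_mk, Sym2.eq_iff, Prod.ext_iff] at hab hac ⊢
  grind

variable (ι κ) in
/-- The unordered pairs of index pairs outside of the range of `pairLift`. They index the
coordinates of the kernel of `restrictTensor`. -/
abbrev Rest : Type _ := {r : Sym2 (ι × κ) // pairLift (pairProj r) ≠ r}

lemma pairProj_rest_injective : Function.Injective fun r : Rest ι κ => pairProj r.1 := by
  rintro ⟨r, hr⟩ ⟨r', hr'⟩ h
  have h : pairProj r = pairProj r' := h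
  rcases pairProj_fiber (pairProj_pairLift (pairProj r)) ((pairProj_pairLift _).trans h) with
    h' | h' | h'
  · exact absurd h' hr
  · exact absurd (h ▸ h') hr'
  · exact Subtype.ext h'

variable (ι κ) in
/-- The splitting of the unordered pairs of index pairs into the range of `pairLift` and the
rest. -/
def pairSplit : (Sym2 ι × Sym2 κ) ⊕ Rest ι κ ≃ Sym2 (ι × κ) :=
  Equiv.ofBijective (Sum.elim pairLift Subtype.val) <| by
    refine ⟨pairLift_injective.sumElim Subtype.val_injective ?_, fun r => ?_⟩
    · rintro p ⟨_, hr⟩ rfl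
      exact hr (by rw [pairProj_pairLift])
    · by_cases h : pairLift (pairProj r) = r
      · exact ⟨Sum.inl _, h⟩
      · exact ⟨Sum.inr ⟨r, h⟩, rfl⟩

variable (ι κ) in
/-- The map `w ↦ w r - w (pairLift (pairProj r))`. Its entries vanish on the squares of rank one
tensors. -/
def restDiff : (Sym2 (ι × κ) → ℝ) →ₗ[ℝ] (Rest ι κ → ℝ) :=
  LinearMap.funLeft ℝ ℝ Subtype.val - LinearMap.funLeft ℝ ℝ fun r => pairLift (pairProj r.1)

lemma restDiff_apply (w : Sym2 (ι × κ) → ℝ) (r : Rest ι κ) :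
    restDiff ι κ w r = w r.1 - w (pairLift (pairProj r.1)) := rfl

variable [Fintype ι] [Fintype κ]

lemma dotProduct_eq_pairLift_add_rest [DecidableEq ι] [DecidableEq κ]
    (v w : Sym2 (ι × κ) → ℝ) :
    v ⬝ᵥ w = (v ∘ pairLift) ⬝ᵥ (w ∘ pairLift) +
      (fun r : Rest ι κ => v r.1) ⬝ᵥ fun r : Rest ι κ => w r.1 := by
  rw [dotProduct, ← (pairSplit ι κ).sum_comp, Fintype.sum_sum_type]
  rfl

lemma restDiff_dotProduct_self_le [DecidableEq ι] [DecidableEq κ] (v : Sym2 (ι × κ) → ℝ) :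
    restDiff ι κ v ⬝ᵥ restDiff ι κ v ≤ 2 * (v ⬝ᵥ v) := by
  have hlift := comp_dotProduct_self_le pairProj_rest_injective (v ∘ pairLift)
  rw [dotProduct_eq_pairLift_add_rest v v]
  calc restDiff ι κ v ⬝ᵥ restDiff ι κ v
      ≤ ∑ r : Rest ι κ, (2 * (v r.1 * v r.1) +
          2 * (v (pairLift (pairProj r.1)) * v (pairLift (pairProj r.1)))) :=
        Finset.sum_le_sum fun r _ => by
          rw [restDiff_apply]
          nlinarith [sq_nonneg (v r.1 + v (pairLift (pairProj r.1)))]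
    _ ≤ _ := by
        rw [Finset.sum_add_distrib, ← Finset.mul_sum, ← Finset.mul_sum, add_comm, ← mul_add]
        exact mul_le_mul_of_nonneg_left (add_le_add_left hlift _) two_pos.le

variable (ι κ) in
/-- The quadratic form with restriction `b` to rank one tensors and coefficients `c` outside of
the range of `pairLift`. -/
def recombine : (Sym2 ι × Sym2 κ → ℝ) × (Rest ι κ → ℝ) →ₗ[ℝ] (Sym2 (ι × κ) → ℝ) :=
  (FunOnFinite.linearMap ℝ ℝ pairLift).coprod
    (FunOnFinite.linearMap ℝ ℝ Subtype.val -
      FunOnFinite.linearMap ℝ ℝ fun r => pairLift (pairProj r.1))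

lemma recombine_dotProduct [DecidableEq ι] [DecidableEq κ]
    (p : (Sym2 ι × Sym2 κ → ℝ) × (Rest ι κ → ℝ)) (w : Sym2 (ι × κ) → ℝ) :
    recombine ι κ p ⬝ᵥ w = p.1 ⬝ᵥ w ∘ pairLift + p.2 ⬝ᵥ restDiff ι κ w := by
  simp only [recombine, LinearMap.coprod_apply, LinearMap.sub_apply, add_dotProduct,
    sub_dotProduct, funOnFinite_linearMap_dotProduct]
  rw [← dotProduct_sub]
  rfl

lemma restrictTensor_recombine (p : (Sym2 ι × Sym2 κ → ℝ) × (Rest ι κ → ℝ)) :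
    restrictTensor ι κ (recombine ι κ p) = p.1 := by
  classical
  refine dotProduct_eq _ _ fun v => ?_
  have hlift : (v ∘ pairProj) ∘ pairLift = v := funext fun s => congrArg v (pairProj_pairLift s)
  have hrest : restDiff ι κ (v ∘ pairProj) = 0 := funext fun r => by
    simp [restDiff_apply, pairProj_pairLift]
  rw [restrictTensor_dotProduct, recombine_dotProduct, hlift, hrest, dotProduct_zero, add_zero]

lemma recombine_restrictTensor (a : Sym2 (ι × κ) → ℝ) :
    recombine ι κ (restrictTensor ι κ a, fun r => a r.1) = a := by
  classical
  refine dotProduct_eq _ _ fun w => ?_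
  have hlift : ((w ∘ pairLift) ∘ pairProj) ∘ pairLift = w ∘ (pairLift (ι := ι) (κ := κ)) :=
    funext fun s => congrArg (w ∘ pairLift) (pairProj_pairLift s)
  rw [recombine_dotProduct, restrictTensor_dotProduct, dotProduct_eq_pairLift_add_rest a w,
    dotProduct_eq_pairLift_add_rest a ((w ∘ pairLift) ∘ pairProj), hlift, add_assoc,
    ← dotProduct_add]
  congr 2
  exact funext fun r => add_sub_cancel _ _

variable (ι κ) in
/-- The operator of the shear relating `recombine` to the coordinates given by `pairSplit`. -/
def restShear : Module.End ℝ ((Sym2 ι × Sym2 κ → ℝ) × (Rest ι κ → ℝ)) :=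
  LinearMap.inl ℝ _ _ ∘ₗ
    (-FunOnFinite.linearMap ℝ ℝ fun r : Rest ι κ => pairProj r.1) ∘ₗ LinearMap.snd ℝ _ _

variable [DecidableEq ι] [DecidableEq κ]

lemma measurePreserving_recombine : MeasurePreserving (recombine ι κ) := by
  have : (volume : Measure ((Sym2 ι × Sym2 κ → ℝ) × (Rest ι κ → ℝ))).IsAddHaarMeasure := by
    exact Measure.prod.instIsAddHaarMeasure volume volume
  have hnil : IsNilpotent (restShear ι κ) :=
    ⟨2, LinearMap.ext fun p => by simp [sq, Module.End.mul_apply, restShear]⟩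
  have hcomp : ⇑(recombine ι κ) = prodPiEquiv (pairSplit ι κ) ∘ fun p => p + restShear ι κ p := by
    funext p
    refine dotProduct_eq _ _ fun w => ?_
    have hshear : p + restShear ι κ p =
        (p.1 - FunOnFinite.linearMap ℝ ℝ (fun r : Rest ι κ => pairProj r.1) p.2, p.2) :=
      Prod.ext (sub_eq_add_neg _ _).symm (add_zero _)
    rw [recombine_dotProduct, Function.comp_apply, prodPiEquiv_dotProduct, hshear,
      sub_dotProduct, funOnFinite_linearMap_dotProduct, sub_add_eq_add_sub, add_sub_assoc,
      ← dotProduct_sub]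
    rfl
  rw [hcomp]
  exact (measurePreserving_prodPiEquiv _).comp
    (measurePreserving_id_add_of_isNilpotent volume hnil)

lemma recombine_add_mem_psdCone {c : Rest ι κ → ℝ} (hc : c ∈ quadUnitBody (restDiff ι κ)) :
    recombine ι κ ((normSqBiform ι κ, fun r => normSqForm (ι × κ) r.1) + (0, c)) ∈
      psdCone (ι × κ) := by
  rw [map_add, normSqBiform, recombine_restrictTensor]
  refine normSqForm_add_mem_psdCone fun u => ?_
  rw [recombine_dotProduct, zero_dotProduct, zero_add]
  exact hc u

lemma le_volume_quadUnitBody_restDiff {N k : ℕ} (hN : Fintype.card (ι × κ) = N) (hN3 : 3 ≤ N)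
    (hk : Fintype.card (Rest ι κ) = k) :
    ENNReal.ofReal (1 / 2 * √(Real.pi / (16 * (N + 1 : ℕ) * 2)) ^ k) ≤
      volume (quadUnitBody (restDiff ι κ)) :=
  hk ▸ le_volume_quadUnitBody (fun u => (restDiff_dotProduct_self_le _).trans
    (mul_le_mul_of_nonneg_left (veronese_dotProduct_self_le u) two_pos.le)) two_pos hN hN3

/-- The factor is a lower bound for the integral over a fiber of `restrictTensor`, which contains
a translate of the dilation by `t` of the `quadUnitBody` of `restDiff`. -/
lemma expIntegral_sqCone_mul_le {N k : ℕ} (hN : Fintype.card (ι × κ) = N) (hN3 : 3 ≤ N)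
    (hk : Fintype.card (Rest ι κ) = k) {t : ℝ} (ht : 0 < t) :
    expIntegral (sqCone ι κ) (biTrace ι κ) * ENNReal.ofReal (Real.exp (-(t * N)) *
        (t ^ k * (1 / 2 * √(Real.pi / (16 * (N + 1 : ℕ) * 2)) ^ k))) ≤
      expIntegral (psdCone (ι × κ)) (quadTrace (ι × κ)) := by
  set K := recombine ι κ ⁻¹' psdCone (ι × κ)
  have hK : MeasurableSet K :=
    measurePreserving_recombine.measurable isClosed_psdCone.measurableSet
  have hadd : ∀ p ∈ K, ∀ p' ∈ K, p + p' ∈ K := fun p hp p' hp' => by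
    rw [Set.mem_preimage, map_add]
    exact add_mem_psdCone hp hp'
  have hsmul : ∀ p ∈ K, t • p ∈ K := fun p hp => by
    rw [Set.mem_preimage, map_smul]
    exact smul_mem_psdCone ht.le hp
  have hproj : sqCone ι κ ⊆ Prod.fst '' K := by
    rintro _ ⟨a, ha, rfl⟩
    exact ⟨_, (recombine_restrictTensor a).symm ▸ ha, rfl⟩
  have hcone := expIntegral_image_fst_mul_le hK hadd ht hsmul
    (fun c hc => recombine_add_mem_psdCone hc) (biTrace ι κ)
  rw [biTrace_normSqBiform, hN, Module.finrank_fintype_fun_eq_card, hk] at hcone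
  rw [ENNReal.ofReal_mul (Real.exp_pos _).le, ENNReal.ofReal_mul (by positivity)]
  calc _ ≤ _ := mul_le_mul' (lintegral_mono_set hproj) (mul_le_mul' le_rfl
        (mul_le_mul' le_rfl (le_volume_quadUnitBody_restDiff hN hN3 hk)))
    _ ≤ expIntegral K (biTrace ι κ ∘ Prod.fst) := hcone
    _ ≤ expIntegral (psdCone (ι × κ)) (quadTrace (ι × κ)) :=
        expIntegral_le_of_measurePreserving measurePreserving_recombine
          isClosed_psdCone.measurableSet
          (LinearMap.continuous_of_finiteDimensional (quadTrace (ι × κ))).measurable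
          (fun _ => id) fun p _ => by
            rw [← biTrace_restrictTensor, restrictTensor_recombine, Function.comp_apply]

end TensorKernel

section ConeCoordinates

variable {E F : Type*} [AddCommGroup E] [Module ℝ E] [AddCommGroup F] [Module ℝ F]

/-- The cone coordinates `(s, a) ↦ s • q + χ a` given by the hyperplane parametrization `χ`. -/
def coneMap (q : E) (χ : F →ₗ[ℝ] E) : ℝ × F →ₗ[ℝ] E :=
  (LinearMap.toSpanSingleton ℝ E q).coprod χ

lemma coneMap_apply (q : E) (χ : F →ₗ[ℝ] E) (s : ℝ) (a : F) :
    coneMap q χ (s, a) = s • q + χ a := rfl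

lemma coneMap_injective {q : E} {χ : F →ₗ[ℝ] E} (hχ : Function.Injective χ) {ℓ : E →ₗ[ℝ] ℝ}
    (hq : ℓ q ≠ 0) (hℓ : ∀ a, ℓ (χ a) = 0) : Function.Injective (coneMap q χ) := by
  rw [injective_iff_map_eq_zero]
  rintro ⟨s, a⟩ h
  rw [coneMap_apply] at h
  have hs : s = 0 := by simpa [hℓ, hq] using congrArg ℓ h
  have ha : a = 0 := (map_eq_zero_iff χ hχ).1 (by simpa [hs] using h)
  rw [hs, ha, Prod.mk_zero_zero]

end ConeCoordinates

section ConeSection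

open scoped Pointwise

lemma lintegral_Ioi_exp_neg_mul_mul_pow {N : ℝ} (hN : 0 < N) (D : ℕ) :
    ∫⁻ s in Set.Ioi (0 : ℝ), ENNReal.ofReal (Real.exp (-(s * N)) * s ^ D) =
      ENNReal.ofReal ((1 / N) ^ (D + 1) * D.factorial) := by
  have hD : (0 : ℝ) < D + 1 := by positivity
  have hcongr : Set.EqOn (fun s : ℝ => s ^ ((D + 1 : ℝ) - 1) * Real.exp (-(N * s)))
      (fun s => Real.exp (-(s * N)) * s ^ D) (Set.Ioi 0) := fun s _ => by
    simp only [add_sub_cancel_right, Real.rpow_natCast, mul_comm]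
  have hint : ∫ s in Set.Ioi (0 : ℝ), Real.exp (-(s * N)) * s ^ D =
      (1 / N) ^ (D + 1) * D.factorial := by
    rw [← setIntegral_congr_fun measurableSet_Ioi hcongr,
      Real.integral_rpow_mul_exp_neg_mul_Ioi hD hN, Real.Gamma_nat_eq_factorial]
    norm_cast
  have hpos : 0 < (1 / N) ^ (D + 1) * D.factorial := by positivity
  rw [← hint, ofReal_integral_eq_lintegral_ofReal]
  · exact .of_integral_ne_zero (hint ▸ hpos.ne')
  · exact (ae_restrict_iff' measurableSet_Ioi).2 <| .of_forall fun s hs =>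
      mul_nonneg (Real.exp_pos _).le (pow_nonneg (Set.mem_Ioi.1 hs).le _)

variable {E F : Type*} [NormedAddCommGroup E] [NormedSpace ℝ E] [FiniteDimensional ℝ E]
  [NormedAddCommGroup F] [NormedSpace ℝ F]
  [MeasureSpace F] [BorelSpace F] [(volume : Measure F).IsAddHaarMeasure]
  [MeasureSpace E] [BorelSpace E] [(volume : Measure E).IsAddHaarMeasure]

lemma exists_expIntegral_eq_mul_preimage (e : F ≃L[ℝ] E) :
    ∃ c : ℝ≥0∞, c ≠ 0 ∧ c ≠ ⊤ ∧ ∀ (K : Set E) (ℓ : E → ℝ),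
      expIntegral K ℓ = c * expIntegral (e ⁻¹' K) (ℓ ∘ e) := by
  have := e.isAddHaarMeasure_map (volume : Measure F)
  refine ⟨(volume : Measure E).addHaarScalarFactor ((volume : Measure F).map e),
    ENNReal.coe_ne_zero.2 (Measure.addHaarScalarFactor_pos_of_isAddHaarMeasure _ _).ne',
    ENNReal.coe_ne_top, fun K ℓ => ?_⟩
  have he : MeasurableEmbedding e := e.toHomeomorph.measurableEmbedding
  calc expIntegral K ℓ
      = ∫⁻ b in K, ENNReal.ofReal (Real.exp (-ℓ b)) ∂((volume : Measure E).addHaarScalarFactor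
          ((volume : Measure F).map e) • (volume : Measure F).map e) :=
        congrArg (fun μ => ∫⁻ b in K, ENNReal.ofReal (Real.exp (-ℓ b)) ∂μ)
          (Measure.isAddLeftInvariant_eq_smul _ _)
    _ = _ := by
        rw [Measure.restrict_smul, lintegral_smul_measure, he.restrict_map, he.lintegral_map]
        rfl

variable [FiniteDimensional ℝ F]

/-- On a cone in the half space `{(s, a) | 0 ≤ s}`, integrating over the sections at heights `s`
leaves a Gamma integral times the volume of the section at height `1`. -/
lemma expIntegral_prod_cone {K : Set (ℝ × F)} (hK : Convex ℝ K)
    (hsmul : ∀ t : ℝ, 0 < t → ∀ p ∈ K, t • p ∈ K) (hpos : ∀ p ∈ K, 0 ≤ p.1) {N : ℝ} (hN : 0 < N) :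
    expIntegral K ((· * N) ∘ Prod.fst) =
      ENNReal.ofReal ((1 / N) ^ (Module.finrank ℝ F + 1) * (Module.finrank ℝ F).factorial) *
        volume (Prod.mk 1 ⁻¹' K) := by
  have hfiber : ∀ s : ℝ, 0 < s → Prod.mk s ⁻¹' K = s • (Prod.mk 1 ⁻¹' K) := fun s hs => by
    ext a
    rw [Set.mem_smul_set_iff_inv_smul_mem₀ hs.ne', Set.mem_preimage, Set.mem_preimage]
    constructor
    · intro h
      simpa [hs.ne'] using hsmul s⁻¹ (inv_pos.2 hs) _ h
    · intro h
      simpa [hs.ne'] using hsmul s hs _ h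
  rw [expIntegral_comp_fst (hK.nullMeasurableSet volume) (by fun_prop),
    ← lintegral_Ioi_exp_neg_mul_mul_pow hN, ← lintegral_mul_const _ (by fun_prop),
    ← lintegral_indicator measurableSet_Ioi]
  refine lintegral_congr_ae ((Measure.ae_ne volume 0).mono fun s hs => ?_)
  rcases hs.lt_or_gt with hs | hs
  · have hempty : Prod.mk s ⁻¹' K = ∅ := Set.eq_empty_of_forall_notMem fun a ha =>
      hs.not_ge (hpos _ ha)
    simp [hempty, hs.le]
  · simp only [Set.indicator_of_mem (Set.mem_Ioi.2 hs)]
    rw [hfiber s hs, Measure.addHaar_smul,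
      abs_of_pos (pow_pos hs _), ENNReal.ofReal_mul (Real.exp_pos _).le, mul_assoc]

lemma exists_expIntegral_eq_mul_volume (hEF : Module.finrank ℝ E = Module.finrank ℝ F + 1)
    {ℓ : E →ₗ[ℝ] ℝ} {q : E} (hq : 0 < ℓ q) {χ : F →ₗ[ℝ] E} (hχ : Function.Injective χ)
    (hℓ : ∀ a, ℓ (χ a) = 0) :
    ∃ γ : ℝ≥0∞, γ ≠ 0 ∧ γ ≠ ⊤ ∧ ∀ K : Set E, Convex ℝ K →
      (∀ t : ℝ, 0 < t → ∀ b ∈ K, t • b ∈ K) → (∀ b ∈ K, 0 ≤ ℓ b) →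
      expIntegral K ℓ = γ * volume {a | χ a + q ∈ K} := by
  let e : (ℝ × F) ≃L[ℝ] E := (LinearEquiv.ofInjectiveOfFinrankEq (coneMap q χ)
    (coneMap_injective hχ hq.ne' hℓ) (by simp [hEF, add_comm])).toContinuousLinearEquiv
  have he (p : ℝ × F) : e p = p.1 • q + χ p.2 := rfl
  have hfst : ℓ ∘ e = (· * ℓ q) ∘ Prod.fst := funext fun p => by simp [he, hℓ]
  obtain ⟨c, hc0, hc, H⟩ := exists_expIntegral_eq_mul_preimage e
  refine ⟨c * ENNReal.ofReal ((1 / ℓ q) ^ (Module.finrank ℝ F + 1) *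
      (Module.finrank ℝ F).factorial),
    mul_ne_zero hc0 (ENNReal.ofReal_pos.2 (by positivity)).ne',
    ENNReal.mul_ne_top hc ENNReal.ofReal_ne_top, fun K hK hsmul hpos => ?_⟩
  have hesmul : ∀ t : ℝ, 0 < t → ∀ p ∈ e ⁻¹' K, t • p ∈ e ⁻¹' K := fun t ht p hp => by
    rw [Set.mem_preimage, map_smul]
    exact hsmul t ht _ hp
  have hepos : ∀ p ∈ e ⁻¹' K, 0 ≤ p.1 := fun p hp =>
    nonneg_of_mul_nonneg_left ((hpos _ hp).trans_eq (congrFun hfst p)) hq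
  have hslice : Prod.mk 1 ⁻¹' (e ⁻¹' K) = {a | χ a + q ∈ K} := by
    ext a
    rw [Set.mem_preimage, Set.mem_preimage, he, one_smul, add_comm]
    rfl
  have hconvex : Convex ℝ (e ⁻¹' K) := hK.linear_preimage e.toLinearMap
  rw [H, hfst, expIntegral_prod_cone hconvex hesmul hepos hq, mul_assoc]
  exact congrArg (fun A => c * (_ * volume A)) hslice

end ConeSection

section Coefficients

variable {ι κ : Type*} [Fintype ι] [Fintype κ]

lemma eq_zero_of_dotProduct_veronese {a : Sym2 ι → ℝ} (h : ∀ u, a ⬝ᵥ veronese u = 0) : a = 0 := by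
  classical
  have hdiag (i : ι) : a s(i, i) = 0 := (dotProduct_veronese_single a i).symm.trans (h _)
  funext p
  induction p with
  | _ i j =>
    rcases eq_or_ne i j with rfl | hij
    · exact hdiag i
    · have hsum := h (Pi.single i 1 + Pi.single j 1)
      rw [veronese_single_add_single hij] at hsum
      simpa [dotProduct_add, hdiag] using hsum

lemma eq_zero_of_dotProduct_biveronese {b : Sym2 ι × Sym2 κ → ℝ}
    (h : ∀ x y, b ⬝ᵥ biveronese x y = 0) : b = 0 := by
  have hslice (x : ι → ℝ) : slice (Function.curry b) x = 0 :=
    eq_zero_of_dotProduct_veronese fun y => by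
      rw [slice_dotProduct_veronese, Function.uncurry_curry, h]
  funext ⟨p, r⟩
  refine congrFun (eq_zero_of_dotProduct_veronese (a := fun p => b (p, r)) fun x => ?_) p
  simpa [slice, dotProduct, mul_comm] using congrFun (hslice x) r

lemma eq_of_dotProduct_biveronese {b b' : Sym2 ι × Sym2 κ → ℝ}
    (h : ∀ x y, b ⬝ᵥ biveronese x y = b' ⬝ᵥ biveronese x y) : b = b' :=
  sub_eq_zero.1 <| eq_zero_of_dotProduct_biveronese fun x y => by
    rw [sub_dotProduct, h, sub_self]

variable [DecidableEq ι]

/-- The Gram matrix of a quadratic form: each off-diagonal coefficient is split evenly between the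
two orderings of its index pair. -/
def gramMatrix (a : Sym2 ι → ℝ) : Matrix ι ι ℝ := Matrix.of fun i j => a s(i, j) / orderings s(i, j)

lemma dotProduct_gramMatrix_mulVec (a : Sym2 ι → ℝ) (u : ι → ℝ) :
    u ⬝ᵥ (gramMatrix a).mulVec u = a ⬝ᵥ veronese u := by
  calc u ⬝ᵥ (gramMatrix a).mulVec u
      = ∑ i, ∑ j, (fun p => a p / orderings p * veronese u p) s(i, j) := by
        simp only [dotProduct, Matrix.mulVec, gramMatrix, Matrix.of_apply, Finset.mul_sum,
          veronese_mk]
        exact Finset.sum_congr rfl fun i _ => Finset.sum_congr rfl fun j _ => by ring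
    _ = ∑ p, a p * veronese u p := by
        rw [sum_sum_mk_eq_sum_orderings_mul fun p => a p / orderings p * veronese u p]
        refine Finset.sum_congr rfl fun p _ => ?_
        have := (zero_lt_one.trans_le (one_le_orderings p)).ne'
        field_simp

lemma posSemidef_gramMatrix {a : Sym2 ι → ℝ} (ha : a ∈ psdCone ι) : (gramMatrix a).PosSemidef := by
  refine Matrix.PosSemidef.of_dotProduct_mulVec_nonneg ?_ fun u => ?_
  · ext i j
    simp [gramMatrix, Sym2.eq_swap (a := i)]
  · rw [star_trivial, dotProduct_gramMatrix_mulVec]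
    exact ha u

lemma exists_eq_sum_linSq {a : Sym2 ι → ℝ} (ha : a ∈ psdCone ι) :
    ∃ (N : ℕ) (w : Fin N → ι → ℝ), a = ∑ i, linSq (w i) := by
  obtain ⟨N, w, hw⟩ := Matrix.posSemidef_iff_eq_sum_vecMulVec.1 (posSemidef_gramMatrix ha)
  refine ⟨N, w, sub_eq_zero.1 <| eq_zero_of_dotProduct_veronese fun u => ?_⟩
  rw [sub_dotProduct, sub_eq_zero, ← dotProduct_gramMatrix_mulVec, hw, Matrix.sum_mulVec,
    dotProduct_sum, sum_dotProduct]
  refine Finset.sum_congr rfl fun i _ => ?_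
  rw [Matrix.vecMulVec_mulVec, star_trivial, linSq_dotProduct_veronese, op_smul_eq_smul,
    dotProduct_smul, smul_eq_mul, dotProduct_comm u, sq]

end Coefficients

section Cones

variable {ι κ : Type*} [Fintype ι] [Fintype κ]

lemma sqCone_subset_posCone : sqCone ι κ ⊆ posCone ι κ := by
  rintro _ ⟨a, ha, rfl⟩ x y
  rw [restrictTensor_dotProduct_biveronese]
  exact ha _

lemma biTrace_nonneg {b : Sym2 ι × Sym2 κ → ℝ} (hb : b ∈ posCone ι κ) : 0 ≤ biTrace ι κ b := by
  classical
  simp only [biTrace_apply, ← dotProduct_biveronese_single]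
  exact Finset.sum_nonneg fun i _ => Finset.sum_nonneg fun k _ => hb _ _

lemma convex_posCone : Convex ℝ (posCone ι κ) := fun b hb b' hb' s t hs ht _ x y => by
  rw [add_dotProduct]
  exact add_nonneg (smul_mem_posCone hs hb x y) (smul_mem_posCone ht hb' x y)

lemma convex_psdCone : Convex ℝ (psdCone ι) := fun _ ha _ ha' _ _ hs ht _ =>
  add_mem_psdCone (smul_mem_psdCone hs ha) (smul_mem_psdCone ht ha')

lemma convex_sqCone : Convex ℝ (sqCone ι κ) := convex_psdCone.linear_image (restrictTensor ι κ)

end Cones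

section Polynomials

open BiformPaper

variable {n m : ℕ}

/-- The monomials of bidegree `(2, 2)`. -/
def polyMon (p : Sym2 (Fin n) × Sym2 (Fin m)) : MvPolynomial (Fin n ⊕ Fin m) ℝ :=
  (p.1.map fun i => X (Sum.inl i)).mul * (p.2.map fun j => X (Sum.inr j)).mul

/-- The polynomial of bidegree `(2, 2)` with given coefficients. -/
def poly (n m : ℕ) :
    (Sym2 (Fin n) × Sym2 (Fin m) → ℝ) →ₗ[ℝ] MvPolynomial (Fin n ⊕ Fin m) ℝ :=
  Fintype.linearCombination ℝ polyMon

/-- The polynomial of bidegree `(1, 1)` with given coefficients. -/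
def polyLin (n m : ℕ) : (Fin n × Fin m → ℝ) →ₗ[ℝ] MvPolynomial (Fin n ⊕ Fin m) ℝ :=
  Fintype.linearCombination ℝ fun p => X (Sum.inl p.1) * X (Sum.inr p.2)

lemma beval_polyMon (p : Sym2 (Fin n) × Sym2 (Fin m)) (x : Fin n → ℝ) (y : Fin m → ℝ) :
    beval (polyMon p) x y = biveronese x y p := by
  obtain ⟨⟨i, j⟩, ⟨k, l⟩⟩ := p
  simp [polyMon, beval, biveronese, Sym2.mul]

lemma beval_poly (b : Sym2 (Fin n) × Sym2 (Fin m) → ℝ) (x : Fin n → ℝ) (y : Fin m → ℝ) :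
    beval (poly n m b) x y = b ⬝ᵥ biveronese x y := by
  simp only [dotProduct, ← beval_polyMon]
  simp [poly, Fintype.linearCombination_apply, beval, smul_eval]

lemma beval_polyLin (w : Fin n × Fin m → ℝ) (x : Fin n → ℝ) (y : Fin m → ℝ) :
    beval (polyLin n m w) x y = w ⬝ᵥ tensor x y := by
  simp [polyLin, Fintype.linearCombination_apply, beval, smul_eval, tensor, dotProduct]

lemma funext_beval {f g : MvPolynomial (Fin n ⊕ Fin m) ℝ}
    (h : ∀ x y, beval f x y = beval g x y) : f = g :=
  MvPolynomial.funext fun z => by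
    simpa only [beval, Sum.elim_comp_inl_inr] using h (z ∘ Sum.inl) (z ∘ Sum.inr)

lemma poly_injective : Function.Injective (poly n m) := fun b b' h =>
  eq_of_dotProduct_biveronese fun x y => by rw [← beval_poly, h, beval_poly]

lemma poly_normSqBiform : poly n m (normSqBiform (Fin n) (Fin m)) = qpoly n m 1 1 :=
  funext_beval fun x y => by
    rw [beval_poly, normSqBiform_dotProduct_biveronese]
    simp [beval, qpoly, dotProduct, sq]

lemma polyMon_mem_biform (p : Sym2 (Fin n) × Sym2 (Fin m)) : polyMon p ∈ Biform n m 2 2 := by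
  have hX (v : Fin n ⊕ Fin m) := isWeightedHomogeneous_X ℝ (bw n m) v
  obtain ⟨⟨i, j⟩, ⟨k, l⟩⟩ := p
  exact ((hX (.inl i)).mul (hX (.inl j))).mul ((hX (.inr k)).mul (hX (.inr l)))

lemma poly_mem_biform (b : Sym2 (Fin n) × Sym2 (Fin m) → ℝ) : poly n m b ∈ Biform n m 2 2 :=
  Submodule.sum_mem (weightedHomogeneousSubmodule ℝ (bw n m) (2, 2))
    fun p _ => Submodule.smul_mem _ _ (polyMon_mem_biform p)

lemma polyLin_mem_biform (w : Fin n × Fin m → ℝ) : polyLin n m w ∈ Biform n m 1 1 :=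
  Submodule.sum_mem (weightedHomogeneousSubmodule ℝ (bw n m) (1, 1))
    fun p _ => Submodule.smul_mem _ _ ((isWeightedHomogeneous_X ℝ (bw n m) (.inl p.1)).mul
      (isWeightedHomogeneous_X ℝ (bw n m) (.inr p.2)))

lemma exists_monomial_eq_of_mem_biform {k₁ k₂ : ℕ} {f : MvPolynomial (Fin n ⊕ Fin m) ℝ}
    (hf : f ∈ Biform n m k₁ k₂) {d : Fin n ⊕ Fin m →₀ ℕ} (hd : d ∈ f.support) :
    ∃ (s : Multiset (Fin n)) (t : Multiset (Fin m)), s.card = k₁ ∧ t.card = k₂ ∧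
      monomial d (1 : ℝ) = (s.map fun i => X (.inl i)).prod * (t.map fun j => X (.inr j)).prod := by
  have hw := hf (mem_support_iff.1 hd)
  rw [Finsupp.weight_apply, Finsupp.sum_fintype _ _ (by simp), Fintype.sum_sum_type] at hw
  simp only [bw, Sum.elim_inl, Sum.elim_inr, Prod.smul_mk, smul_eq_mul, mul_one, mul_zero,
    Prod.ext_iff, Prod.fst_add, Prod.snd_add, Prod.fst_sum, Prod.snd_sum, Finset.sum_const_zero,
    add_zero, zero_add] at hw
  refine ⟨∑ i, d (.inl i) • {i}, ∑ j, d (.inr j) • {j}, by simpa using hw.1,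
    by simpa using hw.2, ?_⟩
  rw [monomial_eq, C_1, one_mul, Finsupp.prod_fintype _ _ (by simp), Fintype.prod_sum_type]
  simp only [← Multiset.coe_mapAddMonoidHom, map_sum, Multiset.prod_sum]
  simp [Multiset.map_nsmul, Multiset.prod_nsmul]

lemma mem_of_mem_biform {k₁ k₂ : ℕ} {V : Submodule ℝ (MvPolynomial (Fin n ⊕ Fin m) ℝ)}
    (hV : ∀ (s : Multiset (Fin n)) (t : Multiset (Fin m)), s.card = k₁ → t.card = k₂ →
      (s.map fun i => X (.inl i)).prod * (t.map fun j => X (.inr j)).prod ∈ V)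
    {f : MvPolynomial (Fin n ⊕ Fin m) ℝ} (hf : f ∈ Biform n m k₁ k₂) : f ∈ V := by
  rw [f.as_sum]
  refine V.sum_mem fun d hd => ?_
  obtain ⟨s, t, hs, ht, h⟩ := exists_monomial_eq_of_mem_biform hf hd
  rw [← mul_one (coeff d f), ← smul_eq_mul, ← smul_monomial, h]
  exact V.smul_mem _ (hV s t hs ht)

lemma biform_two_two_subset_range_poly : Biform n m 2 2 ⊆ Set.range (poly n m) := fun f hf => by
  refine mem_of_mem_biform (V := LinearMap.range (poly n m)) (fun s t hs ht => ?_) hf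
  obtain ⟨i, j, rfl⟩ := Multiset.card_eq_two.1 hs
  obtain ⟨k, l, rfl⟩ := Multiset.card_eq_two.1 ht
  exact ⟨Pi.single (s(i, j), s(k, l)) 1, by
    simp [poly, Fintype.linearCombination_apply_single, polyMon]⟩

lemma biform_one_one_subset_range_polyLin : Biform n m 1 1 ⊆ Set.range (polyLin n m) :=
  fun f hf => by
    refine mem_of_mem_biform (V := LinearMap.range (polyLin n m)) (fun s t hs ht => ?_) hf
    obtain ⟨i, rfl⟩ := Multiset.card_eq_one.1 hs
    obtain ⟨k, rfl⟩ := Multiset.card_eq_one.1 ht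
    exact ⟨Pi.single (i, k) 1, by simp [polyLin, Fintype.linearCombination_apply_single]⟩

lemma poly_mem_posSet {b : Sym2 (Fin n) × Sym2 (Fin m) → ℝ} :
    poly n m b ∈ PosSet n m 1 1 ↔ b ∈ posCone (Fin n) (Fin m) :=
  ⟨fun h x y => beval_poly b x y ▸ h.2 x y,
    fun h => ⟨poly_mem_biform b, fun x y => (beval_poly b x y).symm ▸ h x y⟩⟩

lemma beval_sum_sq {N : ℕ} (w : Fin N → Fin n × Fin m → ℝ) (x : Fin n → ℝ) (y : Fin m → ℝ) :
    beval (∑ i, polyLin n m (w i) ^ 2) x y =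
      (∑ i, linSq (w i)) ⬝ᵥ veronese (tensor x y) := by
  simp only [sum_dotProduct, linSq_dotProduct_veronese, ← beval_polyLin]
  simp [beval]

lemma poly_mem_sqSet {b : Sym2 (Fin n) × Sym2 (Fin m) → ℝ} :
    poly n m b ∈ SqSet n m 1 1 ↔ b ∈ sqCone (Fin n) (Fin m) := by
  constructor
  · rintro ⟨N, g, hg, h⟩
    choose w hw using fun i => biform_one_one_subset_range_polyLin (hg i)
    obtain rfl : (fun i => polyLin n m (w i)) = g := funext hw
    refine ⟨∑ i, linSq (w i), fun u => ?_, eq_of_dotProduct_biveronese fun x y => ?_⟩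
    · rw [sum_dotProduct]
      exact Finset.sum_nonneg fun i _ => linSq_mem_psdCone (w i) u
    · rw [restrictTensor_dotProduct_biveronese, ← beval_poly, h, beval_sum_sq]
  · rintro ⟨a, ha, rfl⟩
    obtain ⟨N, w, rfl⟩ := exists_eq_sum_linSq ha
    refine ⟨N, fun i => polyLin n m (w i), fun i => polyLin_mem_biform _,
      funext_beval fun x y => ?_⟩
    rw [beval_poly, restrictTensor_dotProduct_biveronese, beval_sum_sq]

end Polynomials

section Sphere

open BiformPaper

variable {n m : ℕ} {σ : Measure (Fin n → ℝ)}

lemma ae_mem_unitSphere (hσ : IsSphereMeasure n σ) : ∀ᵐ x ∂σ, x ∈ unitSphere n :=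
  hσ.onSphere

lemma integral_comp_mulVec (hσ : IsSphereMeasure n σ) {Q : Matrix (Fin n) (Fin n) ℝ}
    (hQ : Q * Q.transpose = 1) {f : (Fin n → ℝ) → ℝ} (hf : Continuous f) :
    ∫ x, f (Q.mulVec x) ∂σ = ∫ x, f x ∂σ := by
  conv_rhs => rw [← hσ.invariant Q hQ]
  rw [integral_map (by fun_prop) hf.aestronglyMeasurable]

lemma abs_le_one_of_mem_unitSphere {x : Fin n → ℝ} (hx : x ∈ unitSphere n) (i : Fin n) :
    |x i| ≤ 1 := by
  rw [← sq_le_one_iff_abs_le_one]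
  exact (Finset.single_le_sum (f := fun i => x i ^ 2) (fun i _ => sq_nonneg _)
    (Finset.mem_univ i)).trans_eq hx

lemma integrable_veronese (hσ : IsSphereMeasure n σ) (p : Sym2 (Fin n)) :
    Integrable (fun x => veronese x p) σ := by
  have := hσ.prob
  refine .of_bound ((continuous_apply p).comp continuous_veronese).aestronglyMeasurable 1 ?_
  filter_upwards [ae_mem_unitSphere hσ] with x hx
  induction p with
  | _ i j =>
    rw [veronese_mk, Real.norm_eq_abs, abs_mul]
    exact mul_le_one₀ (abs_le_one_of_mem_unitSphere hx i) (abs_nonneg _)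
      (abs_le_one_of_mem_unitSphere hx j)

lemma integral_mul_apply_of_ne (hσ : IsSphereMeasure n σ) {i j : Fin n} (hij : i ≠ j) :
    ∫ x, x i * x j ∂σ = 0 := by
  have hflip : Matrix.diagonal (fun k => if k = i then (-1 : ℝ) else 1) *
      (Matrix.diagonal fun k => if k = i then (-1 : ℝ) else 1).transpose = 1 := by
    rw [Matrix.diagonal_transpose, Matrix.diagonal_mul_diagonal, ← Matrix.diagonal_one]
    exact congrArg _ (funext fun k => by split_ifs <;> norm_num)
  have h := integral_comp_mulVec hσ hflip (f := fun x => x i * x j) (by fun_prop)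
  simp only [Matrix.mulVec_diagonal, if_true, hij.symm, if_false, neg_mul, one_mul,
    integral_neg] at h
  linarith

lemma integral_mul_self_apply (hσ : IsSphereMeasure n σ) (i : Fin n) :
    ∫ x, x i * x i ∂σ = 1 / n := by
  have := hσ.prob
  have hsymm (j : Fin n) : ∫ x, x j * x j ∂σ = ∫ x, x i * x i ∂σ := by
    have hswap : (Equiv.swap i j).permMatrix ℝ * ((Equiv.swap i j).permMatrix ℝ).transpose = 1 := by
      rw [Matrix.transpose_permMatrix, ← Matrix.permMatrix_mul]
      simp
    simpa [Matrix.permMatrix_mulVec] using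
      integral_comp_mulVec hσ hswap (f := fun x => x i * x i) (by fun_prop)
  have hsum : ∑ j, ∫ x, x j * x j ∂σ = 1 := by
    have hint (j : Fin n) : Integrable (fun x => x j * x j) σ := integrable_veronese hσ s(j, j)
    have hae : (fun x => ∑ j, x j * x j) =ᵐ[σ] fun _ => 1 := by
      filter_upwards [ae_mem_unitSphere hσ] with x hx
      simpa [unitSphere, sq] using hx
    rw [← integral_finsetSum _ fun j _ => hint j, integral_congr_ae hae]
    simp
  have hn : (n : ℝ) ≠ 0 := Nat.cast_ne_zero.2 i.pos.ne'
  rw [Finset.sum_congr rfl fun j _ => hsymm j, Finset.sum_const, Finset.card_univ,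
    Fintype.card_fin, nsmul_eq_mul] at hsum
  rw [eq_div_iff hn, mul_comm, hsum]

lemma integral_veronese (hσ : IsSphereMeasure n σ) (p : Sym2 (Fin n)) :
    ∫ x, veronese x p ∂σ = (1 / n) * ∑ i, veronese (Pi.single i 1) p := by
  simp only [veronese_single]
  induction p with
  | _ i j =>
    rcases eq_or_ne i j with rfl | hij
    · simp only [veronese_mk, integral_mul_self_apply hσ]
      simp [Pi.single_apply]
    · simp only [veronese_mk, integral_mul_apply_of_ne hσ hij]
      simp [Pi.single_apply, hij.symm]

/-- The sphere has the same second moments as the uniform distribution on the standard basis. -/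
lemma integral_dotProduct_veronese (hσ : IsSphereMeasure n σ) (a : Sym2 (Fin n) → ℝ) :
    ∫ x, a ⬝ᵥ veronese x ∂σ = quadTrace (Fin n) a / n := by
  calc ∫ x, a ⬝ᵥ veronese x ∂σ
      = ∑ p, a p * ∫ x, veronese x p ∂σ := by
        simp only [dotProduct]
        rw [integral_finsetSum _ fun p _ => (integrable_veronese hσ p).const_mul _]
        simp only [integral_const_mul]
    _ = (∑ i, a ⬝ᵥ veronese (Pi.single i 1)) / n := by
        simp only [integral_veronese hσ, dotProduct]
        rw [Finset.sum_comm, Finset.sum_div]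
        exact Finset.sum_congr rfl fun p _ => by rw [← Finset.mul_sum]; ring
    _ = quadTrace (Fin n) a / n := by
        simp only [dotProduct_veronese_single, quadTrace_apply]

lemma bavg_poly {τ : Measure (Fin m → ℝ)} (hσ : IsSphereMeasure n σ) (hτ : IsSphereMeasure m τ)
    (b : Sym2 (Fin n) × Sym2 (Fin m) → ℝ) :
    bavg σ τ (poly n m b) = biTrace (Fin n) (Fin m) b / (n * m) := by
  have htrace (x : Fin n → ℝ) : quadTrace (Fin m) (slice (Function.curry b) x) =
      (fun p => quadTrace (Fin m) (Function.curry b p)) ⬝ᵥ veronese x := by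
    simp [slice, dotProduct, mul_comm]
  calc bavg σ τ (poly n m b)
      = ∫ x, ∫ y, slice (Function.curry b) x ⬝ᵥ veronese y ∂τ ∂σ := by
        simp only [bavg, beval_poly, slice_dotProduct_veronese, Function.uncurry_curry]
    _ = quadTrace (Fin n) (fun p => quadTrace (Fin m) (Function.curry b p)) / n / m := by
        simp only [integral_dotProduct_veronese hτ, htrace, integral_div,
          integral_dotProduct_veronese hσ]
    _ = biTrace (Fin n) (Fin m) b / (n * m) := by
        rw [div_div, biTrace_apply]
        simp only [quadTrace_apply, Function.curry_apply]

end Sphere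

section Transfer

open BiformPaper

variable {n m D : ℕ} {σ : Measure (Fin n → ℝ)} {τ : Measure (Fin m → ℝ)}

lemma card_sym2_fin_prod (n m : ℕ) : Fintype.card (Sym2 (Fin n) × Sym2 (Fin m)) =
    (n + 1).choose 2 * (m + 1).choose 2 := by
  rw [Fintype.card_prod, Sym2.card, Sym2.card, Fintype.card_fin, Fintype.card_fin]

lemma exists_poly_comp_eq {ψ : (Fin D → ℝ) →ₗ[ℝ] MvPolynomial (Fin n ⊕ Fin m) ℝ}
    (hψ : ∀ a, ψ a ∈ Biform n m 2 2) : ∃ χ, poly n m ∘ₗ χ = ψ :=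
  ⟨(LinearEquiv.ofInjective (poly n m) poly_injective).symm.toLinearMap ∘ₗ
      ψ.codRestrict (LinearMap.range (poly n m)) fun a => biform_two_two_subset_range_poly (hψ a),
    LinearMap.ext fun _ => LinearEquiv.ofInjective_symm_apply (poly n m) (h := poly_injective) _⟩

lemma biTrace_eq_zero_of_poly_mem_mSet (hσ : IsSphereMeasure n σ) (hτ : IsSphereMeasure m τ)
    (hn : 0 < n) (hm : 0 < m) {b : Sym2 (Fin n) × Sym2 (Fin m) → ℝ}
    (hb : poly n m b ∈ MSet n m 1 1 σ τ) : biTrace (Fin n) (Fin m) b = 0 := by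
  have havg := hb.2
  rw [bavg_poly hσ hτ, div_eq_zero_iff] at havg
  exact havg.resolve_right (by positivity)

lemma volume_div_volume_eq (hn : 0 < n) (hm : 0 < m)
    (hD : (n + 1).choose 2 * (m + 1).choose 2 = D + 1)
    (hσ : IsSphereMeasure n σ) (hτ : IsSphereMeasure m τ)
    {ψ : (Fin D → ℝ) →ₗ[ℝ] MvPolynomial (Fin n ⊕ Fin m) ℝ} (hinj : Function.Injective ψ)
    (hmem : ∀ a, ψ a ∈ MSet n m 1 1 σ τ) :
    volume (ψ ⁻¹' tilde n m 1 1 σ τ (SqSet n m 1 1)) /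
      volume (ψ ⁻¹' tilde n m 1 1 σ τ (PosSet n m 1 1)) =
    expIntegral (sqCone (Fin n) (Fin m)) (biTrace (Fin n) (Fin m)) /
      expIntegral (posCone (Fin n) (Fin m)) (biTrace (Fin n) (Fin m)) := by
  obtain ⟨χ, rfl⟩ := exists_poly_comp_eq fun a => (hmem a).1
  have htr (a : Fin D → ℝ) : biTrace (Fin n) (Fin m) (χ a) = 0 :=
    biTrace_eq_zero_of_poly_mem_mSet hσ hτ hn hm (hmem a)
  have hq : 0 < biTrace (Fin n) (Fin m) (normSqBiform (Fin n) (Fin m)) := by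
    rw [biTrace_normSqBiform, Fintype.card_prod, Fintype.card_fin, Fintype.card_fin]
    positivity
  have hrank : Module.finrank ℝ (Sym2 (Fin n) × Sym2 (Fin m) → ℝ) =
      Module.finrank ℝ (Fin D → ℝ) + 1 := by
    rw [Module.finrank_fintype_fun_eq_card, Module.finrank_fin_fun, card_sym2_fin_prod, hD]
  obtain ⟨γ, hγ0, hγ, H⟩ :=
    exists_expIntegral_eq_mul_volume hrank hq (.of_comp (f := poly n m) hinj) htr
  rw [H _ convex_posCone (fun t ht b hb => smul_mem_posCone ht.le hb) fun b hb => biTrace_nonneg hb,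
    H _ convex_sqCone (fun t ht b hb => smul_mem_sqCone ht.le hb)
      fun b hb => biTrace_nonneg (sqCone_subset_posCone hb), ENNReal.mul_div_mul_left _ _ hγ0 hγ]
  have hpre {K : Set (MvPolynomial (Fin n ⊕ Fin m) ℝ)} {C : Set (Sym2 (Fin n) × Sym2 (Fin m) → ℝ)}
      (hK : ∀ {b}, poly n m b ∈ K ↔ b ∈ C) : (poly n m ∘ₗ χ) ⁻¹' tilde n m 1 1 σ τ K =
        {a | χ a + normSqBiform (Fin n) (Fin m) ∈ C} := by
    ext a
    have hadd : (poly n m ∘ₗ χ) a + qpoly n m 1 1 =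
        poly n m (χ a + normSqBiform (Fin n) (Fin m)) := by
      rw [map_add, poly_normSqBiform, LinearMap.comp_apply]
    simp only [tilde, Set.mem_preimage, Set.mem_ofPred_eq, hmem, true_and, hadd, hK]
  rw [hpre poly_mem_sqSet, hpre poly_mem_posSet]

end Transfer

section Numerics

lemma le_sqrt_pi : 1.77 ≤ √Real.pi :=
  Real.le_sqrt_of_sq_le <| (by norm_num : (1.77 : ℝ) ^ 2 ≤ 3.14).trans Real.pi_gt_d2.le

lemma sqrt_pi_le : √Real.pi ≤ 1.8 :=
  Real.sqrt_le_iff.2 ⟨by norm_num, Real.pi_lt_d2.le.trans (by norm_num)⟩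

lemma psdRate_eq (N : ℝ) : psdRate N = 2 * √Real.pi * √N * Real.exp (-1 / 2) := by
  have h : 4 * Real.pi * N / Real.exp 1 = (2 * Real.exp (-1 / 2)) ^ 2 * (Real.pi * N) := by
    rw [mul_pow, ← Real.exp_nat_mul, show ((2 : ℕ) : ℝ) * (-1 / 2) = -1 by norm_num, Real.exp_neg]
    ring
  rw [psdRate, h, Real.sqrt_mul (sq_nonneg _), Real.sqrt_sq (by positivity),
    Real.sqrt_mul Real.pi_pos.le]
  ring

lemma psdRate_le (N : ℝ) : psdRate N ≤ 2.2 * √N := by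
  have h : 4 * Real.pi / Real.exp 1 ≤ 2.2 ^ 2 := by
    rw [div_le_iff₀ (Real.exp_pos 1)]
    have hpi := Real.pi_lt_d2
    have he := Real.exp_one_gt_d9
    norm_num at hpi he ⊢
    linarith
  rw [psdRate, mul_div_right_comm, Real.sqrt_mul (by positivity)]
  gcongr
  exact Real.sqrt_le_iff.2 ⟨by norm_num, h⟩

lemma le_mul_sqrt_pi_div {N d p k : ℝ} (hp : 0 ≤ p) (hd : d / N = p / 4) :
    0.04 * p / √k ≤ d / (Real.exp 1 * N) * √(Real.pi / (16 * k)) := by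
  have hconst : 0.64 ≤ Real.exp (-1) * √Real.pi :=
    calc (0.64 : ℝ) ≤ 0.367 * 1.77 := by norm_num
      _ ≤ _ := mul_le_mul (by linarith [Real.exp_neg_one_gt_d9]) le_sqrt_pi (by norm_num)
        (Real.exp_pos _).le
  have hsqrt : √(Real.pi / (16 * k)) = √Real.pi / (4 * √k) := by
    rw [Real.sqrt_div Real.pi_pos.le, Real.sqrt_mul (by norm_num),
      show (16 : ℝ) = 4 ^ 2 by norm_num, Real.sqrt_sq (by norm_num)]
  calc 0.04 * p / √k = 0.64 * (p / 16 / √k) := by ring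
    _ ≤ Real.exp (-1) * √Real.pi * (p / 16 / √k) := by gcongr
    _ = d / N * Real.exp (-1) * √(Real.pi / (16 * k)) := by rw [hd, hsqrt]; ring
    _ = d / (Real.exp 1 * N) * √(Real.pi / (16 * k)) := by rw [Real.exp_neg]; field_simp

lemma le_quarter_mul_sqrt_pi_div {N : ℕ} (hN : 9 ≤ N) :
    0.074 * √(N : ℝ) ≤ N / 4 * √(Real.pi / (16 * (N + 1 : ℕ) * 2)) := by
  have hN' : (9 : ℝ) ≤ N := by exact_mod_cast hN
  have hsq : √(N : ℝ) ^ 2 = N := Real.sq_sqrt (by linarith)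
  have h : 0.296 / √(N : ℝ) ≤ √(Real.pi / (16 * (N + 1 : ℕ) * 2)) := by
    refine Real.le_sqrt_of_sq_le ?_
    rw [div_pow, hsq, div_le_div_iff₀ (by positivity) (by positivity)]
    push_cast
    nlinarith [Real.pi_gt_d2]
  have hs : √(N : ℝ) ≠ 0 := (Real.sqrt_pos.2 (by linarith)).ne'
  calc 0.074 * √(N : ℝ) = √(N : ℝ) ^ 2 / 4 * (0.296 / √(N : ℝ)) := by field_simp; norm_num
    _ ≤ _ := by rw [hsq]; gcongr

lemma two_pow_mul_psdRate_pow_le_mul_exp {N : ℕ} (hN : 9 ≤ N) :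
    2 ^ N * psdRate N ^ N.choose 2 ≤
      (3.6 * √N) ^ (N.choose 2 + N) * Real.exp (-((N : ℝ) / 4 * N)) := by
  have hs3 : 3 ≤ √(N : ℝ) := Real.le_sqrt_of_sq_le (by norm_num; exact_mod_cast hN)
  have hexp : Real.exp (-1 / 2) ^ N.choose 2 ≤ Real.exp 1 ^ N * Real.exp (-((N : ℝ) / 4 * N)) := by
    rw [← Real.exp_nat_mul, ← Real.exp_nat_mul, ← Real.exp_add, Nat.cast_choose_two]
    exact Real.exp_le_exp.2 (by nlinarith)
  have he : 2 * Real.exp 1 ≤ 3.6 * √N := by linarith [Real.exp_one_lt_d9]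
  have hpi : 2 * √Real.pi ≤ 3.6 := by linarith [sqrt_pi_le]
  calc 2 ^ N * psdRate N ^ N.choose 2
      = 2 ^ N * (2 * √Real.pi * √N) ^ N.choose 2 * Real.exp (-1 / 2) ^ N.choose 2 := by
        rw [psdRate_eq, mul_pow]; ring
    _ ≤ 2 ^ N * (3.6 * √N) ^ N.choose 2 *
          (Real.exp 1 ^ N * Real.exp (-((N : ℝ) / 4 * N))) := by gcongr
    _ = (2 * Real.exp 1) ^ N * (3.6 * √N) ^ N.choose 2 * Real.exp (-((N : ℝ) / 4 * N)) := by
        rw [mul_pow]; ring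
    _ ≤ (3.6 * √N) ^ N * (3.6 * √N) ^ N.choose 2 * Real.exp (-((N : ℝ) / 4 * N)) := by gcongr
    _ = _ := by rw [← pow_add, add_comm N]

lemma two_pow_mul_psdRate_pow_le {N d k : ℕ} (hN : 9 ≤ N) (hdk : N.choose 2 + N = d + k)
    (hkd : k ≤ d) :
    2 ^ N * psdRate N ^ N.choose 2 ≤ 2 * (176 * √N) ^ d * (Real.exp (-((N : ℝ) / 4 * N)) *
      (((N : ℝ) / 4) ^ k * (1 / 2 * √(Real.pi / (16 * (N + 1 : ℕ) * 2)) ^ k))) := by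
  set s := √(N : ℝ)
  set δ := Real.exp (-((N : ℝ) / 4 * N))
  calc 2 ^ N * psdRate N ^ N.choose 2 ≤ (3.6 * s) ^ d * (3.6 * s) ^ k * δ := by
        rw [← pow_add, ← hdk]
        exact two_pow_mul_psdRate_pow_le_mul_exp hN
    _ ≤ (3.6 * s) ^ d * (48.7 * (0.074 * s)) ^ k * δ := by
        gcongr _ * ?_ ^ k * _
        linarith [Real.sqrt_nonneg (N : ℝ)]
    _ ≤ (3.6 * s) ^ d * (48.7 ^ d * (0.074 * s) ^ k) * δ := by
        rw [mul_pow 48.7]; gcongr; norm_num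
    _ = (3.6 * 48.7 * s) ^ d * (δ * (0.074 * s) ^ k) := by simp only [mul_pow]; ring
    _ ≤ (176 * s) ^ d * (δ * (N / 4 * √(Real.pi / (16 * (N + 1 : ℕ) * 2))) ^ k) := by
        have hquarter := le_quarter_mul_sqrt_pi_div hN
        gcongr
        norm_num
    _ = _ := by rw [mul_pow ((N : ℝ) / 4)]; ring

end Numerics

section Bounds

variable {n m d : ℕ}

lemma four_mul_choose_mul_choose (hd : (n + 1).choose 2 * (m + 1).choose 2 = d) :
    4 * (d : ℝ) = n * m * ((n + 1) * (m + 1)) := by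
  rw [← hd]
  push_cast [Nat.cast_choose_two]
  ring

lemma choose_mul_choose_div (hn : 0 < n) (hm : 0 < m)
    (hd : (n + 1).choose 2 * (m + 1).choose 2 = d) :
    (d : ℝ) / (n * m : ℕ) = (n + 1) * (m + 1) / 4 := by
  push_cast
  rw [div_eq_div_iff (by positivity) (by norm_num)]
  linarith [four_mul_choose_mul_choose hd]

lemma pos_of_choose_mul_choose_eq (hn : 0 < n) (hm : 0 < m)
    (hd : (n + 1).choose 2 * (m + 1).choose 2 = d) : 0 < d :=
  hd ▸ Nat.mul_pos (Nat.choose_pos (by lia)) (Nat.choose_pos (by lia))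

lemma pow_le_expIntegral_posCone (hn : 2 ≤ n) (hm : 2 ≤ m)
    (hd : (n + 1).choose 2 * (m + 1).choose 2 = d) :
    ENNReal.ofReal (1 / 4 * (0.04 * (((n : ℝ) + 1) * (m + 1)) / √(n + m)) ^ d) ≤
      expIntegral (posCone (Fin n) (Fin m)) (biTrace (Fin n) (Fin m)) := by
  refine (ENNReal.ofReal_le_ofReal ?_).trans (le_expIntegral_posCone (N := n * m) (d := d)
    (k := n + m) (by simp) (by positivity) ((card_sym2_fin_prod n m).trans hd)
    (pos_of_choose_mul_choose_eq (by lia) (by lia) hd) (by simp) (by lia))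
  rw [Nat.cast_add n m]
  gcongr
  exact le_mul_sqrt_pi_div (by positivity) (choose_mul_choose_div (by lia) (by lia) hd)

lemma pow_le_expIntegral_sqCone (hn : 2 ≤ n) (hm : 2 ≤ m)
    (hd : (n + 1).choose 2 * (m + 1).choose 2 = d) :
    ENNReal.ofReal (1 / 4 * (0.04 * (√n * √m)) ^ d) ≤
      expIntegral (sqCone (Fin n) (Fin m)) (biTrace (Fin n) (Fin m)) := by
  refine (ENNReal.ofReal_le_ofReal ?_).trans (le_expIntegral_sqCone (N := n * m) (d := d)
    (by simp) (by nlinarith) ((card_sym2_fin_prod n m).trans hd)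
    (pos_of_choose_mul_choose_eq (by lia) (by lia) hd))
  have hsqrt : √(n : ℝ) * √m * √(n * m + 1 : ℕ) ≤ (n + 1) * (m + 1) := by
    rw [← Real.sqrt_mul (by positivity), ← Real.sqrt_mul (by positivity)]
    refine Real.sqrt_le_iff.2 ⟨by positivity, ?_⟩
    push_cast
    nlinarith [show (0 : ℝ) ≤ n * m by positivity, (n.cast_nonneg : (0 : ℝ) ≤ n),
      (m.cast_nonneg : (0 : ℝ) ≤ m)]
  have hbase : 0.04 * (√(n : ℝ) * √m) ≤
      d / (Real.exp 1 * (n * m : ℕ)) * √(Real.pi / (16 * (n * m + 1 : ℕ))) :=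
    calc 0.04 * (√(n : ℝ) * √m) ≤ 0.04 * ((n + 1) * (m + 1)) / √(n * m + 1 : ℕ) := by
          rw [le_div_iff₀ (by positivity), mul_assoc]
          gcongr
      _ ≤ _ := le_mul_sqrt_pi_div (by positivity) (choose_mul_choose_div (by lia) (by lia) hd)
  gcongr

lemma mul_pow_mul_psdRate_pow_le (hm : 3 ≤ m) (hd : (n + 1).choose 2 * (m + 1).choose 2 = d) :
    ((4 : ℝ) * n) ^ d * (2 ^ m * psdRate m ^ m.choose 2) ^ (n + 1).choose 2 ≤
      (13.2 * (n * √m)) ^ d := by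
  set s := (n + 1).choose 2
  have hpascal : (m + 1).choose 2 = m + m.choose 2 := by
    rw [Nat.choose_succ_succ, Nat.choose_one_right]
  have hms : 2 * (m * s) ≤ d := by
    have hm2 : m ≤ m.choose 2 := by
      rw [Nat.choose_two_right, Nat.le_div_iff_mul_le two_pos]
      exact Nat.mul_le_mul_left m (by lia)
    rw [← hd, hpascal]
    nlinarith
  have hcs : m.choose 2 * s ≤ d := by
    rw [← hd, hpascal]
    nlinarith
  have hsqrt : 1 ≤ √(m : ℝ) := Real.one_le_sqrt.2 (by exact_mod_cast (by lia : 1 ≤ m))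
  have hrate := psdRate_nonneg (m : ℝ)
  calc ((4 : ℝ) * n) ^ d * (2 ^ m * psdRate m ^ m.choose 2) ^ s
      = (4 * n) ^ d * (2 ^ (m * s) * psdRate m ^ (m.choose 2 * s)) := by
        rw [mul_pow (2 ^ m), pow_mul, pow_mul]
    _ ≤ (4 * n) ^ d * ((1.5 ^ 2) ^ (m * s) * (2.2 * √m) ^ (m.choose 2 * s)) := by
        gcongr
        · norm_num
        · exact psdRate_le _
    _ ≤ (4 * n) ^ d * (1.5 ^ d * (2.2 * √m) ^ d) := by
        rw [← pow_mul]
        gcongr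
        · norm_num
        · linarith
    _ = _ := by simp only [← mul_pow]; ring_nf

lemma expIntegral_posCone_le_pow (hn : 0 < n) (hm : 3 ≤ m)
    (hd : (n + 1).choose 2 * (m + 1).choose 2 = d) :
    expIntegral (posCone (Fin n) (Fin m)) (biTrace (Fin n) (Fin m)) ≤
      ENNReal.ofReal ((13.2 * (n * √m)) ^ d) := by
  have hpsd : expIntegral (psdCone (Fin m)) (quadTrace (Fin m)) ≤
      ENNReal.ofReal (2 ^ m * psdRate m ^ m.choose 2) := by
    simpa using expIntegral_psdCone_le (α := Fin m) (N := m) (by positivity) (by simp)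
  have hrate := psdRate_nonneg (m : ℝ)
  calc expIntegral (posCone (Fin n) (Fin m)) (biTrace (Fin n) (Fin m))
      ≤ ENNReal.ofReal ((4 * n) ^ d) *
          expIntegral (psdCone (Fin m)) (quadTrace (Fin m)) ^ (n + 1).choose 2 := by
        have h := expIntegral_posCone_le (ι := Fin n) (κ := Fin m) (by simpa using hn)
        rwa [card_sym2_fin_prod, hd, Sym2.card, Fintype.card_fin] at h
    _ ≤ ENNReal.ofReal ((4 * n) ^ d) *
          ENNReal.ofReal (2 ^ m * psdRate m ^ m.choose 2) ^ (n + 1).choose 2 := by gcongr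
    _ = ENNReal.ofReal ((4 * n) ^ d * (2 ^ m * psdRate m ^ m.choose 2) ^ (n + 1).choose 2) := by
        rw [ENNReal.ofReal_mul (p := (4 * (n : ℝ)) ^ d) (by positivity),
          ← ENNReal.ofReal_pow (by positivity)]
    _ ≤ _ := ENNReal.ofReal_le_ofReal (mul_pow_mul_psdRate_pow_le hm hd)

lemma choose_two_add_eq_add_card_rest (hd : (n + 1).choose 2 * (m + 1).choose 2 = d) :
    (n * m).choose 2 + n * m = d + Fintype.card (Rest (Fin n) (Fin m)) := by
  have h := Fintype.card_congr (pairSplit (ι := Fin n) (κ := Fin m))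
  rw [Fintype.card_sum, card_sym2_fin_prod, hd, Sym2.card, Fintype.card_prod, Fintype.card_fin,
    Fintype.card_fin, Nat.choose_succ_succ, Nat.choose_one_right, add_comm (n * m)] at h
  exact h.symm

lemma card_rest_le (hd : (n + 1).choose 2 * (m + 1).choose 2 = d) :
    Fintype.card (Rest (Fin n) (Fin m)) ≤ d := by
  have hsum := choose_two_add_eq_add_card_rest hd
  have hfour := four_mul_choose_mul_choose hd
  rify [Nat.cast_choose_two] at hsum ⊢
  nlinarith [show (0 : ℝ) ≤ n * m * (n + m) by positivity]

lemma expIntegral_sqCone_le_pow (hn : 3 ≤ n) (hm : 3 ≤ m)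
    (hd : (n + 1).choose 2 * (m + 1).choose 2 = d) :
    expIntegral (sqCone (Fin n) (Fin m)) (biTrace (Fin n) (Fin m)) ≤
      ENNReal.ofReal (2 * (176 * (√n * √m)) ^ d) := by
  have hN : 9 ≤ n * m := Nat.mul_le_mul hn hm
  have hsq := expIntegral_sqCone_mul_le (ι := Fin n) (κ := Fin m) (N := n * m) (by simp) (by lia)
    rfl (t := (n * m : ℕ) / 4) (by positivity)
  have hpsd := expIntegral_psdCone_le (α := Fin n × Fin m) (N := (n * m : ℕ)) (by positivity)
    (by simp)
  rw [Fintype.card_prod, Fintype.card_fin, Fintype.card_fin] at hpsd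
  have h := (hsq.trans hpsd).trans <| ENNReal.ofReal_le_ofReal <|
    two_pow_mul_psdRate_pow_le hN (choose_two_add_eq_add_card_rest hd) (card_rest_le hd)
  rw [ENNReal.ofReal_mul (p := 2 * _ ^ d) (by positivity)] at h
  rw [← Real.sqrt_mul (Nat.cast_nonneg n), ← Nat.cast_mul]
  exact (ENNReal.mul_le_mul_iff_left (ENNReal.ofReal_pos.2 (by positivity)).ne'
    ENNReal.ofReal_ne_top).1 h

end Bounds

section Ratio

open BiformPaper

variable {n m D : ℕ}

lemma pow_mul_pow_succ_lt {u v : ℝ} (hu : 0 < u) (hv : 0 < v) (hun : u ≤ n) (hD : n + 3 ≤ D) :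
    (0.000105 / u) ^ D * (13.2 * (u ^ 2 * v)) ^ (D + 1) < 1 / 4 * (0.04 * (u * v)) ^ (D + 1) := by
  have h28 : 2000 * u ≤ 28 ^ D :=
    calc 2000 * u ≤ 28 ^ 3 * 28 ^ n := by
          have hpow : (n : ℝ) ≤ 28 ^ n := by exact_mod_cast (Nat.lt_pow_self (by norm_num)).le
          nlinarith
      _ = (28 : ℝ) ^ (n + 3) := by ring
      _ ≤ 28 ^ D := pow_le_pow_right₀ (by norm_num) hD
  calc (0.000105 / u) ^ D * (13.2 * (u ^ 2 * v)) ^ (D + 1)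
      = (0.000105 / u * (13.2 * (u ^ 2 * v))) ^ D * (13.2 * (u ^ 2 * v)) := by
        rw [pow_succ, ← mul_assoc, ← mul_pow]
    _ = (0.001386 * (u * v)) ^ D * (13.2 * u * (u * v)) := by
        congr 1
        · congr 1
          field_simp
          norm_num
        · ring
    _ < (0.001386 * (u * v)) ^ D * (20 * u * (u * v)) := by gcongr; norm_num
    _ = 0.01 * (2000 * u * (0.001386 * (u * v)) ^ D) * (u * v) := by ring
    _ ≤ 0.01 * (28 ^ D * (0.001386 * (u * v)) ^ D) * (u * v) := by gcongr
    _ = 0.01 * (28 * 0.001386 * (u * v)) ^ D * (u * v) := by rw [mul_assoc 28, mul_pow 28]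
    _ ≤ 0.01 * (0.04 * (u * v)) ^ D * (u * v) := by gcongr; norm_num
    _ = _ := by rw [pow_succ]; ring

lemma add_three_le_of_choose_mul_choose_eq (hn : 3 ≤ n) (hm : 3 ≤ m)
    (hD : (n + 1).choose 2 * (m + 1).choose 2 = D + 1) : n + 3 ≤ D := by
  have hm6 : 6 ≤ (m + 1).choose 2 := Nat.choose_le_choose 2 (by lia : 4 ≤ m + 1)
  have hn2 : (n + 1).choose 2 = n + n.choose 2 := by
    rw [Nat.choose_succ_succ, Nat.choose_one_right]
  nlinarith

lemma lt_div_of_le_of_le (hn : 3 ≤ n) (hm : 3 ≤ m)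
    (hD : (n + 1).choose 2 * (m + 1).choose 2 = D + 1) {V W : ℝ≥0∞} (hV : V ≠ 0)
    (hW : ENNReal.ofReal (1 / 4 * (0.04 * (√n * √m)) ^ (D + 1)) ≤ W)
    (hVle : V ≤ ENNReal.ofReal ((13.2 * (n * √m)) ^ (D + 1))) :
    ENNReal.ofReal (0.000105 / √n) ^ D < W / V := by
  have hn0 : (3 : ℝ) ≤ n := by exact_mod_cast hn
  have hm0 : (3 : ℝ) ≤ m := by exact_mod_cast hm
  have hu : 0 < √(n : ℝ) := Real.sqrt_pos.2 (by linarith)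
  have hv : 0 < √(m : ℝ) := Real.sqrt_pos.2 (by linarith)
  rw [ENNReal.lt_div_iff_mul_lt (.inl hV) (.inl (hVle.trans_lt ENNReal.ofReal_lt_top).ne)]
  refine lt_of_lt_of_le ?_ hW
  calc ENNReal.ofReal (0.000105 / √n) ^ D * V
      ≤ ENNReal.ofReal (0.000105 / √n) ^ D * ENNReal.ofReal ((13.2 * (n * √m)) ^ (D + 1)) := by
        gcongr
    _ = ENNReal.ofReal ((0.000105 / √n) ^ D * (13.2 * (√n ^ 2 * √m)) ^ (D + 1)) := by
        rw [← ENNReal.ofReal_pow (by positivity), ← ENNReal.ofReal_mul (by positivity),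
          Real.sq_sqrt (by linarith)]
    _ < _ := (ENNReal.ofReal_lt_ofReal_iff (by positivity)).2 <|
        pow_mul_pow_succ_lt hu hv (Real.sqrt_le_iff.2 ⟨by linarith, by nlinarith⟩)
          (add_three_le_of_choose_mul_choose_eq hn hm hD)

lemma expIntegral_posCone_ne_zero (hn : 2 ≤ n) (hm : 2 ≤ m) :
    expIntegral (posCone (Fin n) (Fin m)) (biTrace (Fin n) (Fin m)) ≠ 0 := by
  refine ((ENNReal.ofReal_pos.2 ?_).trans_le (pow_le_expIntegral_posCone hn hm rfl)).ne'
  have : 0 < (n : ℝ) + m := by positivity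
  positivity

lemma lt_expIntegral_sqCone_div_expIntegral_posCone (hn : 3 ≤ n) (hm : 3 ≤ m)
    (hD : (n + 1).choose 2 * (m + 1).choose 2 = D + 1) :
    ENNReal.ofReal (0.000105 / √(min n m : ℕ)) ^ D <
      expIntegral (sqCone (Fin n) (Fin m)) (biTrace (Fin n) (Fin m)) /
        expIntegral (posCone (Fin n) (Fin m)) (biTrace (Fin n) (Fin m)) := by
  have hW := pow_le_expIntegral_sqCone (by lia) (by lia) hD
  rcases le_total n m with h | h
  · rw [min_eq_left h]
    exact lt_div_of_le_of_le hn hm hD (expIntegral_posCone_ne_zero (by lia) (by lia)) hW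
      (expIntegral_posCone_le_pow (by lia) hm hD)
  · rw [min_eq_right h, expIntegral_posCone_comm]
    rw [mul_comm] at hD
    rw [mul_comm (√_)] at hW
    exact lt_div_of_le_of_le hm hn hD (expIntegral_posCone_ne_zero (by lia) (by lia)) hW
      (expIntegral_posCone_le_pow (by lia) hn hD)

lemma mul_sqrt_mul_sqrt_le_of_le {a b : ℝ} (ha : 0 < a) (hab : a ≤ b) :
    176 * (√a * √b) ≤ 7000 / √(a + 1) * (0.04 * ((a + 1) * (b + 1)) / √(a + b)) := by
  have hb := ha.trans_le hab
  have h : √a * √b * √(a + 1) * √(a + b) ≤ 1.5 * ((a + 1) * (b + 1)) := by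
    rw [← Real.sqrt_mul (by positivity), ← Real.sqrt_mul (by positivity),
      ← Real.sqrt_mul (by positivity)]
    refine Real.sqrt_le_iff.2 ⟨by positivity, ?_⟩
    calc a * b * (a + 1) * (a + b) ≤ (a + 1) * (b + 1) * (a + 1) * (2 * (b + 1)) := by
          gcongr <;> linarith
      _ = 2 * ((a + 1) * (b + 1)) ^ 2 := by ring
      _ ≤ _ := by rw [mul_pow 1.5]; gcongr; norm_num
  have h0 : 0 < (a + 1) * (b + 1) := by positivity
  rw [div_mul_div_comm, le_div_iff₀ (by positivity)]
  linarith

lemma mul_sqrt_mul_sqrt_le {a b : ℝ} (ha : 0 < a) (hb : 0 < b) :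
    176 * (√a * √b) ≤ 7000 / √(min a b + 1) * (0.04 * ((a + 1) * (b + 1)) / √(a + b)) := by
  rcases le_total a b with h | h
  · rw [min_eq_left h]
    exact mul_sqrt_mul_sqrt_le_of_le ha h
  · rw [min_eq_right h, mul_comm (√a), mul_comm (a + 1), add_comm a b]
    exact mul_sqrt_mul_sqrt_le_of_le hb h

lemma two_mul_pow_succ_lt {w B : ℝ} (hw : 1 ≤ w) (hB : 0 < B) (hD : 16 ≤ D) :
    2 * (7000 / w * B) ^ (D + 1) < (14000 / w) ^ D * (1 / 4 * B ^ (D + 1)) :=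
  calc 2 * (7000 / w * B) ^ (D + 1) = (7000 / w) ^ D * B ^ (D + 1) * (14000 / w) := by
        rw [mul_pow, pow_succ (7000 / w)]; ring
    _ ≤ (7000 / w) ^ D * B ^ (D + 1) * 14000 := by
        gcongr
        exact div_le_self (by norm_num) hw
    _ < (7000 / w) ^ D * B ^ (D + 1) * (1 / 4 * 2 ^ D) := by
        gcongr
        calc (14000 : ℝ) < 1 / 4 * 2 ^ 16 := by norm_num
          _ ≤ _ := by gcongr; norm_num
    _ = (7000 / w * 2) ^ D * (1 / 4 * B ^ (D + 1)) := by rw [mul_pow]; ring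
    _ = _ := by rw [div_mul_eq_mul_div]; norm_num

lemma sixteen_le_of_choose_mul_choose_eq (hn : 3 ≤ n) (hm : 3 ≤ m)
    (hD : (n + 1).choose 2 * (m + 1).choose 2 = D + 1) : 16 ≤ D := by
  have hsix {k : ℕ} (hk : 3 ≤ k) : 6 ≤ (k + 1).choose 2 :=
    Nat.choose_le_choose 2 (by lia : 4 ≤ k + 1)
  have h36 := Nat.mul_le_mul (hsix hn) (hsix hm)
  lia

lemma expIntegral_sqCone_div_expIntegral_posCone_lt (hn : 3 ≤ n) (hm : 3 ≤ m)
    (hD : (n + 1).choose 2 * (m + 1).choose 2 = D + 1) :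
    expIntegral (sqCone (Fin n) (Fin m)) (biTrace (Fin n) (Fin m)) /
        expIntegral (posCone (Fin n) (Fin m)) (biTrace (Fin n) (Fin m)) <
      ENNReal.ofReal (14000 / √((min n m : ℕ) + 1)) ^ D := by
  have hn0 : (0 : ℝ) < n := by positivity
  have hm0 : (0 : ℝ) < m := by positivity
  set w := √((min n m : ℕ) + 1)
  have hw : 1 ≤ w := Real.one_le_sqrt.2 (by simp)
  set B := 0.04 * (((n : ℝ) + 1) * (m + 1)) / √(n + m)
  have hB : 0 < B := by positivity
  have hbase : 176 * (√n * √m) ≤ 7000 / w * B := by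
    simpa only [w, Nat.cast_min] using mul_sqrt_mul_sqrt_le hn0 hm0
  have htop := ((expIntegral_posCone_le_pow (by lia) hm hD).trans_lt ENNReal.ofReal_lt_top).ne
  refine (ENNReal.div_lt_iff (.inl (expIntegral_posCone_ne_zero (by lia) (by lia)))
    (.inl htop)).2 ?_
  calc expIntegral (sqCone (Fin n) (Fin m)) (biTrace (Fin n) (Fin m))
      ≤ ENNReal.ofReal (2 * (176 * (√n * √m)) ^ (D + 1)) := expIntegral_sqCone_le_pow hn hm hD
    _ ≤ ENNReal.ofReal (2 * (7000 / w * B) ^ (D + 1)) := by gcongr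
    _ < ENNReal.ofReal ((14000 / w) ^ D * (1 / 4 * B ^ (D + 1))) :=
        (ENNReal.ofReal_lt_ofReal_iff (by positivity)).2
          (two_mul_pow_succ_lt hw hB (sixteen_le_of_choose_mul_choose_eq hn hm hD))
    _ = ENNReal.ofReal (14000 / w) ^ D * ENNReal.ofReal (1 / 4 * B ^ (D + 1)) := by
        rw [ENNReal.ofReal_mul (by positivity), ENNReal.ofReal_pow (by positivity)]
    _ ≤ _ := by gcongr; exact pow_le_expIntegral_posCone (by lia) (by lia) hD

lemma volume_ratio_bounds (hn : 3 ≤ n) (hm : 3 ≤ m)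
    (hD : D = (n + 1).choose 2 * (m + 1).choose 2 - 1)
    {σ : Measure (Fin n → ℝ)} {τ : Measure (Fin m → ℝ)}
    (hσ : IsSphereMeasure n σ) (hτ : IsSphereMeasure m τ)
    {ψ : (Fin D → ℝ) →ₗ[ℝ] MvPolynomial (Fin n ⊕ Fin m) ℝ} (hinj : Function.Injective ψ)
    (hmem : ∀ a, ψ a ∈ MSet n m 1 1 σ τ) :
    ENNReal.ofReal (0.000105 / √(min n m : ℕ)) <
        (volume (ψ ⁻¹' tilde n m 1 1 σ τ (SqSet n m 1 1)) /
          volume (ψ ⁻¹' tilde n m 1 1 σ τ (PosSet n m 1 1))) ^ ((1 : ℝ) / D) ∧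
      (volume (ψ ⁻¹' tilde n m 1 1 σ τ (SqSet n m 1 1)) /
          volume (ψ ⁻¹' tilde n m 1 1 σ τ (PosSet n m 1 1))) ^ ((1 : ℝ) / D) <
        ENNReal.ofReal (14000 / √((min n m : ℕ) + 1)) := by
  have hD1 : (n + 1).choose 2 * (m + 1).choose 2 = D + 1 := by
    have := pos_of_choose_mul_choose_eq (n := n) (m := m) (by lia) (by lia) rfl
    lia
  have hD0 : (0 : ℝ) < D := by
    have := sixteen_le_of_choose_mul_choose_eq hn hm hD1
    positivity
  rw [volume_div_volume_eq (by lia) (by lia) hD1 hσ hτ hinj hmem, one_div,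
    ENNReal.lt_rpow_inv_iff hD0, ENNReal.rpow_inv_lt_iff hD0, ENNReal.rpow_natCast,
    ENNReal.rpow_natCast]
  exact ⟨lt_expIntegral_sqCone_div_expIntegral_posCone hn hm hD1,
    expIntegral_sqCone_div_expIntegral_posCone_lt hn hm hD1⟩

lemma lower_constant_div_le {s : ℝ} (hs : 0 ≤ s) :
    3 * √3 / (2 ^ 10 * 7 ^ 2 * s) ≤ 0.000105 / s := by
  have hsqrt : √3 ≤ 1.7321 := Real.sqrt_le_iff.2 ⟨by norm_num, by norm_num⟩
  rw [← div_div]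
  gcongr
  rw [div_le_iff₀ (by norm_num)]
  linarith

lemma le_upper_constant_div {s : ℝ} (hs : 0 ≤ s) :
    14000 / s ≤ 2 ^ 12 * 5 ^ 2 * 6 ^ ((1 : ℝ) / 2) * 10 ^ ((2 : ℝ) / 9) / (3 ^ 3 * s) := by
  have h6 : (2.4 : ℝ) ≤ 6 ^ ((1 : ℝ) / 2) := by
    rw [← Real.sqrt_eq_rpow]
    exact Real.le_sqrt_of_sq_le (by norm_num)
  have h10 : (1.6 : ℝ) ≤ 10 ^ ((2 : ℝ) / 9) := by
    rw [show (2 : ℝ) / 9 = 2 * 9⁻¹ by norm_num, Real.rpow_mul (by norm_num),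
      Real.le_rpow_inv_iff_of_pos (by norm_num) (by positivity) (by norm_num)]
    norm_num
  rw [← div_div]
  gcongr
  rw [le_div_iff₀ (by norm_num)]
  calc (14000 : ℝ) * 3 ^ 3 ≤ 2 ^ 12 * 5 ^ 2 * 2.4 * 1.6 := by norm_num
    _ ≤ _ := by gcongr

end Ratio

end BiformVolume

open BiformPaper in
/-- **Theorem (ratio of volumes for biquadratic biforms).** For integers `n, m ≥ 3`:
`3√3/(2^{10}·7²·√(min(n,m))) < (Vol S̃q / Vol P̃os)^{1/D_𝓜}
  < 2^{12}·5²·6^{1/2}·10^{2/9}/(3³·√(min(n,m)+1))`,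
where `D_𝓜 = C(n+1,2)·C(m+1,2) − 1`.  In particular
`(Vol S̃q / Vol P̃os)^{1/D_𝓜} = Θ(min(n,m)^{-1/2})`. -/
theorem statement4 :
    (∀ n m : ℕ, 3 ≤ n → 3 ≤ m → ∀ D : ℕ,
      D = Nat.choose (n + 1) 2 * Nat.choose (m + 1) 2 - 1 →
      ∀ (σ₁ : Measure (Fin n → ℝ)) (σ₂ : Measure (Fin m → ℝ)),
        IsSphereMeasure n σ₁ → IsSphereMeasure m σ₂ →
      ∀ ψ : (Fin D → ℝ) →ₗ[ℝ] MvPolynomial (Fin n ⊕ Fin m) ℝ,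
        IsUnitaryParam n m D σ₁ σ₂ (MSet n m 1 1 σ₁ σ₂) ψ →
      ENNReal.ofReal (3 * Real.sqrt 3 /
          ((2 : ℝ) ^ (10 : ℕ) * (7 : ℝ) ^ 2 * Real.sqrt ((min n m : ℕ) : ℝ))) <
        (volume (⇑ψ ⁻¹' tilde n m 1 1 σ₁ σ₂ (SqSet n m 1 1)) /
            volume (⇑ψ ⁻¹' tilde n m 1 1 σ₁ σ₂ (PosSet n m 1 1))) ^ ((1 : ℝ) / (D : ℝ)) ∧
      (volume (⇑ψ ⁻¹' tilde n m 1 1 σ₁ σ₂ (SqSet n m 1 1)) /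
          volume (⇑ψ ⁻¹' tilde n m 1 1 σ₁ σ₂ (PosSet n m 1 1))) ^ ((1 : ℝ) / (D : ℝ)) <
        ENNReal.ofReal ((2 : ℝ) ^ (12 : ℕ) * (5 : ℝ) ^ 2 * (6 : ℝ) ^ ((1 : ℝ) / 2) *
          (10 : ℝ) ^ ((2 : ℝ) / 9) / ((3 : ℝ) ^ 3 * Real.sqrt (((min n m : ℕ) : ℝ) + 1)))) ∧
    -- the `Θ(min(n,m)^{-1/2})` asymptotics:
    (∃ c₁ c₂ : ℝ, 0 < c₁ ∧ 0 < c₂ ∧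
      ∀ n m : ℕ, 3 ≤ n → 3 ≤ m → ∀ D : ℕ,
        D = Nat.choose (n + 1) 2 * Nat.choose (m + 1) 2 - 1 →
        ∀ (σ₁ : Measure (Fin n → ℝ)) (σ₂ : Measure (Fin m → ℝ)),
          IsSphereMeasure n σ₁ → IsSphereMeasure m σ₂ →
        ∀ ψ : (Fin D → ℝ) →ₗ[ℝ] MvPolynomial (Fin n ⊕ Fin m) ℝ,
          IsUnitaryParam n m D σ₁ σ₂ (MSet n m 1 1 σ₁ σ₂) ψ →
        ENNReal.ofReal (c₁ * ((min n m : ℕ) : ℝ) ^ (-(1 : ℝ) / 2)) ≤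
          (volume (⇑ψ ⁻¹' tilde n m 1 1 σ₁ σ₂ (SqSet n m 1 1)) /
              volume (⇑ψ ⁻¹' tilde n m 1 1 σ₁ σ₂ (PosSet n m 1 1))) ^ ((1 : ℝ) / (D : ℝ)) ∧
        (volume (⇑ψ ⁻¹' tilde n m 1 1 σ₁ σ₂ (SqSet n m 1 1)) /
            volume (⇑ψ ⁻¹' tilde n m 1 1 σ₁ σ₂ (PosSet n m 1 1))) ^ ((1 : ℝ) / (D : ℝ)) ≤
          ENNReal.ofReal (c₂ * ((min n m : ℕ) : ℝ) ^ (-(1 : ℝ) / 2))) := by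
  refine ⟨fun n m hn hm D hD σ₁ σ₂ h₁ h₂ ψ hψ => ?_,
    0.000105, 14000, by norm_num, by norm_num, fun n m hn hm D hD σ₁ σ₂ h₁ h₂ ψ hψ => ?_⟩ <;>
  obtain ⟨hlower, hupper⟩ := BiformVolume.volume_ratio_bounds hn hm hD h₁ h₂ hψ.inj
    fun a => hψ.range ▸ Set.mem_range_self a
  · exact
      ⟨(ENNReal.ofReal_le_ofReal (BiformVolume.lower_constant_div_le (Real.sqrt_nonneg _))).trans_lt
        hlower, hupper.trans_le
        (ENNReal.ofReal_le_ofReal (BiformVolume.le_upper_constant_div (Real.sqrt_nonneg _)))⟩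
  · have hmin : (0 : ℝ) < (min n m : ℕ) := by exact_mod_cast (by lia : 0 < min n m)
    rw [neg_div, Real.rpow_neg hmin.le, ← Real.sqrt_eq_rpow, ← div_eq_mul_inv, ← div_eq_mul_inv]
    refine ⟨hlower.le, hupper.le.trans (ENNReal.ofReal_le_ofReal ?_)⟩
    gcongr
    linarith
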